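/- Let w = x^{a_1}y^{b_1}···x^{a_r}y^{b_r} be a reduced word of complexity r, with r a prime number, and let p be a prime. If the family of word maps P_{w,q}: SL(2,q) × SL(2,q) → SL(2,q), q = p^n, is not p-equidistributed, then r ≠ p and at least one of A, B is nonzero. -/

import Mathlib

open Matrix Polynomial

abbrev SL2 (K : Type) [CommRing K] : Type := Matrix.SpecialLinearGroup (Fin 2) K

abbrev PSL2 (K : Type) [CommRing K] : Type := SL2 K ⧸ Subgroup.center (SL2 K)

/-- Evaluation of a word `w ∈ F₂` at a pair of group elements. -/
def wordEval {G : Type*} [Group G] (w : FreeGroup (Fin 2)) (g₁ g₂ : G) : G :=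
  (FreeGroup.lift ![g₁, g₂]) w

/-- The word map `P_{w,G} : G × G → G` for `G = SL(2,K)`. -/
def wordMap (w : FreeGroup (Fin 2)) (K : Type) [CommRing K] :
    SL2 K × SL2 K → SL2 K := fun g => wordEval w g.1 g.2

/-- The point `(tr x, tr xy, tr y)`. -/
def trPoint {K : Type} [CommRing K] (x y : SL2 K) : Fin 3 → K :=
  ![Matrix.trace (x : Matrix (Fin 2) (Fin 2) K),
    Matrix.trace ((x * y : SL2 K) : Matrix (Fin 2) (Fin 2) K),
    Matrix.trace (y : Matrix (Fin 2) (Fin 2) K)]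

/-- `f ∈ ℤ[s,u,t]` is the trace polynomial of the word `w`. -/
def IsTracePolynomial (w : FreeGroup (Fin 2)) (f : MvPolynomial (Fin 3) ℤ) : Prop :=
  ∀ (K : Type) [CommRing K], ∀ x y : SL2 K,
    Matrix.trace ((wordEval w x y : SL2 K) : Matrix (Fin 2) (Fin 2) K) =
      MvPolynomial.eval (trPoint x y) (MvPolynomial.map (Int.castRingHom K) f)

/-- `f : X → Y` is `ε`-equidistributed. -/
def IsEquidistributed {X Y : Type*} (f : X → Y) (ε : ℝ) : Prop :=
  ∃ Y' : Set Y,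
    (1 - ε) * (Nat.card Y) < (Nat.card Y' : ℝ) ∧
    ∀ y ∈ Y',
      |(Nat.card {x : X // f x = y} : ℝ) - (Nat.card X : ℝ) / (Nat.card Y)| <
        ε * (Nat.card X) / (Nat.card Y)

/-- The family of word maps on `SL(2,p^n)` is `p`-equidistributed. -/
def IsPEquidistributed (w : FreeGroup (Fin 2)) (p : ℕ) (hp : p.Prime) : Prop :=
  letI : Fact p.Prime := ⟨hp⟩
  ∃ ε : ℕ → ℝ,
    Filter.Tendsto (fun n : ℕ => ε (p ^ n)) Filter.atTop (nhds 0) ∧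
    ∀ᶠ n : ℕ in Filter.atTop,
      IsEquidistributed (wordMap w (GaloisField p n)) (ε (p ^ n))

/-- The family of word maps on `SL(2,q)`, `q` ranging over all prime powers,
is equidistributed. -/
def IsEquidistributedFamily (w : FreeGroup (Fin 2)) : Prop :=
  ∃ ε : ℕ → ℝ,
    Filter.Tendsto ε Filter.atTop (nhds 0) ∧
    ∀ (p : ℕ) (hp : p.Prime),
      letI : Fact p.Prime := ⟨hp⟩
      ∀ᶠ n : ℕ in Filter.atTop,
        IsEquidistributed (wordMap w (GaloisField p n)) (ε (p ^ n))

/-- Reduction of an integral polynomial mod `p`. -/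
noncomputable def reduceMod (p : ℕ) (P : MvPolynomial (Fin 3) ℤ) : MvPolynomial (Fin 3) (ZMod p) :=
  MvPolynomial.map (Int.castRingHom (ZMod p)) P

/-- `P = h ∘ Q` with `deg Q ≥ 1`, `deg h ≥ 2`. -/
def IsCompositePoly (F : Type) [CommRing F] (P : MvPolynomial (Fin 3) F) : Prop :=
  ∃ (Q : MvPolynomial (Fin 3) F) (h : Polynomial F),
    1 ≤ Q.totalDegree ∧ 2 ≤ h.natDegree ∧ P = Polynomial.aeval Q h

def IsPComposite (p : ℕ) (P : MvPolynomial (Fin 3) ℤ) : Prop :=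
  IsCompositePoly (ZMod p) (reduceMod p P)

/-- `h` is a permutation polynomial of every finite extension of `F_p`. -/
def IsPermAllExt (p : ℕ) (h : Polynomial (ZMod p)) : Prop :=
  ∀ (K : Type) [Field K] [Algebra (ZMod p) K] [Finite K],
    Function.Bijective fun z : K => Polynomial.aeval z h

def IsPSpecial (p : ℕ) (P : MvPolynomial (Fin 3) ℤ) : Prop :=
  IsPComposite p P ∧
    ∃ (Q : MvPolynomial (Fin 3) (ZMod p)) (h : Polynomial (ZMod p)),
      1 ≤ Q.totalDegree ∧ 2 ≤ h.natDegree ∧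
      reduceMod p P = Polynomial.aeval Q h ∧ IsPermAllExt p h

def AlmostNoncomposite (P : MvPolynomial (Fin 3) ℤ) : Prop :=
  ∀ p : ℕ, p.Prime → ¬ IsPComposite p P ∨ IsPSpecial p P

/-- The reduced word `x^{a₁}y^{b₁} ⋯ x^{a_r}y^{b_r}`. -/
def wordOf {r : ℕ} (a b : Fin r → ℤ) : FreeGroup (Fin 2) :=
  (List.ofFn fun i : Fin r =>
    FreeGroup.of (0 : Fin 2) ^ a i * FreeGroup.of (1 : Fin 2) ^ b i).prod

set_option maxSynthPendingDepth 8

universe u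

/-!
By Fricke, `tr w(x, y) = f(s, t, u)` with `s = tr x`, `t = tr y`, `u = tr xy`, where `f` has degree
`r` in `u`. Inverting `w` and exchanging `x` and `y` exchanges `A` and `B` up to sign, so one may
assume that `B = 0` or `r = p` and has to prove equidistribution.

Consider the plane curve `f(s, t, u) = c` in `(t, u)`, for generic `s` and `c`, over an algebraic
closure of `𝔽_p(s, c)`. Let `L` be the leading coefficient of `f` in `u`. The irreducible factors of
the equation, made monic in `z = L u`, are permuted transitively by Galois automorphisms, and its
degree `r` is prime. Hence it is irreducible or has a root `z = ρ(t)`. In the second case, shifting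
`c` yields infinitely many such roots and forces `f = h ∘ G` with `h` of degree `r`. On commuting
diagonal pairs this contradicts
`f(α + α⁻¹, μ + μ⁻¹, αμ + α⁻¹μ⁻¹) = α ^ A * μ ^ B + α ^ (-A) * μ ^ (-B)`: the right hand side is
constant in `μ` if `B = 0`, and if `r = p` one takes `p`-th roots until `p` does not divide `B`.

Irreducibility specializes to all `(s, c)` outside the zeros of some `D ≠ 0`, where Stepanov's
method bounds the number of points of the curve over `𝔽_q` by `q + o(q)`. No lower bound is needed:
the fibres of the word map over noncentral elements of equal trace are in bijection, so the points
of the curve control their sizes from above, and upper bounds of the right order for almost all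
fibres of a map force almost all of them to have about the average size.
-/

section WeightFiltration

variable {R : Type*} [CommRing R]

/-- The bivariate polynomials `B(T, Z) ∈ R[T][Z]` of weighted degree at most `n`, where the inner
variable `T` has weight `1` and the outer variable `Z` has weight `e`. -/
def weightLE (R : Type*) [CommRing R] (e n : ℕ) : Submodule R R[X][X] where
  carrier := {B | ∀ i j, (B.coeff j).coeff i ≠ 0 → i + e * j ≤ n}
  zero_mem' i j h := absurd (by simp) h
  add_mem' {A B} hA hB i j h := by
    by_cases hAij : (A.coeff j).coeff i = 0
    · exact hB i j fun hBij => h (by rw [coeff_add, coeff_add, hAij, hBij, add_zero])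
    · exact hA i j hAij
  smul_mem' a B hB i j h := hB i j fun hBij => h (by rw [coeff_smul, coeff_smul, hBij, smul_zero])

lemma mem_weightLE {e n : ℕ} {B : R[X][X]} :
    B ∈ weightLE R e n ↔ ∀ i j, (B.coeff j).coeff i ≠ 0 → i + e * j ≤ n := Iff.rfl

lemma weightLE_mono (e : ℕ) {n m : ℕ} (hnm : n ≤ m) : weightLE R e n ≤ weightLE R e m :=
  fun _ hB i j hij => (hB i j hij).trans hnm

lemma mul_mem_weightLE {e n m : ℕ} {A B : R[X][X]} (hA : A ∈ weightLE R e n)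
    (hB : B ∈ weightLE R e m) : A * B ∈ weightLE R e (n + m) := by
  intro i j h
  rw [coeff_mul, finsetSum_coeff] at h
  obtain ⟨⟨j₁, j₂⟩, hj, h⟩ := Finset.exists_ne_zero_of_sum_ne_zero h
  rw [coeff_mul] at h
  obtain ⟨⟨i₁, i₂⟩, hi, h⟩ := Finset.exists_ne_zero_of_sum_ne_zero h
  rw [Finset.HasAntidiagonal.mem_antidiagonal] at hi hj
  dsimp only at hi hj h
  have hAw := hA i₁ j₁ (left_ne_zero_of_mul h)
  have hBw := hB i₂ j₂ (right_ne_zero_of_mul h)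
  subst hi hj
  linarith

lemma C_mem_weightLE {e n : ℕ} {N : R[X]} (hN : N.natDegree ≤ n) : C N ∈ weightLE R e n := by
  intro i j h
  rw [coeff_C] at h
  split_ifs at h with hj
  · subst hj
    simpa using (le_natDegree_of_ne_zero h).trans hN
  · simp at h

lemma X_pow_mem_weightLE {e n j : ℕ} (h : e * j ≤ n) : (X ^ j : R[X][X]) ∈ weightLE R e n := by
  intro i' j' hc
  rw [coeff_X_pow] at hc
  split_ifs at hc with hj
  · rw [coeff_one] at hc
    split_ifs at hc with hi
    · subst hj hi
      simpa using h
    · simp at hc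
  · simp at hc

lemma C_mul_X_pow_mem_weightLE {e n j : ℕ} {N : R[X]} (h : N.natDegree + e * j ≤ n) :
    (C N * X ^ j : R[X][X]) ∈ weightLE R e n :=
  weightLE_mono e h (mul_mem_weightLE (C_mem_weightLE le_rfl) (X_pow_mem_weightLE le_rfl))

lemma pow_mem_weightLE {e n : ℕ} {A : R[X][X]} (hA : A ∈ weightLE R e n) (m : ℕ) :
    A ^ m ∈ weightLE R e (m * n) := by
  induction m with
  | zero => simpa using C_mem_weightLE (e := e) (n := 0) (natDegree_one (R := R)).le
  | succ m ih =>
    rw [pow_succ, Nat.succ_mul]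
    exact mul_mem_weightLE ih hA

lemma exists_mem_weightLE (e : ℕ) (B : R[X][X]) : ∃ n, B ∈ weightLE R e n := by
  refine ⟨B.support.sup fun j => (B.coeff j).natDegree + e * j, fun i j h => ?_⟩
  have hj : j ∈ B.support := mem_support_iff.2 fun h0 => h (by rw [h0, coeff_zero])
  exact (Nat.add_le_add_right (le_natDegree_of_ne_zero h) _).trans
    (Finset.le_sup (f := fun j => (B.coeff j).natDegree + e * j) hj)

lemma mul_natDegree_le_of_mem_weightLE {e n : ℕ} {B : R[X][X]} (hB : B ∈ weightLE R e n)
    (hB0 : B ≠ 0) : B.leadingCoeff.natDegree + e * B.natDegree ≤ n := by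
  refine hB _ _ ?_
  rw [coeff_natDegree, coeff_natDegree]
  exact leadingCoeff_ne_zero.2 (leadingCoeff_ne_zero.2 hB0)

lemma modByMonic_mem_weightLE {e : ℕ} {g : R[X][X]} (hg : g.Monic)
    (hgw : g ∈ weightLE R e (e * g.natDegree)) {n : ℕ} {B : R[X][X]} (hB : B ∈ weightLE R e n) :
    B %ₘ g ∈ weightLE R e n := by
  nontriviality R
  induction hd : B.natDegree using Nat.strong_induction_on generalizing B with
  | _ d ih =>
  by_cases hB0 : B = 0
  · rwa [hB0, zero_modByMonic, ← hB0]
  by_cases hlt : B.degree < g.degree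
  · rwa [(modByMonic_eq_self_iff hg).2 hlt]
  have hle : g.degree ≤ B.degree := not_lt.1 hlt
  have hnat : e * g.natDegree ≤ e * B.natDegree :=
    Nat.mul_le_mul_left _ (natDegree_le_natDegree hle)
  have hBn := mul_natDegree_le_of_mem_weightLE hB hB0
  set q := C B.leadingCoeff * X ^ (B.natDegree - g.natDegree)
  have hqw : q ∈ weightLE R e (n - e * g.natDegree) :=
    C_mul_X_pow_mem_weightLE (by rw [Nat.mul_sub]; omega)
  have hw : B - g * q ∈ weightLE R e n :=
    sub_mem hB (weightLE_mono e (by omega) (mul_mem_weightLE hgw hqw))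
  have hmod : B %ₘ g = (B - g * q) %ₘ g := by
    rw [sub_modByMonic, (modByMonic_eq_zero_iff_dvd hg).2 (dvd_mul_right g q), sub_zero]
  rw [hmod]
  by_cases h0 : B - g * q = 0
  · rw [h0, zero_modByMonic]
    exact zero_mem _
  · exact ih _ (hd ▸ natDegree_lt_natDegree h0 (div_wf_lemma ⟨hle, hB0⟩ hg)) hw rfl

end WeightFiltration

section WeightBox

/-- The exponents `(i, j)` of the monomials `T ^ i * Z ^ j` with `j < r` and weighted degree
`i + e * j` at most `n`. -/
def weightBox (e r n : ℕ) : Finset (ℕ × ℕ) :=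
  (Finset.range (n + 1) ×ˢ Finset.range r).filter fun x => x.1 + e * x.2 ≤ n

lemma mem_weightBox {e r n : ℕ} {x : ℕ × ℕ} :
    x ∈ weightBox e r n ↔ x.2 < r ∧ x.1 + e * x.2 ≤ n := by
  simp only [weightBox, Finset.mem_filter, Finset.mem_product, Finset.mem_range]
  exact ⟨fun h => ⟨h.1.2, h.2⟩, fun h => ⟨⟨by omega, h.1⟩, h.2⟩⟩

lemma card_weightBox_le (e r n : ℕ) : (weightBox e r n).card ≤ r * (n + 1) := by
  refine (Finset.card_filter_le _ _).trans ?_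
  rw [Finset.card_product, Finset.card_range, Finset.card_range, mul_comm]

lemma card_weightBox_add_le (e r n h : ℕ) :
    (weightBox e r (n + h)).card ≤ (weightBox e r n).card + r * h := by
  have hcover : weightBox e r (n + h) ⊆ weightBox e r n ∪
      (Finset.range h ×ˢ Finset.range r).image
        fun x : ℕ × ℕ => (n + 1 + x.1 - e * x.2, x.2) := by
    intro x hx
    rw [mem_weightBox] at hx
    rw [Finset.mem_union, mem_weightBox, Finset.mem_image]
    by_cases hn : x.1 + e * x.2 ≤ n
    · exact Or.inl ⟨hx.1, hn⟩
    · refine Or.inr ⟨(x.1 + e * x.2 - (n + 1), x.2), ?_, ?_⟩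
      · simp only [Finset.mem_product, Finset.mem_range]
        exact ⟨by omega, hx.1⟩
      · ext <;> simp only
        omega
  refine (Finset.card_le_card hcover).trans ((Finset.card_union_le _ _).trans ?_)
  gcongr
  refine Finset.card_image_le.trans ?_
  rw [Finset.card_product, Finset.card_range, Finset.card_range, mul_comm]

lemma le_card_weightBox (e r l : ℕ) : r * l ≤ (weightBox e r (l + e * r)).card := by
  have hsub : Finset.range l ×ˢ Finset.range r ⊆ weightBox e r (l + e * r) := by
    rintro ⟨i, j⟩ h
    simp only [Finset.mem_product, Finset.mem_range] at h
    have hj : e * j ≤ e * r := Nat.mul_le_mul_left _ h.2.le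
    exact mem_weightBox.2 ⟨h.2, by simp only; omega⟩
  have hcard := Finset.card_le_card hsub
  rwa [Finset.card_product, Finset.card_range, Finset.card_range, mul_comm] at hcard

end WeightBox

section ReducedPolynomials

variable {R : Type*} [CommRing R]

/-- The basis of `R[T][Z]` over `R` formed by the monomials `T ^ i * Z ^ j`, indexed by `(i, j)`. -/
noncomputable def bivariateMonomials (R : Type*) [CommRing R] : Module.Basis (ℕ × ℕ) R R[X][X] :=
  (basisMonomials R).smulTower (basisMonomials R[X])

lemma bivariateMonomials_apply (x : ℕ × ℕ) :
    bivariateMonomials R x = C X ^ x.1 * X ^ x.2 := by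
  rw [bivariateMonomials, Module.Basis.smulTower_apply, coe_basisMonomials, coe_basisMonomials]
  simp only [monomial_one_right_eq_X_pow, smul_eq_C_mul, C_pow]

lemma bivariateMonomials_repr (B : R[X][X]) (x : ℕ × ℕ) :
    (bivariateMonomials R).repr B x = (B.coeff x.2).coeff x.1 :=
  Module.Basis.smulTower_repr _ _ _ _

lemma bivariateMonomials_mem_weightLE {e n : ℕ} {x : ℕ × ℕ} (hx : x.1 + e * x.2 ≤ n) :
    bivariateMonomials R x ∈ weightLE R e n := by
  rw [bivariateMonomials_apply, ← C_pow]
  exact C_mul_X_pow_mem_weightLE ((Nat.add_le_add_right (natDegree_X_pow_le _) _).trans hx)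

/-- The polynomials in `R[T][Z]` of weighted degree at most `n` and of degree less than `r` in `Z`:
the canonical representatives modulo a polynomial that is monic of degree `r` in `Z`. -/
noncomputable def reducedLE (R : Type*) [CommRing R] (e r n : ℕ) : Submodule R R[X][X] :=
  weightLE R e n ⊓ (degreeLT R[X] r).restrictScalars R

lemma mem_reducedLE {e r n : ℕ} {B : R[X][X]} :
    B ∈ reducedLE R e r n ↔ B ∈ weightLE R e n ∧ B.degree < r := by
  rw [reducedLE, Submodule.mem_inf, Submodule.restrictScalars_mem, mem_degreeLT]

lemma reducedLE_eq_span (e r n : ℕ) : reducedLE R e r n =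
    Submodule.span R (bivariateMonomials R '' (weightBox e r n : Set (ℕ × ℕ))) := by
  ext B
  rw [mem_reducedLE, Module.Basis.mem_span_image, degree_lt_iff_coeff_zero, mem_weightLE]
  constructor
  · intro h x hx
    rw [Finset.mem_coe, Finsupp.mem_support_iff, bivariateMonomials_repr] at hx
    refine mem_weightBox.2 ⟨?_, h.1 _ _ hx⟩
    by_contra hr
    exact hx (by rw [h.2 _ (not_lt.1 hr), coeff_zero])
  · intro h
    have hmem : ∀ i j, (B.coeff j).coeff i ≠ 0 → (i, j) ∈ weightBox e r n := fun i j hij =>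
      h (Finsupp.mem_support_iff.2 (by rwa [bivariateMonomials_repr]))
    refine ⟨fun i j hij => (mem_weightBox.1 (hmem i j hij)).2, fun j hj => ?_⟩
    ext i
    by_contra hij
    exact (mem_weightBox.1 (hmem i j hij)).1.not_ge hj

instance finite_reducedLE (e r n : ℕ) : Module.Finite R (reducedLE R e r n) := by
  rw [reducedLE_eq_span]
  exact Module.Finite.span_of_finite R ((weightBox e r n).finite_toSet.image _)

lemma finrank_reducedLE [Nontrivial R] (e r n : ℕ) :
    Module.finrank R (reducedLE R e r n) = (weightBox e r n).card := by
  rw [reducedLE_eq_span, Set.image_eq_range]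
  have hli : LinearIndependent R fun x : (weightBox e r n : Set (ℕ × ℕ)) =>
      bivariateMonomials R x.1 :=
    (bivariateMonomials R).linearIndependent.comp _ Subtype.val_injective
  rw [finrank_span_eq_card hli]
  exact Fintype.card_coe _

lemma modByMonic_mem_reducedLE [Nontrivial R] {e n : ℕ} {g : R[X][X]} (hg : g.Monic)
    (hgw : g ∈ weightLE R e (e * g.natDegree)) {B : R[X][X]} (hB : B ∈ weightLE R e n) :
    B %ₘ g ∈ reducedLE R e g.natDegree n :=
  mem_reducedLE.2 ⟨modByMonic_mem_weightLE hg hgw hB, by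
    rw [← degree_eq_natDegree hg.ne_zero]
    exact degree_modByMonic_lt B hg⟩

end ReducedPolynomials

section CurveModule

variable {k : Type*} [Field k] {e : ℕ} {g : k[X][X]}

/-- An irreducible plane curve `g(T, Z) = 0` whose equation is monic in `Z` and has weighted degree
equal to that of its leading term, where `T` has weight `1` and `Z` has weight `e`. -/
structure IsWeightedCurve (e : ℕ) (g : k[X][X]) : Prop where
  monic : g.Monic
  mem_weightLE : g ∈ weightLE k e (e * g.natDegree)
  irreducible : Irreducible g

lemma IsWeightedCurve.prime (hg : IsWeightedCurve e g) : Prime g :=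
  UniqueFactorizationMonoid.irreducible_iff_prime.1 hg.irreducible

lemma IsWeightedCurve.natDegree_pos (hg : IsWeightedCurve e g) : 0 < g.natDegree :=
  Nat.pos_of_ne_zero fun h =>
    hg.irreducible.not_isUnit (hg.monic.natDegree_eq_zero.1 h ▸ isUnit_one)

lemma IsWeightedCurve.not_dvd_of_mem_reducedLE (hg : IsWeightedCurve e g) {n : ℕ} {B : k[X][X]}
    (hB : B ∈ reducedLE k e g.natDegree n) (hB0 : B ≠ 0) : ¬ g ∣ B :=
  hg.monic.not_dvd_of_degree_lt hB0 <| by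
    rw [degree_eq_natDegree hg.monic.ne_zero]
    exact (mem_reducedLE.1 hB).2

/-- Multiplication by `G` followed by reduction modulo `g`, as a `k`-linear map. -/
noncomputable def mulMod (g G : k[X][X]) : k[X][X] →ₗ[k] k[X][X] :=
  ((modByMonicHom g).restrictScalars k) ∘ₗ LinearMap.mulLeft k G

lemma mulMod_apply (g G B : k[X][X]) : mulMod g G B = G * B %ₘ g := rfl

lemma IsWeightedCurve.map_mulMod_le (hg : IsWeightedCurve e g) {w : ℕ} {G : k[X][X]}
    (hG : G ∈ weightLE k e w) (n : ℕ) :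
    (reducedLE k e g.natDegree n).map (mulMod g G) ≤ reducedLE k e g.natDegree (n + w) := by
  rintro _ ⟨B, hB, rfl⟩
  rw [mulMod_apply, add_comm]
  exact modByMonic_mem_reducedLE hg.monic hg.mem_weightLE
    (mul_mem_weightLE hG (mem_reducedLE.1 hB).1)

lemma IsWeightedCurve.finrank_map_mulMod (hg : IsWeightedCurve e g) {G : k[X][X]} (hG : ¬ g ∣ G)
    (n : ℕ) : Module.finrank k ((reducedLE k e g.natDegree n).map (mulMod g G)) =
      (weightBox e g.natDegree n).card := by
  have hinj : Function.Injective ((mulMod g G).domRestrict (reducedLE k e g.natDegree n)) := by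
    rw [injective_iff_map_eq_zero]
    rintro ⟨B, hB⟩ hGB
    rw [LinearMap.domRestrict_apply, mulMod_apply, modByMonic_eq_zero_iff_dvd hg.monic] at hGB
    by_contra hB0
    exact hg.not_dvd_of_mem_reducedLE hB (fun h => hB0 (Subtype.ext h))
      ((hg.prime.dvd_or_dvd hGB).resolve_left hG)
  rw [← LinearMap.range_domRestrict, LinearMap.finrank_range_of_inj hinj, finrank_reducedLE]

lemma exists_ne_zero_mem_of_finrank_lt {V : Type*} [AddCommGroup V] [Module k V]
    {U₁ U₂ W : Submodule k V} [FiniteDimensional k W] (h₁ : U₁ ≤ W) (h₂ : U₂ ≤ W)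
    (h : Module.finrank k W < Module.finrank k U₁ + Module.finrank k U₂) :
    ∃ v ∈ U₁, v ∈ U₂ ∧ v ≠ 0 := by
  have := Submodule.finiteDimensional_of_le h₁
  have := Submodule.finiteDimensional_of_le h₂
  have hsup := Submodule.finrank_mono (sup_le h₁ h₂)
  have hinf := Submodule.finrank_sup_add_finrank_inf_eq U₁ U₂
  obtain ⟨v, hv, hv0⟩ := (U₁ ⊓ U₂).ne_bot_iff.1 fun hbot => by
    rw [hbot, finrank_bot] at hinf
    omega
  exact ⟨v, hv.1, hv.2, hv0⟩

/-- The embedding of `k[T]` into `k[T][Z]`, as a `k`-linear map. -/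
noncomputable def constantsLinearMap (k : Type*) [Field k] : k[X] →ₗ[k] k[X][X] :=
  (CAlgHom (R := k[X]) (A := k[X])).toLinearMap.restrictScalars k

lemma finrank_map_constants_degreeLT (n : ℕ) :
    Module.finrank k ((degreeLT k n).map (constantsLinearMap k)) = n := by
  have hinj : Function.Injective ((constantsLinearMap k).domRestrict (degreeLT k n)) :=
    fun _ _ h => Subtype.ext (C_injective h)
  rw [← LinearMap.range_domRestrict, LinearMap.finrank_range_of_inj hinj,
    (degreeLTEquiv k n).finrank_eq, Module.finrank_fin_fun]

lemma IsWeightedCurve.map_constants_degreeLT_le (hg : IsWeightedCurve e g) (n : ℕ) :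
    (degreeLT k (n + 1)).map (constantsLinearMap k) ≤ reducedLE k e g.natDegree n := by
  rintro _ ⟨N, hN, rfl⟩
  refine mem_reducedLE.2 ⟨C_mem_weightLE ?_, degree_C_le.trans_lt ?_⟩
  · exact natDegree_le_iff_degree_le.2 (Order.le_of_lt_succ (by exact_mod_cast mem_degreeLT.1 hN))
  · exact_mod_cast hg.natDegree_pos

/-- A resultant-type bound: `N` plays the role of the norm of `G` down to `k[T]`. -/
lemma IsWeightedCurve.exists_eliminant (hg : IsWeightedCurve e g) {w : ℕ} {G : k[X][X]}
    (hG : G ∈ reducedLE k e g.natDegree w) (hG0 : G ≠ 0) :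
    ∃ N : k[X], N ≠ 0 ∧ N.natDegree ≤ (g.natDegree + 1) * w ∧ ∃ A B, G * A = C N + g * B := by
  set r := g.natDegree with hr
  obtain ⟨_, ⟨A, -, rfl⟩, ⟨N, hN, hAN⟩, hne⟩ := exists_ne_zero_mem_of_finrank_lt
    (hg.map_mulMod_le (mem_reducedLE.1 hG).1 (r * w)) (hg.map_constants_degreeLT_le (r * w + w))
    (by
      rw [finrank_reducedLE, hg.finrank_map_mulMod (hg.not_dvd_of_mem_reducedLE hG hG0),
        finrank_map_constants_degreeLT, ← hr]
      have := card_weightBox_add_le e r (r * w) w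
      omega)
  have hCN : C N = G * A %ₘ g := hAN
  refine ⟨N, ?_, ?_, A, G * A /ₘ g, ?_⟩
  · rintro rfl
    exact hne (by rw [← hAN, map_zero])
  · rw [add_mul, one_mul]
    exact natDegree_le_iff_degree_le.2
      (Order.le_of_lt_succ (by exact_mod_cast mem_degreeLT.1 hN))
  · rw [hCN, modByMonic_add_div]

end CurveModule

section Branches

variable {k : Type*} [Field k] {e : ℕ} {g : k[X][X]}

lemma evalEval_eq_constantCoeff (t : k) (v : PowerSeries k) (G : k[X][X]) :
    evalEval t (PowerSeries.constantCoeff v) G =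
      PowerSeries.constantCoeff (aevalAeval (PowerSeries.X + PowerSeries.C t) v G) := by
  have h : evalEvalRingHom t (PowerSeries.constantCoeff v) = PowerSeries.constantCoeff.comp
      (aevalAeval (PowerSeries.X + PowerSeries.C t) v : k[X][X] →ₐ[k] PowerSeries k).toRingHom := by
    ext <;> simp
  exact RingHom.congr_fun h G

lemma not_X_pow_dvd_aeval {t : k} {N : k[X]} (hN : N ≠ 0) {Q : ℕ} (hQ : N.natDegree < Q) :
    ¬ PowerSeries.X ^ Q ∣ aeval (PowerSeries.X + PowerSeries.C t) N := by
  have htaylor : aeval (PowerSeries.X + PowerSeries.C t) N =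
      ((taylor t N : k[X]) : PowerSeries k) := by
    have h : (aeval (PowerSeries.X + PowerSeries.C t) : k[X] →ₐ[k] PowerSeries k).toRingHom =
        coeToPowerSeries.ringHom.comp (taylorAlgHom t).toRingHom := by
      ext <;> simp
    exact RingHom.congr_fun h N
  intro hdvd
  have hcoeff := PowerSeries.X_pow_dvd_iff.1 hdvd N.natDegree hQ
  rw [htaylor, coeff_coe, coeff_taylor_natDegree, leadingCoeff_eq_zero] at hcoeff
  exact hN hcoeff

/-- Hensel's lemma over `k⟦X⟧`, at a point of the curve where `∂g/∂Z` does not vanish. -/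
lemma IsWeightedCurve.exists_branch [IsAlgClosed k] (hg : IsWeightedCurve e g)
    (hder : derivative g ≠ 0) :
    ∃ (t : k) (v : PowerSeries k), aevalAeval (PowerSeries.X + PowerSeries.C t) v g = 0 := by
  obtain ⟨w, hw⟩ := exists_mem_weightLE e (derivative g)
  have hdeg : (derivative g).degree < g.natDegree := by
    rw [← degree_eq_natDegree hg.monic.ne_zero]
    exact degree_derivative_lt hg.monic.ne_zero
  obtain ⟨N, hN, -, A, B, hAB⟩ := hg.exists_eliminant (mem_reducedLE.2 ⟨hw, hdeg⟩) hder
  obtain ⟨t, ht⟩ : ∃ t, N.eval t ≠ 0 := by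
    by_contra! hN0
    exact hN (Polynomial.funext (by simpa using hN0))
  obtain ⟨z, hz⟩ : ∃ z, evalEval t z g = 0 := by
    have hdeg : (g.map (evalRingHom t)).degree ≠ 0 := by
      rw [hg.monic.degree_map, degree_eq_natDegree hg.monic.ne_zero]
      exact_mod_cast hg.natDegree_pos.ne'
    obtain ⟨z, hz⟩ := IsAlgClosed.exists_root _ hdeg
    exact ⟨z, by rwa [IsRoot, eval_map, eval₂_evalRingHom] at hz⟩
  have hz' : evalEval t z (derivative g) ≠ 0 := by
    intro h
    have hAB' := congrArg (evalEval t z) hAB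
    rw [evalEval_mul, h, evalEval_add, evalEval_mul, hz, evalEval_C] at hAB'
    exact ht (by simpa using hAB'.symm)
  set θ : k[X] →+* PowerSeries k := (aeval (PowerSeries.X + PowerSeries.C t)).toRingHom
  have hθ (v : PowerSeries k) (G : k[X][X]) : (G.map θ).eval v =
      aevalAeval (PowerSeries.X + PowerSeries.C t) v G := by
    have h : (evalRingHom v).comp (mapRingHom θ) = (aevalAeval (PowerSeries.X + PowerSeries.C t) v :
        k[X][X] →ₐ[k] PowerSeries k).toRingHom := by
      ext <;> simp [θ]
    exact RingHom.congr_fun h G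
  have hconst (G : k[X][X]) : PowerSeries.constantCoeff ((G.map θ).eval (PowerSeries.C z)) =
      evalEval t z G := by
    rw [hθ, ← evalEval_eq_constantCoeff, PowerSeries.constantCoeff_C]
  obtain ⟨v, hv, -⟩ := HenselianRing.is_henselian
    (I := Ideal.span {(PowerSeries.X : PowerSeries k)}) (g.map θ) (hg.monic.map θ) (PowerSeries.C z)
    (Ideal.mem_span_singleton.2 (PowerSeries.X_dvd_iff.2 (by rw [hconst, hz])))
    (IsUnit.map _ (PowerSeries.isUnit_iff_constantCoeff.2
      (by rw [derivative_map, hconst]; exact hz'.isUnit)))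
  exact ⟨t, v, (hθ v g).symm.trans hv⟩

lemma IsWeightedCurve.not_X_pow_dvd_branch (hg : IsWeightedCurve e g) {t : k} {v : PowerSeries k}
    (hv : aevalAeval (PowerSeries.X + PowerSeries.C t) v g = 0) {w : ℕ} {G : k[X][X]}
    (hG : G ∈ reducedLE k e g.natDegree w) (hG0 : G ≠ 0) {Q : ℕ} (hQ : (g.natDegree + 1) * w < Q) :
    ¬ PowerSeries.X ^ Q ∣ aevalAeval (PowerSeries.X + PowerSeries.C t) v G := by
  obtain ⟨N, hN0, hNdeg, A, B, hAB⟩ := hg.exists_eliminant hG hG0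
  have hN := congrArg (aevalAeval (PowerSeries.X + PowerSeries.C t) v) hAB
  rw [map_mul, map_add, map_mul, hv, zero_mul, add_zero, aevalAeval_C] at hN
  exact fun hdvd => not_X_pow_dvd_aeval hN0 (hNdeg.trans_lt hQ) (hN ▸ hdvd.mul_right _)

lemma exists_eq_X_pow_mul_of_exists_ne_zero {ι : Type*} {f : ι → PowerSeries k}
    (hf : ∃ x, f x ≠ 0) : ∃ (d : ℕ) (a : ι → PowerSeries k),
      (∀ x, f x = PowerSeries.X ^ d * a x) ∧ ∃ x, PowerSeries.constantCoeff (a x) ≠ 0 := by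
  classical
  have hex : ∃ d x, PowerSeries.coeff d (f x) ≠ 0 := by
    obtain ⟨x, hx⟩ := hf
    obtain ⟨d, hd⟩ := PowerSeries.exists_coeff_ne_zero_iff_ne_zero.2 hx
    exact ⟨d, x, hd⟩
  obtain ⟨x, hx⟩ := Nat.find_spec hex
  have hdvd (y : ι) : PowerSeries.X ^ Nat.find hex ∣ f y :=
    PowerSeries.X_pow_dvd_iff.2 fun m hm => by
      by_contra hne
      exact Nat.find_min hex hm ⟨y, hne⟩
  choose a ha using hdvd
  refine ⟨Nat.find hex, a, ha, x, fun h0 => hx ?_⟩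
  rw [ha x]
  simp [PowerSeries.coeff_X_pow_mul', h0]

lemma X_pow_dvd_pow_sub_C_pow {p : ℕ} [Fact p.Prime] [CharP k p] (a : PowerSeries k) (b : ℕ) :
    PowerSeries.X ^ p ^ b ∣
      a ^ p ^ b - PowerSeries.C (PowerSeries.constantCoeff a) ^ p ^ b := by
  have : CharP (PowerSeries k) p := charP_of_injective_ringHom PowerSeries.C_injective p
  rw [← sub_pow_char_pow]
  exact pow_dvd_pow_of_dvd (PowerSeries.X_dvd_iff.2 (by simp)) _

/-- Along a branch, the `p ^ b`-th powers are constant to high order, so that a vanishing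
combination yields a polynomial of small weight with a zero of high order. -/
lemma IsWeightedCurve.not_dvd_sum_pow_mul [IsAlgClosed k] {p : ℕ} [Fact p.Prime] [CharP k p]
    (hg : IsWeightedCurve e g) (hder : derivative g ≠ 0) {w b : ℕ}
    (hQ : (g.natDegree + 1) * w < p ^ b) {w' : ℕ}
    (n : weightBox e g.natDegree w → k[X][X]) (hn : ∀ x, n x ∈ reducedLE k e g.natDegree w')
    (hn0 : ∃ x, n x ≠ 0) :
    ¬ g ∣ ∑ x, n x ^ p ^ b * bivariateMonomials k x.1 := by
  rintro ⟨B, hB⟩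
  obtain ⟨t, v, hv⟩ := hg.exists_branch hder
  set φ : k[X][X] →ₐ[k] PowerSeries k := aevalAeval (PowerSeries.X + PowerSeries.C t) v
  have hφn : ∃ x, φ (n x) ≠ 0 := hn0.imp fun x hx h =>
    hg.not_X_pow_dvd_branch hv (hn x) hx (Nat.lt_succ_self _) (h ▸ dvd_zero _)
  obtain ⟨d, a, ha, x₀, hx₀⟩ := exists_eq_X_pow_mul_of_exists_ne_zero hφn
  have hsum : ∑ x, a x ^ p ^ b * φ (bivariateMonomials k x.1) = 0 := by
    have hφB := congrArg φ hB
    simp only [map_mul φ g, hv, zero_mul, map_sum, map_mul, map_pow, ha, mul_pow, mul_assoc] at hφB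
    rw [← Finset.mul_sum] at hφB
    exact (mul_eq_zero.1 hφB).resolve_left (pow_ne_zero _ (pow_ne_zero _ PowerSeries.X_ne_zero))
  set c : weightBox e g.natDegree w → k := fun x => PowerSeries.constantCoeff (a x) ^ p ^ b
  have hG : ∑ x, c x • bivariateMonomials k x.1 ∈ reducedLE k e g.natDegree w := by
    rw [reducedLE_eq_span]
    exact Submodule.sum_smul_mem _ _ fun x _ => Submodule.subset_span ⟨x.1, x.2, rfl⟩
  have hG0 : ∑ x, c x • bivariateMonomials k x.1 ≠ 0 := fun h =>
    pow_ne_zero _ hx₀ <| Fintype.linearIndependent_iff.1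
      ((bivariateMonomials k).linearIndependent.comp _ Subtype.val_injective) c h x₀
  refine hg.not_X_pow_dvd_branch hv hG hG0 hQ ?_
  change PowerSeries.X ^ p ^ b ∣ φ _
  rw [map_sum, ← dvd_sub_right (hsum ▸ dvd_zero _), ← Finset.sum_sub_distrib]
  refine Finset.dvd_sum fun x _ => ?_
  rw [map_smul, Algebra.smul_def, ← sub_mul]
  simp only [c, map_pow]
  exact (X_pow_dvd_pow_sub_C_pow _ _).mul_right _

end Branches

section PointCounting

variable {k : Type*} [Field k] {e : ℕ} {g : k[X][X]}

lemma exists_evalEval_eq (S : Finset (k × k)) (y : S → k) :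
    ∃ B : k[X][X], ∀ a : S, evalEval a.1.1 a.1.2 B = y a := by
  classical
  let basis (s : Finset k) (t : k) : k[X] := Lagrange.basis s id t
  have hself {s : Finset k} {t : k} (ht : t ∈ s) : (basis s t).eval t = 1 :=
    Lagrange.eval_basis_self (Set.injOn_id _) ht
  have hne {s : Finset k} {t u : k} (hu : u ∈ s) (h : t ≠ u) : (basis s t).eval u = 0 :=
    Lagrange.eval_basis_of_ne (v := id) h hu
  refine ⟨∑ b : S, C (C (y b)) * (C (basis (S.image Prod.fst) b.1.1) *
    (basis (S.image Prod.snd) b.1.2).map C), fun a => ?_⟩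
  have h₁ : a.1.1 ∈ S.image Prod.fst := Finset.mem_image_of_mem _ a.2
  have h₂ : a.1.2 ∈ S.image Prod.snd := Finset.mem_image_of_mem _ a.2
  rw [evalEval_finsetSum, Finset.sum_eq_single a]
  · simp [evalEval_mul, evalEval_C, evalEval_map_C, hself h₁, hself h₂]
  · intro b _ hba
    by_cases h : b.1.1 = a.1.1
    · have h' : b.1.2 ≠ a.1.2 := fun h' => hba (Subtype.ext (Prod.ext h h'))
      simp [evalEval_mul, evalEval_map_C, hne h₂ h']
    · simp [evalEval_mul, evalEval_C, hne h₁ h]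
  · simp

lemma finrank_add_finrank_le_of_map_eq_top {V V' : Type*} [AddCommGroup V] [Module k V]
    [AddCommGroup V'] [Module k V'] {f : V →ₗ[k] V'} {U W : Submodule k V} [FiniteDimensional k W]
    (hUW : U ≤ W) (hU : U ≤ LinearMap.ker f) (hW : W.map f = ⊤) :
    Module.finrank k V' + Module.finrank k U ≤ Module.finrank k W := by
  rw [← LinearMap.finrank_range_add_finrank_ker (f.domRestrict W), LinearMap.range_domRestrict, hW,
    finrank_top, ← (Submodule.submoduleOfEquivOfLe hUW).finrank_eq]
  gcongr
  exact Submodule.finrank_mono fun x hx => hU hx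

lemma evalEval_modByMonic {t v : k} (h : evalEval t v g = 0) (B : k[X][X]) :
    evalEval t v (B %ₘ g) = evalEval t v B := by
  conv_rhs => rw [← modByMonic_add_div B g]
  rw [evalEval_add, evalEval_mul, h, zero_mul, add_zero]

/-- A weak form of Bézout's theorem. -/
lemma IsWeightedCurve.card_zeros_le (hg : IsWeightedCurve e g) {h : ℕ} {H : k[X][X]}
    (hH : H ∈ weightLE k e h) (hgH : ¬ g ∣ H) {S : Finset (k × k)}
    (hgS : ∀ a ∈ S, evalEval a.1 a.2 g = 0) (hHS : ∀ a ∈ S, evalEval a.1 a.2 H = 0) :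
    S.card ≤ g.natDegree * h := by
  classical
  choose L hL using exists_evalEval_eq S
  let evalS : k[X][X] →ₗ[k] (S → k) :=
    LinearMap.pi fun a => (aevalAeval a.1.1 a.1.2 : k[X][X] →ₐ[k] k).toLinearMap
  have hevalS (B : k[X][X]) (a : S) : evalS B a = evalEval a.1.1 a.1.2 B := by
    rw [← coe_aevalAeval_eq_evalEval]
    rfl
  choose m hm using fun a : S => exists_mem_weightLE e (L (Pi.single a 1))
  set n := Finset.univ.sup m
  have hker : (reducedLE k e g.natDegree n).map (mulMod g H) ≤ LinearMap.ker evalS := by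
    rintro _ ⟨B, -, rfl⟩
    ext a
    rw [hevalS, mulMod_apply, evalEval_modByMonic (hgS _ a.2), evalEval_mul, hHS _ a.2,
      zero_mul, Pi.zero_apply]
  have hsurj : (reducedLE k e g.natDegree (n + h)).map evalS = ⊤ := by
    rw [eq_top_iff, ← (Pi.basisFun k S).span_eq, Submodule.span_le]
    rintro _ ⟨a, rfl⟩
    refine ⟨L (Pi.single a 1) %ₘ g, modByMonic_mem_reducedLE hg.monic hg.mem_weightLE
      (weightLE_mono e ?_ (hm a)), ?_⟩
    · exact (Finset.le_sup (Finset.mem_univ a)).trans (Nat.le_add_right _ _)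
    · ext b
      rw [hevalS, evalEval_modByMonic (hgS _ b.2), hL, Pi.basisFun_apply]
  have hdim := finrank_add_finrank_le_of_map_eq_top (hg.map_mulMod_le hH n) hker hsurj
  rw [Module.finrank_fintype_fun_eq_card, Fintype.card_coe, finrank_reducedLE,
    hg.finrank_map_mulMod hgH] at hdim
  have := card_weightBox_add_le e g.natDegree n h
  omega

end PointCounting

section Stepanov

variable {k : Type*} [Field k] {e : ℕ} {g : k[X][X]}

lemma IsWeightedCurve.exists_dvd_sum_mul_pow (hg : IsWeightedCurve e g) {P w w' : ℕ}
    (hcard : g.natDegree * (P * w + w' + 1) <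
      (weightBox e g.natDegree w).card * (weightBox e g.natDegree w').card) :
    ∃ B : weightBox e g.natDegree w → k[X][X], (∀ x, B x ∈ reducedLE k e g.natDegree w') ∧
      (∃ x, B x ≠ 0) ∧ g ∣ ∑ x, B x * bivariateMonomials k x.1 ^ P := by
  let Θ : (weightBox e g.natDegree w → reducedLE k e g.natDegree w') →ₗ[k] k[X][X] :=
    ∑ x, LinearMap.mulRight k (bivariateMonomials k x.1 ^ P) ∘ₗ Submodule.subtype _ ∘ₗ
      LinearMap.proj x
  have hΘ (B) : Θ B = ∑ x, (B x : k[X][X]) * bivariateMonomials k x.1 ^ P := by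
    simp [Θ]
  have hmem (B) : ((modByMonicHom g).restrictScalars k ∘ₗ Θ) B ∈
      reducedLE k e g.natDegree (P * w + w') := by
    refine modByMonic_mem_reducedLE hg.monic hg.mem_weightLE ?_
    rw [hΘ]
    refine sum_mem fun x _ => ?_
    rw [add_comm]
    exact mul_mem_weightLE (mem_reducedLE.1 (B x).2).1 (pow_mem_weightLE
      (bivariateMonomials_mem_weightLE (mem_weightBox.1 x.2).2) P)
  have hker : LinearMap.ker (LinearMap.codRestrict _ _ hmem) ≠ ⊥ := by
    refine LinearMap.ker_ne_bot_of_finrank_lt (K := k)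
      (V := weightBox e g.natDegree w → reducedLE k e g.natDegree w')
      (V₂ := reducedLE k e g.natDegree (P * w + w')) ?_
    have hfree : Module.Free k (reducedLE k e g.natDegree w') :=
      .of_divisionRing k (reducedLE k e g.natDegree w')
    have hfinrank : Module.finrank k
        (weightBox e g.natDegree w → reducedLE k e g.natDegree w') =
        ∑ _ : weightBox e g.natDegree w, Module.finrank k (reducedLE k e g.natDegree w') :=
      Module.finrank_pi_fintype k
    rw [hfinrank]
    simp only [finrank_reducedLE, Finset.sum_const, Finset.card_univ, Fintype.card_coe, smul_eq_mul]
    exact (card_weightBox_le _ _ _).trans_lt hcard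
  rw [LinearMap.ker_codRestrict] at hker
  obtain ⟨B, hB, hB0⟩ := (Submodule.ne_bot_iff _).1 hker
  refine ⟨fun x => B x, fun x => (B x).2, ?_, ?_⟩
  · by_contra! h
    exact hB0 (funext fun x => Subtype.ext (h x))
  · rw [← hΘ, ← modByMonic_eq_zero_iff_dvd hg.monic]
    exact hB

/-- Extract `p ^ m`-th roots of all the coefficients. -/
lemma exists_pow_evalEval_eq (p : ℕ) [Fact p.Prime] [CharP k p] [PerfectRing k p] (m : ℕ)
    {r n : ℕ} {B : k[X][X]} (hB : B ∈ reducedLE k e r n) :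
    ∃ A ∈ reducedLE k e r n, (A = 0 → B = 0) ∧
      ∀ t v, t ^ p ^ m = t → v ^ p ^ m = v → evalEval t v A ^ p ^ m = evalEval t v B := by
  let φ := iterateFrobeniusEquiv k p m
  let σ : k →+* k := φ.symm
  have hφσ : (B.map (mapRingHom σ)).map (mapRingHom φ) = B := by
    ext
    simp [σ]
  refine ⟨B.map (mapRingHom σ), mem_reducedLE.2 ⟨fun i j h => ?_, ?_⟩, fun h => ?_,
    fun t v ht hv => ?_⟩
  · rw [coeff_map, coe_mapRingHom, coeff_map] at h
    exact (mem_reducedLE.1 hB).1 i j fun h0 => h (by rw [h0, map_zero])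
  · exact degree_map_le.trans_lt (mem_reducedLE.1 hB).2
  · rw [← hφσ, h, Polynomial.map_zero]
  · have h := map_mapRingHom_evalEval (φ : k →+* k) (B.map (mapRingHom σ)) t v
    rw [hφσ] at h
    simpa [φ, iterateFrobenius_def, ht, hv] using h.symm

lemma stepanov_parameters {e r P : ℕ} (hr : 0 < r) (hP : e * r + e + 4 ≤ P) :
    r * (P * (P + e * r) + (P / r + (e + 3) + e * r) + 1) <
      r * P * (r * (P / r + (e + 3))) := by
  have hmod := Nat.div_add_mod P r
  have hlt := Nat.mod_lt P hr
  have hdiv := Nat.div_le_self P r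
  set m := P / r + (e + 3) with hm
  have hm₁ : P + r * (e + 3) < r * m + r := by
    rw [hm]
    nlinarith
  have hmain : P * (P + e * r) + (m + e * r) + 1 < P * (r * m) := by
    have : P * (P + r * (e + 3) + 1) ≤ P * (r * m + r) := Nat.mul_le_mul_left _ hm₁
    nlinarith [Nat.mul_le_mul_left P hr]
  calc r * (P * (P + e * r) + (m + e * r) + 1) < r * (P * (r * m)) :=
        Nat.mul_lt_mul_of_pos_left hmain hr
    _ = r * P * (r * m) := by ring

/-- Stepanov's method in Bombieri's form: `∑ Bₓ ⬝ monₓ ^ P` vanishes on the curve, and on points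
fixed by the `P * Q`-power map it is the `P`-th power of `∑ Aₓ ^ Q ⬝ monₓ`, which therefore has a
zero at each such point but does not vanish identically on the curve. -/
theorem IsWeightedCurve.card_fixedPoints_le [IsAlgClosed k] {p : ℕ} [Fact p.Prime] [CharP k p]
    (hg : IsWeightedCurve e g) (hder : derivative g ≠ 0) {a b : ℕ}
    (hP : e * g.natDegree + e + 4 ≤ p ^ a)
    (hQ : (g.natDegree + 1) * (p ^ a + e * g.natDegree) < p ^ b) {S : Finset (k × k)}
    (hgS : ∀ x ∈ S, evalEval x.1 x.2 g = 0)
    (hS : ∀ x ∈ S, x.1 ^ p ^ (a + b) = x.1 ∧ x.2 ^ p ^ (a + b) = x.2) :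
    S.card ≤ p ^ (a + b) +
      (g.natDegree + g.natDegree * (e + 3 + e * g.natDegree)) * p ^ b := by
  set r := g.natDegree
  set m := p ^ a / r + (e + 3) with hm
  obtain ⟨B, hBmem, ⟨x₀, hx₀⟩, D, hD⟩ := hg.exists_dvd_sum_mul_pow (P := p ^ a)
    (w := p ^ a + e * r) (w' := m + e * r)
    ((stepanov_parameters hg.natDegree_pos hP).trans_le
      (Nat.mul_le_mul (le_card_weightBox e r _) (le_card_weightBox e r m)))
  choose A hAmem hA0 hA using fun x => exists_pow_evalEval_eq p (a + b) (hBmem x)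
  have hnot := hg.not_dvd_sum_pow_mul hder hQ A hAmem ⟨x₀, fun h => hx₀ (hA0 x₀ h)⟩
  set H := ∑ x, A x ^ p ^ b * bivariateMonomials k x.1
  have hHw : H ∈ weightLE k e (p ^ b * (m + e * r) + (p ^ a + e * r)) := sum_mem fun x _ =>
    mul_mem_weightLE (pow_mem_weightLE (mem_reducedLE.1 (hAmem x)).1 _)
      (bivariateMonomials_mem_weightLE (mem_weightBox.1 x.2).2)
  have hHS : ∀ z ∈ S, evalEval z.1 z.2 H = 0 := by
    intro z hz
    refine eq_zero_of_pow_eq_zero (n := p ^ a) ?_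
    calc evalEval z.1 z.2 H ^ p ^ a
        = ∑ x, evalEval z.1 z.2 (A x) ^ p ^ (a + b) *
            evalEval z.1 z.2 (bivariateMonomials k x.1) ^ p ^ a := by
          simp only [H, evalEval_finsetSum, sum_pow_char_pow, evalEval_mul, evalEval_pow, mul_pow]
          simp only [← pow_mul, ← pow_add, add_comm]
      _ = evalEval z.1 z.2 (∑ x, B x * bivariateMonomials k x.1 ^ p ^ a) := by
          simp only [hA _ _ _ (hS z hz).1 (hS z hz).2, evalEval_finsetSum, evalEval_mul,
            evalEval_pow]
      _ = 0 := by rw [hD, evalEval_mul, hgS z hz, zero_mul]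
  refine (hg.card_zeros_le hHw hnot hgS hHS).trans ?_
  have hPQ : p ^ (a + b) = p ^ a * p ^ b := pow_add _ _ _
  have hrm : r * m ≤ p ^ a + r * (e + 3) := by
    rw [hm, Nat.mul_add]
    exact Nat.add_le_add_right (Nat.mul_div_le _ _) _
  have hPer : p ^ a + e * r ≤ p ^ b := (Nat.le_mul_of_pos_left _ (Nat.succ_pos r)).trans hQ.le
  nlinarith [Nat.mul_le_mul_left (p ^ b) hrm, Nat.mul_le_mul_left r hPer]

end Stepanov

section TraceCombinations

/-- Evaluation of a polynomial in three nested variables at `(s, t, u)`, the innermost first. -/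
noncomputable def eval₃ {R S : Type*} [CommRing R] [CommRing S] [Algebra R S] (s t u : S) :
    R[X][X][X] →+* S :=
  eval₂RingHom ((aevalAeval s t : R[X][X] →ₐ[R] S) : R[X][X] →+* S) u

lemma eval₃_X {R S : Type*} [CommRing R] [CommRing S] [Algebra R S] (s t u : S) :
    eval₃ s t u (X : R[X][X][X]) = u := by
  simp [eval₃]

lemma eval₃_C {R S : Type*} [CommRing R] [CommRing S] [Algebra R S] (s t u : S) (P : R[X][X]) :
    eval₃ s t u (C P) = aevalAeval s t P := by
  simp [eval₃]

lemma eval₃_C_X {R S : Type*} [CommRing R] [CommRing S] [Algebra R S] (s t u : S) :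
    eval₃ s t u (C X : R[X][X][X]) = t := by
  simp [eval₃]

lemma eval₃_C_C_X {R S : Type*} [CommRing R] [CommRing S] [Algebra R S] (s t u : S) :
    eval₃ s t u (C (C X) : R[X][X][X]) = s := by
  simp [eval₃]

variable {R : Type} [CommRing R] {S : Type} [CommRing S] [Algebra R S]

lemma SL2.coe_inv_eq (x : SL2 S) :
    ((x⁻¹ : SL2 S) : Matrix (Fin 2) (Fin 2) S) = trace x.1 • 1 - x.1 := by
  rw [Matrix.SpecialLinearGroup.coe_inv, adjugate_fin_two]
  ext i j
  fin_cases i <;> fin_cases j <;> simp [trace_fin_two]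

lemma SL2.mul_self_eq (x : SL2 S) : x.1 * x.1 = trace x.1 • x.1 - 1 := by
  have h : x.1 * (x⁻¹ : SL2 S).1 = 1 := by
    rw [← Matrix.SpecialLinearGroup.coe_mul, mul_inv_cancel, Matrix.SpecialLinearGroup.coe_one]
  rw [coe_inv_eq, mul_sub, mul_smul_comm, mul_one] at h
  rw [← h]
  abel

lemma SL2.coe_inv_mul_inv_eq (x y : SL2 S) :
    (y⁻¹ : SL2 S).1 * (x⁻¹ : SL2 S).1 = trace (x.1 * y.1) • 1 - x.1 * y.1 := by
  rw [← Matrix.SpecialLinearGroup.coe_mul, ← _root_.mul_inv_rev, coe_inv_eq,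
    Matrix.SpecialLinearGroup.coe_mul]

lemma SL2.mul_swap_eq (x y : SL2 S) :
    y.1 * x.1 = (trace (x.1 * y.1) - trace x.1 * trace y.1) • 1 + trace y.1 • x.1 +
      trace x.1 • y.1 - x.1 * y.1 := by
  have h := coe_inv_mul_inv_eq x y
  rw [coe_inv_eq, coe_inv_eq, sub_mul, smul_mul_assoc, one_mul, mul_sub, mul_smul_comm,
    mul_one] at h
  rw [← sub_eq_zero] at h ⊢
  rw [← h]
  module

lemma SL2.mul_mul_eq (x y : SL2 S) :
    x.1 * y.1 * x.1 = trace (x.1 * y.1) • x.1 - trace y.1 • 1 + y.1 := by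
  have h := congrArg (· * x.1) (coe_inv_mul_inv_eq x y)
  have hinv : (x⁻¹ : SL2 S).1 * x.1 = 1 := by
    rw [← Matrix.SpecialLinearGroup.coe_mul, inv_mul_cancel, Matrix.SpecialLinearGroup.coe_one]
  simp only [mul_assoc, hinv, mul_one, sub_mul, smul_mul_assoc, one_mul, coe_inv_eq y] at h
  rw [mul_assoc, ← sub_sub_self (trace (x.1 * y.1) • x.1) (x.1 * (y.1 * x.1)), ← h]
  abel

/-- The matrix `c₀ + c₁ x + c₂ y + c₃ x y` whose coefficients are polynomials in the traces
`(tr x, tr y, tr xy)`. -/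
noncomputable def traceCombination (c : Fin 4 → R[X][X][X]) (x y : SL2 S) :
    Matrix (Fin 2) (Fin 2) S :=
  let ev := eval₃ (R := R) (trace x.1) (trace y.1) (trace (x.1 * y.1))
  ev (c 0) • 1 + ev (c 1) • x.1 + ev (c 2) • y.1 + ev (c 3) • (x.1 * y.1)

lemma traceCombination_add (c d : Fin 4 → R[X][X][X]) (x y : SL2 S) :
    traceCombination (c + d) x y = traceCombination c x y + traceCombination d x y := by
  simp only [traceCombination, Pi.add_apply, map_add]
  module

lemma traceCombination_smul (P : R[X][X][X]) (c : Fin 4 → R[X][X][X]) (x y : SL2 S) :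
    traceCombination (P • c) x y =
      eval₃ (trace x.1) (trace y.1) (trace (x.1 * y.1)) P • traceCombination c x y := by
  simp only [traceCombination, Pi.smul_apply, smul_eq_mul, _root_.map_mul]
  module

lemma traceCombination_mul_left (c : Fin 4 → R[X][X][X]) (x y : SL2 S) :
    traceCombination c x y * x.1 =
      traceCombination ![-c 1 + c 2 * (X - C (C X) * C X) - c 3 * C X,
        c 0 + c 1 * C (C X) + c 2 * C X + c 3 * X, c 2 * C (C X) + c 3, -c 2] x y := by
  simp only [traceCombination, add_mul, smul_mul_assoc, one_mul, SL2.mul_self_eq,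
    SL2.mul_swap_eq x y, SL2.mul_mul_eq, cons_val, map_add, _root_.map_sub, _root_.map_neg,
    _root_.map_mul, eval₃_X, eval₃_C_X, eval₃_C_C_X]
  module

lemma traceCombination_mul_right (c : Fin 4 → R[X][X][X]) (x y : SL2 S) :
    traceCombination c x y * y.1 =
      traceCombination ![-c 2, -c 3, c 0 + c 2 * C X, c 1 + c 3 * C X] x y := by
  simp only [traceCombination, add_mul, smul_mul_assoc, one_mul, mul_assoc, SL2.mul_self_eq,
    mul_sub, mul_one, mul_smul_comm, cons_val, map_add, _root_.map_neg, _root_.map_mul, eval₃_C_X]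
  module

lemma exists_traceCombination_mul (c d : Fin 4 → R[X][X][X]) :
    ∃ m : Fin 4 → R[X][X][X], ∀ (S : Type) [CommRing S] [Algebra R S] (x y : SL2 S),
      traceCombination c x y * traceCombination d x y = traceCombination m x y := by
  let cx := ![-c 1 + c 2 * (X - C (C X) * C X) - c 3 * C X,
    c 0 + c 1 * C (C X) + c 2 * C X + c 3 * X, c 2 * C (C X) + c 3, -c 2]
  let mulY (a : Fin 4 → R[X][X][X]) := ![-a 2, -a 3, a 0 + a 2 * C X, a 1 + a 3 * C X]
  refine ⟨d 0 • c + d 1 • cx + d 2 • mulY c + d 3 • mulY cx, fun S _ _ x y => ?_⟩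
  have hd : traceCombination d x y = _ := rfl
  simp only [traceCombination_add, traceCombination_smul, cx, mulY,
    ← traceCombination_mul_right, ← traceCombination_mul_left]
  rw [hd]
  simp only [traceCombination, mul_add, mul_smul_comm, mul_one, mul_assoc]

end TraceCombinations

section TracePolynomials

lemma wordEval_mul {G : Type*} [Group G] (v w : FreeGroup (Fin 2)) (x y : G) :
    wordEval (v * w) x y = wordEval v x y * wordEval w x y :=
  _root_.map_mul _ v w

lemma wordEval_inv {G : Type*} [Group G] (w : FreeGroup (Fin 2)) (x y : G) :
    wordEval w⁻¹ x y = (wordEval w x y)⁻¹ :=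
  _root_.map_inv _ w

lemma map_wordEval {G H : Type*} [Group G] [Group H] (φ : G →* H) (w : FreeGroup (Fin 2))
    (x y : G) : φ (wordEval w x y) = wordEval w (φ x) (φ y) := by
  refine DFunLike.congr_fun (f := φ.comp (FreeGroup.lift ![x, y])) ?_ w
  ext i
  fin_cases i <;> simp

lemma wordEval_wordOf {G : Type*} [Group G] {r : ℕ} (a b : Fin r → ℤ) (x y : G) :
    wordEval (wordOf a b) x y = (List.ofFn fun i => x ^ a i * y ^ b i).prod := by
  simp [wordEval, wordOf, map_list_prod, List.map_ofFn, Function.comp_def]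

lemma prod_zpow_eq_zpow_sum {ι G : Type*} [CommGroup G] (s : Finset ι) (e : ι → ℤ) (x : G) :
    ∏ i ∈ s, x ^ e i = x ^ ∑ i ∈ s, e i := by
  classical
  induction s using Finset.induction_on with
  | empty => simp
  | insert i s hi ih => rw [Finset.prod_insert hi, Finset.sum_insert hi, ih, ← _root_.zpow_add]

lemma wordEval_wordOf_comm {G : Type*} [CommGroup G] {r : ℕ} (a b : Fin r → ℤ) (x y : G) :
    wordEval (wordOf a b) x y = x ^ (∑ i, a i) * y ^ (∑ i, b i) := by
  rw [wordEval_wordOf, List.prod_ofFn, Finset.prod_mul_distrib, prod_zpow_eq_zpow_sum,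
    prod_zpow_eq_zpow_sum]

variable {R : Type} [CommRing R]

lemma exists_traceCombination_eq_wordEval (R : Type) [CommRing R] (w : FreeGroup (Fin 2)) :
    ∃ c : Fin 4 → R[X][X][X], ∀ (S : Type) [CommRing S] [Algebra R S] (x y : SL2 S),
      (wordEval w x y).1 = traceCombination c x y := by
  induction w using FreeGroup.induction_on with
  | C1 => exact ⟨![1, 0, 0, 0], fun S _ _ x y => by simp [traceCombination, wordEval]⟩
  | of i =>
    fin_cases i
    · exact ⟨![0, 1, 0, 0], fun S _ _ x y => by simp [traceCombination, wordEval]⟩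
    · exact ⟨![0, 0, 1, 0], fun S _ _ x y => by simp [traceCombination, wordEval]⟩
  | inv_of i _ =>
    fin_cases i
    · refine ⟨![C (C X), -1, 0, 0], fun S _ _ x y => ?_⟩
      rw [wordEval_inv, SL2.coe_inv_eq]
      simp [traceCombination, wordEval, eval₃_C_C_X, sub_eq_add_neg]
    · refine ⟨![C X, 0, -1, 0], fun S _ _ x y => ?_⟩
      rw [wordEval_inv, SL2.coe_inv_eq]
      simp [traceCombination, wordEval, eval₃_C_X, sub_eq_add_neg]
  | mul v w hv hw =>
    obtain ⟨c, hc⟩ := hv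
    obtain ⟨d, hd⟩ := hw
    obtain ⟨m, hm⟩ := exists_traceCombination_mul c d
    refine ⟨m, fun S _ _ x y => ?_⟩
    rw [wordEval_mul, Matrix.SpecialLinearGroup.coe_mul, hc, hd, hm]

/-- The polynomial `f(s, t, u)` over `R`, with `s` the innermost and `u` the outermost variable,
expresses the trace of `w(x, y)` through `s = tr x`, `t = tr y`, `u = tr xy`, over every
commutative `R`-algebra. -/
def IsNestedTracePolynomial (w : FreeGroup (Fin 2)) (f : R[X][X][X]) : Prop :=
  ∀ (S : Type) [CommRing S] [Algebra R S] (x y : SL2 S),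
    trace (wordEval w x y).1 = eval₃ (trace x.1) (trace y.1) (trace (x.1 * y.1)) f

lemma exists_isNestedTracePolynomial (R : Type) [CommRing R] (w : FreeGroup (Fin 2)) :
    ∃ f : R[X][X][X], IsNestedTracePolynomial w f := by
  obtain ⟨c, hc⟩ := exists_traceCombination_eq_wordEval R w
  refine ⟨c 0 + c 0 + c 1 * C (C X) + c 2 * C X + c 3 * X, fun S _ _ x y => ?_⟩
  simp [hc, traceCombination, eval₃_X, eval₃_C_X, eval₃_C_C_X, mul_two]

/-- The embedding `a ↦ diag(a, a⁻¹)` of the torus. -/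
def SL2.diagonal (S : Type) [CommRing S] : Sˣ →* SL2 S where
  toFun a := ⟨!![(a : S), 0; 0, (a⁻¹ : Sˣ)], by simp⟩
  map_one' := by
    ext i j
    fin_cases i <;> fin_cases j <;> simp
  map_mul' a b := by
    apply Subtype.ext
    change _ = !![(a : S), 0; 0, (a⁻¹ : Sˣ)] * !![(b : S), 0; 0, (b⁻¹ : Sˣ)]
    simp [mul_comm]

lemma SL2.trace_diagonal {S : Type} [CommRing S] (a : Sˣ) :
    trace (SL2.diagonal S a).1 = a + (a⁻¹ : Sˣ) :=
  trace_fin_two_of ..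

lemma IsNestedTracePolynomial.eval₃_add_inv {r : ℕ} {a b : Fin r → ℤ} {f : R[X][X][X]}
    (hf : IsNestedTracePolynomial (wordOf a b) f) {F : Type} [Field F] [Algebra R F] {α μ : F}
    (hα : α ≠ 0) (hμ : μ ≠ 0) :
    eval₃ (α + α⁻¹) (μ + μ⁻¹) (α * μ + (α * μ)⁻¹) f =
      α ^ (∑ i, a i) * μ ^ (∑ i, b i) + (α ^ (∑ i, a i) * μ ^ (∑ i, b i))⁻¹ := by
  have h := hf F (SL2.diagonal F (Units.mk0 α hα)) (SL2.diagonal F (Units.mk0 μ hμ))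
  rw [← map_wordEval, wordEval_wordOf_comm, ← Matrix.SpecialLinearGroup.coe_mul, ← map_mul] at h
  simp only [SL2.trace_diagonal] at h
  simpa using h.symm

end TracePolynomials

section DegreeOfTracePolynomial

lemma list_prod_of_upper_right_eq_zero {A : Type*} [Semiring A]
    {l : List (Matrix (Fin 2) (Fin 2) A)} (hl : ∀ M ∈ l, M 0 1 = 0) :
    l.prod 0 1 = 0 ∧ ∀ i, l.prod i i = (l.map fun M => M i i).prod := by
  induction l with
  | nil => simp
  | cons M l ih =>
    obtain ⟨h01, hdiag⟩ := ih fun N hN => hl N (List.mem_cons_of_mem M hN)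
    have hM := hl M List.mem_cons_self
    refine ⟨by simp [mul_apply, Fin.sum_univ_two, h01, hM], fun i => ?_⟩
    rw [List.prod_cons, List.map_cons, List.prod_cons, ← hdiag, mul_apply, Fin.sum_univ_two]
    fin_cases i <;> simp [h01, hM]

lemma natDegree_matPolyEquiv_le {R : Type*} [CommRing R] {n : Type*} [Fintype n] [DecidableEq n]
    {M : Matrix n n R[X]} {d : ℕ} (h : ∀ i j, (M i j).natDegree ≤ d) :
    (matPolyEquiv M).natDegree ≤ d := by
  refine natDegree_le_iff_coeff_eq_zero.2 fun m hm => ?_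
  ext i j
  rw [matPolyEquiv_coeff_apply, coeff_eq_zero_of_natDegree_lt ((h i j).trans_lt hm),
    Matrix.zero_apply]

lemma coeff_trace {R : Type*} [CommRing R] {n : Type*} [Fintype n] [DecidableEq n]
    (M : Matrix n n R[X]) (d : ℕ) : (trace M).coeff d = trace ((matPolyEquiv M).coeff d) := by
  simp [trace, matPolyEquiv_coeff_apply]

lemma zpow_eq_of_map_add {G : Type*} [Group G] {y : ℤ → G}
    (hy : ∀ a b, y (a + b) = y a * y b) (a : ℤ) : y 1 ^ a = y a :=
  (MonoidHom.apply_mint G (MonoidHom.mk' (fun n => y n.toAdd) fun _ _ => hy _ _) (.ofAdd a)).symm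

variable {k : Type} [Field k]

/-- The quantum integer `[a]` at `α`, the off-diagonal entry of the `a`-th power of a triangular
matrix with eigenvalues `α`, `α⁻¹`. -/
noncomputable def quantumInt (α : kˣ) (a : ℤ) : k :=
  ((α : k) ^ a - (α : k) ^ (-a)) / (α - (α : k)⁻¹)

lemma zpow_sub_zpow_neg_ne_zero {α : kˣ} (hα : ¬IsOfFinOrder α) {a : ℤ} (ha : a ≠ 0) :
    (α : k) ^ a - (α : k) ^ (-a) ≠ 0 := by
  rw [sub_ne_zero, ← Units.val_zpow_eq_zpow_val, ← Units.val_zpow_eq_zpow_val, Ne, Units.val_inj]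
  refine fun h => hα (isOfFinOrder_iff_zpow_eq_one.2 ⟨a + a, by omega, ?_⟩)
  rw [_root_.zpow_add]
  nth_rw 1 [h]
  rw [_root_.zpow_neg, inv_mul_cancel]

lemma quantumInt_ne_zero {α : kˣ} (hα : ¬IsOfFinOrder α) {a : ℤ} (ha : a ≠ 0) :
    quantumInt α a ≠ 0 :=
  div_ne_zero (zpow_sub_zpow_neg_ne_zero hα ha)
    (by simpa using zpow_sub_zpow_neg_ne_zero hα one_ne_zero)

lemma quantumInt_one {α : kˣ} (hα : ¬IsOfFinOrder α) : quantumInt α 1 = 1 := by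
  have h := zpow_sub_zpow_neg_ne_zero hα one_ne_zero
  rw [quantumInt]
  simpa using div_self h

lemma quantumInt_add (α : kˣ) (a b : ℤ) :
    quantumInt α (a + b) = (α : k) ^ a * quantumInt α b + quantumInt α a * (α : k) ^ (-b) := by
  unfold quantumInt
  rw [neg_add, zpow_add₀ α.ne_zero, zpow_add₀ α.ne_zero]
  ring

lemma quantumInt_add' (α : kˣ) (a b : ℤ) :
    quantumInt α (a + b) = quantumInt α a * (α : k) ^ b + (α : k) ^ (-a) * quantumInt α b := by
  rw [add_comm, quantumInt_add]
  ring

/-- The upper triangular matrix with diagonal `(α, α⁻¹)` and constant corner, raised to the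
power `a`. -/
noncomputable def SL2.upper (α : kˣ) (a : ℤ) : SL2 k[X] :=
  ⟨!![C ((α : k) ^ a), C (quantumInt α a); 0, C ((α : k) ^ (-a))], by
    rw [det_fin_two_of, ← C_mul, ← zpow_add₀ α.ne_zero]
    simp⟩

/-- The lower triangular matrix with diagonal `(μ, μ⁻¹)` and corner a multiple of the variable,
raised to the power `b`. -/
noncomputable def SL2.lower (μ : kˣ) (b : ℤ) : SL2 k[X] :=
  ⟨!![C ((μ : k) ^ b), 0; C (quantumInt μ b) * X, C ((μ : k) ^ (-b))], by
    rw [det_fin_two_of, ← C_mul, ← zpow_add₀ μ.ne_zero]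
    simp⟩

lemma SL2.upper_one_zpow (α : kˣ) (a : ℤ) : upper α 1 ^ a = upper α a := by
  refine zpow_eq_of_map_add (fun a b => ?_) a
  apply Subtype.ext
  change !![_, _; _, _] = !![_, _; _, _] * !![_, _; _, _]
  rw [mul_fin_two, quantumInt_add, neg_add, zpow_add₀ α.ne_zero, zpow_add₀ α.ne_zero]
  simp

lemma SL2.lower_one_zpow (μ : kˣ) (b : ℤ) : lower μ 1 ^ b = lower μ b := by
  refine zpow_eq_of_map_add (fun a b => ?_) b
  apply Subtype.ext
  change !![_, _; _, _] = !![_, _; _, _] * !![_, _; _, _]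
  rw [mul_fin_two, quantumInt_add', neg_add, zpow_add₀ μ.ne_zero, zpow_add₀ μ.ne_zero]
  simp only [C_add, C_mul, mul_zero, add_zero, zero_mul, zero_add, add_mul, mul_assoc]
  rw [mul_comm X]

lemma SL2.upper_mul_lower (α μ : kˣ) (a b : ℤ) :
    (upper α a * lower μ b).1 =
      !![C ((α : k) ^ a * (μ : k) ^ b) + C (quantumInt α a * quantumInt μ b) * X,
        C (quantumInt α a * (μ : k) ^ (-b));
        C ((α : k) ^ (-a) * quantumInt μ b) * X, C ((α : k) ^ (-a) * (μ : k) ^ (-b))] := by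
  change !![_, _; _, _] * !![_, _; _, _] = _
  rw [mul_fin_two]
  simp [mul_assoc]

lemma SL2.natDegree_upper_mul_lower_le (α μ : kˣ) (a b : ℤ) (i j : Fin 2) :
    ((upper α a * lower μ b).1 i j).natDegree ≤ 1 := by
  rw [upper_mul_lower]
  fin_cases i <;> fin_cases j <;> dsimp <;> compute_degree!

lemma SL2.coeff_one_upper_mul_lower (α μ : kˣ) (a b : ℤ) :
    (matPolyEquiv (upper α a * lower μ b).1).coeff 1 =
      !![quantumInt α a * quantumInt μ b, 0; (α : k) ^ (-a) * quantumInt μ b, 0] := by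
  ext i j
  rw [matPolyEquiv_coeff_apply, upper_mul_lower]
  fin_cases i <;> fin_cases j <;> simp [coeff_C]

lemma natDegree_trace_wordEval {α μ : kˣ} (hα : ¬IsOfFinOrder α) (hμ : ¬IsOfFinOrder μ) {r : ℕ}
    (hr : r ≠ 0) {a b : Fin r → ℤ} (ha : ∀ i, a i ≠ 0) (hb : ∀ i, b i ≠ 0) :
    (trace (wordEval (wordOf a b) (SL2.upper α 1) (SL2.lower μ 1)).1).natDegree = r := by
  set W := (wordEval (wordOf a b) (SL2.upper α 1) (SL2.lower μ 1)).1
  let M (i : Fin r) : Matrix (Fin 2) (Fin 2) k[X] := (SL2.upper α (a i) * SL2.lower μ (b i)).1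
  let l := List.ofFn fun i => matPolyEquiv (M i)
  have hprod : matPolyEquiv W = l.prod := by
    let φ : SL2 k[X] →* (Matrix (Fin 2) (Fin 2) k)[X] :=
      { toFun x := matPolyEquiv x.1
        map_one' := by simp
        map_mul' x y := by simp }
    change φ (wordEval (wordOf a b) (SL2.upper α 1) (SL2.lower μ 1)) = _
    rw [wordEval_wordOf, map_list_prod, List.map_ofFn]
    simp only [SL2.upper_one_zpow, SL2.lower_one_zpow]
    rfl
  have hdeg (P) (hP : P ∈ l) : P.natDegree ≤ 1 := by
    obtain ⟨i, rfl⟩ := List.mem_ofFn.1 hP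
    exact natDegree_matPolyEquiv_le (SL2.natDegree_upper_mul_lower_le α μ (a i) (b i))
  have hcoeff : l.prod.coeff r = (List.ofFn fun i => (matPolyEquiv (M i)).coeff 1).prod := by
    have h := coeff_list_prod_of_natDegree_le l 1 hdeg
    rwa [List.length_ofFn, mul_one, List.map_ofFn] at h
  refine natDegree_eq_of_le_of_coeff_ne_zero (natDegree_le_iff_coeff_eq_zero.2 fun n hn => ?_) ?_
  · rw [coeff_trace, hprod, coeff_eq_zero_of_natDegree_lt, trace_zero]
    refine (natDegree_list_prod_le l).trans_lt (lt_of_le_of_lt ?_ hn)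
    simpa [l] using List.sum_le_card_nsmul (l.map natDegree) 1 (by simpa using hdeg)
  · simp only [M, SL2.coeff_one_upper_mul_lower] at hcoeff
    rw [coeff_trace, hprod, hcoeff, trace_fin_two]
    have hdiag := (list_prod_of_upper_right_eq_zero (l := List.ofFn fun i =>
      !![quantumInt α (a i) * quantumInt μ (b i), 0; (α : k) ^ (-a i) * quantumInt μ (b i), 0])
      (by simp [List.mem_ofFn])).2
    rw [hdiag, hdiag, List.map_ofFn, List.map_ofFn, List.prod_ofFn, List.prod_ofFn]
    simp [hr, Finset.prod_ne_zero_iff, quantumInt_ne_zero hα (ha _),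
      quantumInt_ne_zero hμ (hb _)]

lemma not_isOfFinOrder_of_transcendental {R : Type*} [CommRing R] [IsDomain R] [Algebra R k]
    [FaithfulSMul R k] {α : kˣ} (h : Transcendental R ((α : k) + (α : k)⁻¹)) :
    ¬IsOfFinOrder α := by
  intro hα
  obtain ⟨n, hn, hαn⟩ := isOfFinOrder_iff_pow_eq_one.1 hα
  have hint : IsAlgebraic R (α : k) := by
    refine ⟨X ^ n - C 1, (monic_X_pow_sub_C (1 : R) hn.ne').ne_zero, ?_⟩
    rw [_root_.map_sub, aeval_X_pow, ← Units.val_pow_eq_pow_val, hαn]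
    simp
  exact h (hint.add hint.inv)

lemma exists_eq_unit_add_inv [IsAlgClosed k] (s : k) : ∃ α : kˣ, s = α + (α : k)⁻¹ := by
  have hdeg : (X ^ 2 - C s * X + 1 : k[X]).degree = 2 := by compute_degree!
  obtain ⟨α, hα⟩ := IsAlgClosed.exists_root (X ^ 2 - C s * X + 1 : k[X]) (by simp [hdeg])
  replace hα : α ^ 2 - s * α + 1 = 0 := by simpa using hα
  have h0 : α ≠ 0 := by
    rintro rfl
    simp at hα
  refine ⟨Units.mk0 α h0, ?_⟩
  rw [Units.val_mk0]
  field_simp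
  linear_combination -hα

variable {R : Type} [CommRing R] {r : ℕ} {a b : Fin r → ℤ} {f : R[X][X][X]}

lemma transcendental_of_injective_aevalAeval {A : Type*} [CommRing A] [Algebra R A] {s t : A}
    (hinj : Function.Injective (aevalAeval s t : R[X][X] →ₐ[R] A)) :
    Transcendental R s ∧ Transcendental R t := by
  refine ⟨transcendental_iff_injective.2 fun P Q hPQ => C_injective (hinj ?_),
    transcendental_iff_injective.2 fun P Q hPQ => map_injective C C_injective (hinj ?_)⟩
  · simpa using hPQ
  · have h (P : R[X]) : aevalAeval s t (P.map C) = aeval t P := by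
      induction P using Polynomial.induction_on' with
      | add P Q hP hQ => rw [Polynomial.map_add, map_add, map_add, hP, hQ]
      | monomial n c => simp [← C_mul_X_pow_eq_monomial]
    simpa [h] using hPQ

lemma IsNestedTracePolynomial.natDegree_eq_of_isAlgClosed [IsDomain R] [IsAlgClosed k]
    [Algebra R k] {s t : k} (hinj : Function.Injective (aevalAeval s t : R[X][X] →ₐ[R] k))
    (hf : IsNestedTracePolynomial (wordOf a b) f) (hr : r ≠ 0) (ha : ∀ i, a i ≠ 0)
    (hb : ∀ i, b i ≠ 0) : f.natDegree = r := by
  have : FaithfulSMul R k := by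
    rw [faithfulSMul_iff_algebraMap_injective]
    refine fun x y hxy => C_injective (C_injective (hinj ?_))
    simpa using hxy
  obtain ⟨hs, ht⟩ := transcendental_of_injective_aevalAeval hinj
  obtain ⟨α, rfl⟩ := exists_eq_unit_add_inv s
  obtain ⟨μ, rfl⟩ := exists_eq_unit_add_inv t
  have hα := not_isOfFinOrder_of_transcendental hs
  have hμ := not_isOfFinOrder_of_transcendental ht
  have htrace := hf k[X] (SL2.upper α 1) (SL2.lower μ 1)
  let φ : R[X][X] →+* k := ((aevalAeval ((α : k) + (α : k)⁻¹) ((μ : k) + (μ : k)⁻¹) :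
    R[X][X] →ₐ[R] k) : R[X][X] →+* k)
  obtain ⟨c, hc⟩ : ∃ c : k, trace ((SL2.upper α 1).1 * (SL2.lower μ 1).1) = X + C c := by
    refine ⟨α * μ + (α : k)⁻¹ * (μ : k)⁻¹, ?_⟩
    rw [← Matrix.SpecialLinearGroup.coe_mul, SL2.upper_mul_lower, trace_fin_two_of,
      quantumInt_one hα, quantumInt_one hμ]
    simp
    ring
  have heval : eval₃ (trace (SL2.upper α 1).1) (trace (SL2.lower μ 1).1)
      (trace ((SL2.upper α 1).1 * (SL2.lower μ 1).1)) f = (f.map φ).comp (X + C c) := by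
    rw [hc]
    refine RingHom.congr_fun (f := eval₃ _ _ _)
      (g := (compRingHom (X + C c)).comp (mapRingHom φ)) ?_ f
    have hα' : trace (SL2.upper α 1).1 = C ((α : k) + (α : k)⁻¹) := by
      simp [SL2.upper, trace_fin_two]
    have hμ' : trace (SL2.lower μ 1).1 = C ((μ : k) + (μ : k)⁻¹) := by
      simp [SL2.lower, trace_fin_two]
    rw [hα', hμ']
    ext <;> simp [φ, eval₃]
  rw [← natDegree_trace_wordEval hα hμ hr ha hb, htrace, heval, natDegree_comp, natDegree_X_add_C,
    mul_one, natDegree_map_eq_of_injective (f := φ) hinj]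

theorem IsNestedTracePolynomial.natDegree_eq [IsDomain R]
    (hf : IsNestedTracePolynomial (wordOf a b) f) (hr : r ≠ 0) (ha : ∀ i, a i ≠ 0)
    (hb : ∀ i, b i ≠ 0) : f.natDegree = r := by
  let k := AlgebraicClosure (FractionRing R[X][X])
  have hinj : Function.Injective (algebraMap R[X][X] k) :=
    (algebraMap (FractionRing R[X][X]) k).injective.comp (IsFractionRing.injective _ _)
  refine hf.natDegree_eq_of_isAlgClosed (k := k)
    (s := algebraMap R[X][X] k (C X)) (t := algebraMap R[X][X] k X) ?_ hr ha hb
  have h : ((aevalAeval (algebraMap R[X][X] k (C X)) (algebraMap R[X][X] k X) :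
      R[X][X] →ₐ[R] k) : R[X][X] →+* k) = algebraMap R[X][X] k := by
    ext <;> simp [IsScalarTower.algebraMap_apply R R[X][X] k, Polynomial.algebraMap_apply]
  exact fun P Q hPQ => hinj (by rw [← h]; exact hPQ)

end DegreeOfTracePolynomial

section FactorsOverAlgebraicClosure

lemma exists_isRoot_of_dvd_of_natDegree_eq_one {R : Type*} [CommRing R] [IsDomain R] {G P : R[X]}
    (hG : G.Monic) (hPG : P ∣ G) (hP : P.natDegree = 1) : ∃ ρ, G.IsRoot ρ := by
  obtain ⟨u, hu⟩ := hG.isUnit_leadingCoeff_of_dvd hPG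
  have hPX : P = C (u : R) * X + C (P.coeff 0) := by
    conv_lhs => rw [eq_X_add_C_of_natDegree_le_one hP.le]
    rw [hu, leadingCoeff, hP]
  have hroot : P.IsRoot (-(u⁻¹ : Rˣ) * P.coeff 0) := by
    rw [hPX, IsRoot.def]
    simp
  exact ⟨_, hroot.dvd hPG⟩

lemma irreducible_or_exists_natDegree_eq_one {R : Type*} [CommRing R] [IsDomain R]
    [UniqueFactorizationMonoid R] {G : R[X]} (hr : G.natDegree.Prime)
    (h : ∀ P Q, Irreducible P → Irreducible Q → P ∣ G → Q ∣ G → P.natDegree = Q.natDegree) :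
    Irreducible G ∨ ∃ P, P ∣ G ∧ P.natDegree = 1 := by
  have hG : G ≠ 0 := ne_zero_of_natDegree_gt hr.pos
  obtain ⟨s, hs, hsG⟩ := WfDvdMonoid.exists_factors G hG
  have hdvd : ∀ P ∈ s, P ∣ G := fun P hP => (Multiset.dvd_prod hP).trans hsG.dvd
  have hsum : (s.map natDegree).sum = G.natDegree := by
    rw [← natDegree_multiset_prod _ fun h0 => (hs 0 h0).ne_zero rfl]
    exact natDegree_eq_of_degree_eq (degree_eq_degree_of_associated hsG)
  obtain ⟨P, hP⟩ := Multiset.exists_mem_of_ne_zero (s := s) (by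
    rintro rfl
    exact hr.ne_zero hsum.symm)
  have hmap : s.map natDegree = Multiset.replicate s.card P.natDegree := by
    refine Multiset.eq_replicate.2 ⟨Multiset.card_map _ _, fun n hn => ?_⟩
    obtain ⟨Q, hQ, rfl⟩ := Multiset.mem_map.1 hn
    exact h Q P (hs Q hQ) (hs P hP) (hdvd Q hQ) (hdvd P hP)
  rw [hmap, Multiset.sum_replicate, smul_eq_mul] at hsum
  rcases (Nat.dvd_prime hr).1 (Dvd.intro_left _ hsum) with hone | hfull
  · exact .inr ⟨P, hdvd P hP, hone⟩
  · rw [hfull] at hsum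
    obtain ⟨Q, rfl⟩ := Multiset.card_eq_one.1 (Nat.eq_of_mul_eq_mul_right hr.pos
      (hsum.trans (one_mul _).symm))
    rw [Multiset.prod_singleton] at hsG
    exact .inl (hsG.irreducible (hs Q (Multiset.mem_singleton_self Q)))

variable {W : Type*} [Field W]

lemma exists_evalEval_eq_zero_of_dvd_monic [IsAlgClosed W] {G P : W[X][X]} (hG : G.Monic)
    (hPG : P ∣ G) (hP : ¬IsUnit P) (t : W) : ∃ z, P.evalEval t z = 0 := by
  have hdeg := natDegree_pos_of_not_isUnit_of_dvd_monic hG hP hPG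
  rw [← natDegree_map_of_leadingCoeff_ne_zero (evalRingHom t)
    ((hG.isUnit_leadingCoeff_of_dvd hPG).map _).ne_zero] at hdeg
  obtain ⟨z, hz⟩ := IsAlgClosed.exists_root _ (natDegree_pos_iff_degree_pos.1 hdeg).ne'
  exact ⟨z, by rwa [IsRoot, map_evalRingHom_eval] at hz⟩

lemma associated_of_evalEval_eq_zero {G P Q : W[X][X]} {t z : W}
    (hG : (G.map (evalRingHom t)).Separable) (hP : Irreducible P) (hQ : Irreducible Q)
    (hPG : P ∣ G) (hQG : Q ∣ G) (hPz : P.evalEval t z = 0) (hQz : Q.evalEval t z = 0) :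
    Associated P Q := by
  by_contra hPQ
  have hprod : P * Q ∣ G := by
    obtain ⟨H, rfl⟩ := hPG
    refine mul_dvd_mul_left _ ((hQ.prime.dvd_or_dvd hQG).resolve_left fun h => hPQ ?_)
    exact (hQ.associated_of_dvd hP h).symm
  obtain ⟨H, rfl⟩ := hprod
  rw [Polynomial.map_mul, Polynomial.map_mul] at hG
  obtain ⟨a, b, hab⟩ := hG.of_mul_left.isCoprime
  have := congrArg (eval z) hab
  simp [map_evalRingHom_eval, hPz, hQz] at this

variable {k₀ : Type*} [Field k₀] [Algebra k₀ W]

lemma map_algebraMap_map_evalRingHom (G : k₀[X][X]) (τ : k₀) :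
    (G.map (mapRingHom (algebraMap k₀ W))).map (evalRingHom (algebraMap k₀ W τ)) =
      (G.map (evalRingHom τ)).map (algebraMap k₀ W) := by
  rw [Polynomial.map_map, Polynomial.map_map]
  congr 1
  ext <;> simp

lemma minpoly_eq_map_evalRingHom {G : k₀[X][X]} (hG : G.Monic) {τ : k₀}
    (hirr : Irreducible (G.map (evalRingHom τ))) {z : W}
    (hz : (G.map (mapRingHom (algebraMap k₀ W))).evalEval (algebraMap k₀ W τ) z = 0) :
    minpoly k₀ z = G.map (evalRingHom τ) := by
  refine (minpoly.eq_of_irreducible_of_monic hirr ?_ (hG.map _)).symm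
  rwa [← eval_map_algebraMap, ← map_algebraMap_map_evalRingHom, map_evalRingHom_eval]

variable [IsAlgClosed W] [Algebra.IsAlgebraic k₀ W]

/-- A Galois automorphism carries a zero `(τ, z)` of `P` to a zero `(τ, z')` of `Q`, hence `P` to an
associate of `Q`. -/
lemma natDegree_eq_of_irreducible_map_evalRingHom {G : k₀[X][X]} (hG : G.Monic) {τ : k₀}
    (hirr : Irreducible (G.map (evalRingHom τ)))
    (hder : derivative (G.map (evalRingHom τ)) ≠ 0) {P Q : W[X][X]} (hP : Irreducible P)
    (hQ : Irreducible Q) (hPG : P ∣ G.map (mapRingHom (algebraMap k₀ W)))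
    (hQG : Q ∣ G.map (mapRingHom (algebraMap k₀ W))) : P.natDegree = Q.natDegree := by
  have hGW := hG.map (mapRingHom (algebraMap k₀ W))
  set t := algebraMap k₀ W τ with ht
  have hsep : ((G.map (mapRingHom (algebraMap k₀ W))).map (evalRingHom t)).Separable := by
    rw [map_algebraMap_map_evalRingHom]
    exact ((separable_iff_derivative_ne_zero hirr).2 hder).map
  obtain ⟨z, hz⟩ := exists_evalEval_eq_zero_of_dvd_monic hGW hPG hP.not_isUnit t
  obtain ⟨z', hz'⟩ := exists_evalEval_eq_zero_of_dvd_monic hGW hQG hQ.not_isUnit t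
  have : IsAlgClosure k₀ W := ⟨inferInstance, inferInstance⟩
  have : Normal k₀ W := IsAlgClosure.normal k₀ W
  obtain ⟨σ, rfl⟩ : ∃ σ : W ≃ₐ[k₀] W, σ z = z' := by
    refine isConjRoot_iff_exists_algEquiv.1 (isConjRoot_def.2 ?_)
    rw [minpoly_eq_map_evalRingHom hG hirr (eq_zero_of_zero_dvd (hz' ▸ evalEval_dvd t z' hQG)),
      minpoly_eq_map_evalRingHom hG hirr (eq_zero_of_zero_dvd (hz ▸ evalEval_dvd t z hPG))]
  let Φ : W[X][X] ≃+* W[X][X] := mapEquiv (mapEquiv σ.toRingEquiv)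
  have hΦ (F) : Φ F = F.map (mapRingHom (σ : W →+* W)) := rfl
  have hΦG : Φ (G.map (mapRingHom (algebraMap k₀ W))) = G.map (mapRingHom (algebraMap k₀ W)) := by
    rw [hΦ, Polynomial.map_map, mapRingHom_comp]
    congr 2
    ext x
    simp
  have hΦz : (Φ P).evalEval t (σ z) = 0 := by
    have h := map_mapRingHom_evalEval (σ : W →+* W) P t z
    rw [hz, map_zero] at h
    simpa [hΦ, ht] using h
  have hΦPQ := associated_of_evalEval_eq_zero hsep ((MulEquiv.irreducible_iff Φ).2 hP) hQ
    (hΦG ▸ _root_.map_dvd Φ hPG) hQG hΦz hz'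
  rw [← natDegree_eq_of_degree_eq (degree_eq_degree_of_associated hΦPQ), hΦ,
    natDegree_map_eq_of_injective (map_injective _ σ.injective)]

theorem irreducible_or_exists_isRoot_of_prime_natDegree {G : k₀[X][X]} (hG : G.Monic) {τ : k₀}
    (hirr : Irreducible (G.map (evalRingHom τ)))
    (hder : derivative (G.map (evalRingHom τ)) ≠ 0) (hr : G.natDegree.Prime) :
    Irreducible (G.map (mapRingHom (algebraMap k₀ W))) ∨
      ∃ ρ, (G.map (mapRingHom (algebraMap k₀ W))).IsRoot ρ := by
  refine (irreducible_or_exists_natDegree_eq_one (by rwa [hG.natDegree_map])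
    fun _ _ => natDegree_eq_of_irreducible_map_evalRingHom hG hirr hder).imp_right ?_
  rintro ⟨P, hPG, hP⟩
  exact exists_isRoot_of_dvd_of_natDegree_eq_one (hG.map _) hPG hP

end FactorsOverAlgebraicClosure

section LevelCurve

variable {R S : Type*} [CommRing R] [CommRing S]

/-- The plane curve `G = c m` over `R`, where `m` only involves the inner variable. Translating the
level `c` is what produces new factors of such a curve out of a given one. -/
noncomputable def levelCurve (G : R[X][X]) (m : R[X]) (c : R) : R[X][X] :=
  G - C (C c * m)

variable {G : R[X][X]} {m : R[X]} {c : R}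

theorem map_levelCurve (φ : R →+* S) (G : R[X][X]) (m : R[X]) (c : R) :
    (levelCurve G m c).map (mapRingHom φ) =
      levelCurve (G.map (mapRingHom φ)) (m.map φ) (φ c) := by
  simp [levelCurve]

theorem map_evalRingHom_levelCurve (G : R[X][X]) (m : R[X]) (c τ : R) :
    (levelCurve G m c).map (evalRingHom τ) = G.map (evalRingHom τ) - C (c * m.eval τ) := by
  simp [levelCurve]

theorem natDegree_levelCurve (G : R[X][X]) (m : R[X]) (c : R) :
    (levelCurve G m c).natDegree = G.natDegree :=
  natDegree_sub_C

theorem monic_levelCurve (hG : G.Monic) (h : 0 < G.natDegree) (m : R[X]) (c : R) :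
    (levelCurve G m c).Monic :=
  hG.sub_of_left (degree_C_le.trans_lt (natDegree_pos_iff_degree_pos.1 h))

theorem isRoot_levelCurve_iff {ρ : R[X]} : (levelCurve G m c).IsRoot ρ ↔ G.eval ρ = C c * m := by
  rw [IsRoot.def, levelCurve, eval_sub, eval_C, sub_eq_zero]

theorem irreducible_map_C_sub_C_mul_X [IsDomain R] (G : R[X]) {a : R} (ha : IsUnit a) :
    Irreducible (G.map C - C (C a * X) : R[X][X]) := by
  obtain ⟨u, rfl⟩ := ha
  rw [← MulEquiv.irreducible_iff (Bivariate.swap (R := R))]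
  have hswap : Bivariate.swap (G.map C - C (C (u : R) * X) : R[X][X]) =
      C (C (-(u : R))) * (X - C (C (↑u⁻¹ : R) * G)) := by
    have hu : (C (C (u : R)) * C (C (↑u⁻¹ : R)) : R[X][X]) = 1 := by
      rw [← C_mul, ← C_mul, Units.mul_inv, C_1, C_1]
    simp only [_root_.map_sub, Bivariate.swap_map_C, _root_.map_mul, Bivariate.swap_C_C,
      Bivariate.swap_X, C_neg]
    linear_combination (-C G) * hu
  rw [hswap, irreducible_isUnit_mul (isUnit_C.2 (isUnit_C.2 u.isUnit.neg))]
  exact irreducible_X_sub_C _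

theorem exists_eval_ne_zero_and_map_evalRingHom_ne_zero [IsDomain R] [Infinite R] (hm : m ≠ 0)
    (hG : G ≠ 0) : ∃ τ : R, m.eval τ ≠ 0 ∧ G.map (evalRingHom τ) ≠ 0 := by
  obtain ⟨i, hi⟩ : ∃ i, G.coeff i ≠ 0 := by
    contrapose! hG
    exact Polynomial.ext (by simpa using hG)
  obtain ⟨τ, hτ⟩ : ∃ τ, (m * G.coeff i).eval τ ≠ 0 := by
    by_contra! h
    exact mul_ne_zero hm hi (Polynomial.funext (by simpa using h))
  rw [eval_mul] at hτ
  refine ⟨τ, left_ne_zero_of_mul hτ, fun h => right_ne_zero_of_mul hτ ?_⟩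
  simpa using congrArg (coeff · i) h

end LevelCurve

section GenericLevel

variable (L : Type*) [Field L]

/-- An algebraic closure of the field `L(θ)` of rational functions in the generic level `θ`. -/
abbrev LevelClosure := AlgebraicClosure (FractionRing L[X])

theorem algebraMap_levelClosure_injective :
    Function.Injective (algebraMap L[X] (LevelClosure L)) := by
  rw [IsScalarTower.algebraMap_eq L[X] (FractionRing L[X])]
  exact (algebraMap (FractionRing L[X]) (LevelClosure L)).injective.comp
    (IsFractionRing.injective _ _)

/-- The generic level `θ`, which is transcendental over `L`. -/
noncomputable def genericLevel : LevelClosure L := algebraMap L[X] (LevelClosure L) X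

variable {L}

theorem exists_algEquiv_genericLevel_add (κ : L) :
    ∃ σ : LevelClosure L ≃ₐ[L] LevelClosure L,
      σ (genericLevel L) = genericLevel L + algebraMap L (LevelClosure L) κ := by
  let e : FractionRing L[X] ≃+* FractionRing L[X] :=
    IsFractionRing.ringEquivOfRingEquiv (algEquivAevalXAddC κ).toRingEquiv
  let σ : LevelClosure L ≃+* LevelClosure L := IsAlgClosure.equivOfEquiv _ _ e
  have hσ (P : L[X]) : σ (algebraMap L[X] (LevelClosure L) P) =
      algebraMap L[X] (LevelClosure L) (P.comp (X + C κ)) := by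
    rw [IsScalarTower.algebraMap_apply L[X] (FractionRing L[X]) (LevelClosure L),
      IsAlgClosure.equivOfEquiv_algebraMap, IsFractionRing.ringEquivOfRingEquiv_algebraMap,
      IsScalarTower.algebraMap_apply L[X] (FractionRing L[X]) (LevelClosure L)]
    rfl
  have hC (x : L) : algebraMap L[X] (LevelClosure L) (C x) = algebraMap L (LevelClosure L) x :=
    (IsScalarTower.algebraMap_apply L L[X] (LevelClosure L) x).symm
  refine ⟨AlgEquiv.ofRingEquiv (f := σ) fun x => ?_, ?_⟩
  · rw [← hC, hσ, C_comp]
  · rw [AlgEquiv.ofRingEquiv_apply, genericLevel, hσ, X_comp, map_add, hC]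

theorem irreducible_or_exists_isRoot_levelCurve [Infinite L] {G : L[X][X]} (hG : G.Monic)
    (hr : G.natDegree.Prime) (hder : derivative G ≠ 0) {m : L[X]} (hm : m ≠ 0) :
    Irreducible (levelCurve (G.map (mapRingHom (algebraMap L (LevelClosure L))))
        (m.map (algebraMap L (LevelClosure L))) (genericLevel L)) ∨
      ∃ ρ, (levelCurve (G.map (mapRingHom (algebraMap L (LevelClosure L))))
        (m.map (algebraMap L (LevelClosure L))) (genericLevel L)).IsRoot ρ := by
  obtain ⟨τ, hmτ, hderτ⟩ := exists_eval_ne_zero_and_map_evalRingHom_ne_zero hm hder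
  let K := FractionRing L[X]
  let i : L →+* K := algebraMap L K
  have hi (x : L) : algebraMap L[X] K (C x) = i x :=
    (IsScalarTower.algebraMap_apply L L[X] K x).symm
  let Γ : K[X][X] := levelCurve (G.map (mapRingHom i)) (m.map i) (algebraMap L[X] K X)
  have hΓdeg : Γ.natDegree = G.natDegree := by rw [natDegree_levelCurve, hG.natDegree_map]
  have hΓ : Γ.Monic := monic_levelCurve (hG.map _) (by rw [hG.natDegree_map]; exact hr.pos) _ _
  have hΓτ : Γ.map (evalRingHom (i τ)) =
      ((G.map (evalRingHom τ)).map C - C (C (m.eval τ) * X) : L[X][X]).map (algebraMap L[X] K) := by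
    have hcomp : (evalRingHom (i τ)).comp (mapRingHom i) =
        (algebraMap L[X] K).comp (C.comp (evalRingHom τ)) := by
      ext <;> simp [hi]
    simp only [Γ, map_evalRingHom_levelCurve, Polynomial.map_sub, Polynomial.map_map,
      eval_map_apply, _root_.map_mul, Polynomial.map_mul, map_C, hi, hcomp]
    ring
  have hirr : Irreducible (Γ.map (evalRingHom (i τ))) := by
    have hmon := hΓ.map (evalRingHom (i τ))
    rw [hΓτ] at hmon ⊢
    rw [← Monic.irreducible_iff_irreducible_map_fraction_map]
    · exact irreducible_map_C_sub_C_mul_X _ hmτ.isUnit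
    · exact monic_of_injective (IsFractionRing.injective L[X] K) hmon
  have hderΓ : derivative (Γ.map (evalRingHom (i τ))) ≠ 0 := by
    rw [hΓτ, derivative_map, derivative_sub, derivative_C, sub_zero, derivative_map, derivative_map,
      Ne, Polynomial.map_eq_zero_iff (IsFractionRing.injective _ _),
      Polynomial.map_eq_zero_iff C_injective]
    exact hderτ
  have hΓW : Γ.map (mapRingHom (algebraMap K (LevelClosure L))) =
      levelCurve (G.map (mapRingHom (algebraMap L (LevelClosure L))))
        (m.map (algebraMap L (LevelClosure L))) (genericLevel L) := by
    rw [map_levelCurve, Polynomial.map_map, mapRingHom_comp, Polynomial.map_map,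
      ← IsScalarTower.algebraMap_eq, ← IsScalarTower.algebraMap_apply]
    rfl
  rw [← hΓW]
  exact irreducible_or_exists_isRoot_of_prime_natDegree hΓ hirr hderΓ (hΓdeg ▸ hr)

end GenericLevel

section RootsOfShifts

variable {W : Type*} [Field W]

theorem exists_infinite_setOf_eq_C_mul_of_dvd {ι : Type*} [Infinite ι] {m : W[X]} (hm : m ≠ 0)
    {d : ι → W[X]} (hd : ∀ i, d i ∣ m) :
    ∃ η : W[X], η ≠ 0 ∧ {i | ∃ ω, d i = C ω * η}.Infinite := by
  have : Fintype {x : Associates W[X] // x ∣ Associates.mk m} :=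
    UniqueFactorizationMonoid.fintypeSubtypeDvd _ (by simpa using hm)
  let divisorClass (i : ι) : {x : Associates W[X] // x ∣ Associates.mk m} :=
    ⟨Associates.mk (d i), Associates.mk_le_mk_of_dvd (hd i)⟩
  obtain ⟨y, hy⟩ := Finite.exists_infinite_fiber divisorClass
  obtain ⟨i₀, hi₀⟩ := hy.nonempty
  refine ⟨d i₀, ne_zero_of_dvd_ne_zero hm (hd i₀), (Set.infinite_coe_iff.1 hy).mono ?_⟩
  intro i hi
  have hassoc : Associated (d i₀) (d i) :=
    Associates.mk_eq_mk_iff_associated.1 (congrArg Subtype.val (hi₀.trans hi.symm))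
  obtain ⟨u, hu⟩ := hassoc
  obtain ⟨ω, -, hω⟩ := Polynomial.isUnit_iff.1 u.isUnit
  exact ⟨ω, by rw [hω, ← hu, mul_comm]⟩

theorem exists_coeff_eq_C_mul_of_infinite {m : W[X]} {H : W[X][X]}
    (hH : {ω : W | ∃ b, H.eval (C ω) = C b * m}.Infinite) (j : ℕ) : ∃ a, H.coeff j = C a * m := by
  by_contra! hj
  have hspan : H.coeff j ∉ Submodule.span W {m} := fun h => by
    obtain ⟨a, ha⟩ := Submodule.mem_span_singleton.1 h
    exact hj a (by rw [← ha, smul_eq_C_mul])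
  obtain ⟨φ, hφj, hφ⟩ := Submodule.exists_le_ker_of_notMem hspan
  have hφm : φ m = 0 := hφ (Submodule.mem_span_singleton_self m)
  let Φ : W[X] := ∑ i ∈ Finset.range (H.natDegree + 1), C (φ (H.coeff i)) * X ^ i
  have hΦeval (ω : W) : Φ.eval ω = φ (H.eval (C ω)) := by
    rw [eval_eq_sum_range (p := H), map_sum, eval_finsetSum]
    refine Finset.sum_congr rfl fun i _ => ?_
    rw [eval_mul, eval_C, eval_pow, eval_X, ← C_pow, mul_comm (H.coeff i), ← smul_eq_C_mul,
      map_smul, smul_eq_mul, mul_comm]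
  have hΦ : Φ = 0 := by
    refine eq_zero_of_infinite_isRoot Φ (hH.mono ?_)
    rintro ω ⟨b, hb⟩
    rw [Set.mem_ofPred_eq, IsRoot.def, hΦeval, hb, ← smul_eq_C_mul, map_smul, hφm, smul_zero]
  have hΦj : Φ.coeff j = φ (H.coeff j) := by
    simp only [Φ, finsetSum_coeff, coeff_C_mul_X_pow, Finset.sum_ite_eq, Finset.mem_range,
      ite_eq_left_iff, not_lt]
    intro h
    rw [coeff_eq_zero_of_natDegree_lt h, map_zero]
  exact hφj (by rw [← hΦj, hΦ, coeff_zero])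

theorem exists_eq_C_mul_map_C_of_infinite {m : W[X]} {H : W[X][X]}
    (hH : {ω : W | ∃ b, H.eval (C ω) = C b * m}.Infinite) : ∃ h : W[X], H = C m * h.map C := by
  choose a ha using exists_coeff_eq_C_mul_of_infinite hH
  refine ⟨∑ i ∈ Finset.range (H.natDegree + 1), C (a i) * X ^ i, Polynomial.ext fun j => ?_⟩
  rw [coeff_C_mul, coeff_map, finsetSum_coeff]
  simp only [coeff_C_mul_X_pow, Finset.sum_ite_eq, Finset.mem_range]
  split_ifs with hj
  · rw [ha, mul_comm]
  · rw [coeff_eq_zero_of_natDegree_lt (by omega), C_0, mul_zero]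

theorem exists_comp_eq_of_infinite_roots {ι : Type*} [Infinite ι] {G : W[X][X]} {m : W[X]}
    (hm : m ≠ 0) {ρ₀ : W[X]} {c₀ : W} (hρ₀ : (levelCurve G m c₀).IsRoot ρ₀) {ρ : ι → W[X]}
    {κ : ι → W} (hκ : Function.Injective κ) (hκ₀ : ∀ i, κ i ≠ 0)
    (hρ : ∀ i, (levelCurve G m (c₀ + κ i)).IsRoot (ρ i)) :
    ∃ η h : W[X], η ≠ 0 ∧ G.comp (C ρ₀ + C η * X) = C m * h.map C := by
  simp only [isRoot_levelCurve_iff] at hρ₀ hρ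
  have hdvd (i : ι) : ρ i - ρ₀ ∣ m := by
    have h := sub_dvd_eval_sub (ρ i) ρ₀ G
    rw [hρ, hρ₀, C_add, add_mul, add_sub_cancel_left] at h
    exact (isUnit_C.2 (hκ₀ i).isUnit).dvd_mul_left.1 h
  obtain ⟨η, hη, hinf⟩ := exists_infinite_setOf_eq_C_mul_of_dvd hm hdvd
  choose! ω hω using fun i (hi : i ∈ {i | ∃ ω, ρ i - ρ₀ = C ω * η}) => hi
  have heval {i} (hi : i ∈ {i | ∃ ω, ρ i - ρ₀ = C ω * η}) :
      (G.comp (C ρ₀ + C η * X)).eval (C (ω i)) = C (c₀ + κ i) * m := by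
    rw [← hρ, eval_comp, sub_eq_iff_eq_add'.1 (hω i hi)]
    simp only [eval_add, eval_C, eval_mul, eval_X, mul_comm η]
  have hinj : Set.InjOn ω {i | ∃ ω, ρ i - ρ₀ = C ω * η} := by
    intro i hi j hj hij
    have h := (heval hi).symm.trans (hij ▸ heval hj)
    exact hκ (add_left_cancel (C_injective (mul_right_cancel₀ hm h)))
  obtain ⟨h, hh⟩ := exists_eq_C_mul_map_C_of_infinite (m := m) <|
    (hinf.image hinj).mono <| Set.image_subset_iff.2 fun i hi => ⟨_, heval hi⟩
  exact ⟨η, h, hη, hh⟩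

theorem exists_comp_eq_of_isRoot_levelCurve {L : Type*} [Field L] [Infinite L] (G : L[X][X])
    {m : L[X]} (hm : m ≠ 0) {ρ₀ : (LevelClosure L)[X]}
    (hρ₀ : (levelCurve (G.map (mapRingHom (algebraMap L (LevelClosure L))))
      (m.map (algebraMap L (LevelClosure L))) (genericLevel L)).IsRoot ρ₀) :
    ∃ η h : (LevelClosure L)[X], η ≠ 0 ∧
      (G.map (mapRingHom (algebraMap L (LevelClosure L)))).comp (C ρ₀ + C η * X) =
        C (m.map (algebraMap L (LevelClosure L))) * h.map C := by
  have hshift (κ : {κ : L // κ ≠ 0}) : ∃ ρ,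
      (levelCurve (G.map (mapRingHom (algebraMap L (LevelClosure L))))
        (m.map (algebraMap L (LevelClosure L)))
        (genericLevel L + algebraMap L (LevelClosure L) κ)).IsRoot ρ := by
    obtain ⟨σ, hσ⟩ := exists_algEquiv_genericLevel_add κ.1
    have hcomp : (σ : LevelClosure L →+* LevelClosure L).comp (algebraMap L (LevelClosure L)) =
        algebraMap L (LevelClosure L) := RingHom.ext σ.commutes
    refine ⟨mapRingHom (σ : LevelClosure L →+* LevelClosure L) ρ₀, ?_⟩
    have h := hρ₀.map (f := mapRingHom (σ : LevelClosure L →+* LevelClosure L))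
    rwa [map_levelCurve, Polynomial.map_map, mapRingHom_comp, Polynomial.map_map, hcomp,
      RingHom.coe_coe, hσ] at h
  choose ρ hρ using hshift
  have : Infinite {κ : L // κ ≠ 0} := (Set.finite_singleton (0 : L)).infinite_compl.to_subtype
  exact exists_comp_eq_of_infinite_roots
    ((Polynomial.map_ne_zero_iff (algebraMap L _).injective).2 hm) hρ₀
    ((algebraMap L _).injective.comp Subtype.val_injective)
    (fun κ => (_root_.map_ne_zero _).2 κ.2) hρ

end RootsOfShifts

section Decomposition

variable {W : Type*} [Field W]

theorem valuation_aeval_le_one {Γ K : Type*} [LinearOrderedCommGroupWithZero Γ] [Field K]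
    [Algebra W K] {v : Valuation K Γ} [v.IsTrivialOn W] {x : K} (hx : v x ≤ 1) (h : W[X]) :
    v (aeval x h) ≤ 1 := by
  rw [aeval_eq_sum_range]
  refine v.map_sum_le fun i _ => ?_
  rw [Algebra.smul_def, _root_.map_mul, map_pow]
  refine mul_le_one' ?_ (pow_le_one₀ zero_le hx)
  rcases eq_or_ne (h.coeff i) 0 with h0 | h0
  · simp [h0]
  · exact (Valuation.IsTrivialOn.eq_one (v := v) _ h0).le

open Classical in
theorem inftyValuation_C_mul_X_pow_add {α β : W} (hα : α ≠ 0) {B : ℕ} (hB : B ≠ 0) :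
    RatFunc.inftyValuation W (RatFunc.C α * RatFunc.X ^ B + RatFunc.C β * (RatFunc.X ^ B)⁻¹) =
      WithZero.exp (B : ℤ) := by
  have hpow : RatFunc.inftyValuation W (RatFunc.X ^ B) = WithZero.exp (B : ℤ) := by
    rw [← zpow_natCast, RatFunc.inftyValuation.X_zpow]
  have hone : 1 < WithZero.exp (B : ℤ) := by
    rw [← WithZero.exp_zero, WithZero.exp_lt_exp]
    omega
  have hpole : RatFunc.inftyValuation W (RatFunc.C α * RatFunc.X ^ B) = WithZero.exp (B : ℤ) := by
    rw [_root_.map_mul, hpow, RatFunc.inftyValuation.C W hα, one_mul]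
  have hzero : RatFunc.inftyValuation W (RatFunc.C β * (RatFunc.X ^ B)⁻¹) ≤ 1 := by
    rw [_root_.map_mul, map_inv₀, hpow]
    refine mul_le_one' ?_ (inv_le_one_of_one_le₀ hone.le)
    rcases eq_or_ne β 0 with rfl | hβ
    · simp
    · exact (RatFunc.inftyValuation.C W hβ).le
  rw [Valuation.map_add_eq_of_lt_left, hpole]
  rw [hpole]
  exact hzero.trans_lt hone

section

variable {h : W[X]} {G : RatFunc W} {α β : W} {B : ℕ}

open Classical in
theorem one_lt_inftyValuation_of_aeval_eq (hα : α ≠ 0) (hB : B ≠ 0)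
    (hG : aeval G h = RatFunc.C α * RatFunc.X ^ B + RatFunc.C β * (RatFunc.X ^ B)⁻¹) :
    1 < RatFunc.inftyValuation W G := by
  by_contra! hle
  have hone := valuation_aeval_le_one hle h
  rw [hG, inftyValuation_C_mul_X_pow_add hα hB, ← WithZero.exp_zero, WithZero.exp_le_exp] at hone
  omega

theorem transcendental_of_aeval_eq (hα : α ≠ 0) (hB : B ≠ 0)
    (hG : aeval G h = RatFunc.C α * RatFunc.X ^ B + RatFunc.C β * (RatFunc.X ^ B)⁻¹) :
    Transcendental W G := by
  classical
  have hpole := one_lt_inftyValuation_of_aeval_eq hα hB hG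
  refine Valuation.transcendental_of_ne_one (v := RatFunc.inftyValuation W) W G ?_ hpole.ne'
  rintro rfl
  simp at hpole

theorem natDegree_dvd_of_aeval_eq (hα : α ≠ 0)
    (hG : aeval G h = RatFunc.C α * RatFunc.X ^ B + RatFunc.C β * (RatFunc.X ^ B)⁻¹) :
    h.natDegree ∣ B := by
  classical
  rcases eq_or_ne B 0 with rfl | hB
  · exact dvd_zero _
  have hpole := one_lt_inftyValuation_of_aeval_eq hα hB hG
  have hval := congrArg (RatFunc.inftyValuation W) hG
  rw [inftyValuation_C_mul_X_pow_add hα hB] at hval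
  have h0 : h ≠ 0 := by
    rintro rfl
    rw [_root_.map_zero, _root_.map_zero] at hval
    exact WithZero.exp_ne_zero hval.symm
  have hG0 : G ≠ 0 := by
    rintro rfl
    simp at hpole
  rw [valuation_aeval_eq_valuation_X_pow_natDegree_of_one_lt_valuation_X G hpole h0,
    RatFunc.inftyValuation_apply, RatFunc.inftyValuation_of_nonzero W hG0, ← WithZero.exp_nsmul,
    WithZero.exp_inj, nsmul_eq_mul] at hval
  exact Int.natCast_dvd_natCast.1 (Dvd.intro _ hval)

end

variable {p : ℕ} [Fact p.Prime] [CharP W p]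

theorem aeval_map_frobenius {F : Type*} [Field F] [CharP F p] [Algebra W F] (h : W[X]) (G : F) :
    aeval G (h.map (frobenius W p)) = (h.map (algebraMap W F)).eval₂ (frobenius F p) G := by
  rw [aeval_def, eval₂_map, eval₂_map, (algebraMap W F).frobenius_comm]

variable [PerfectRing W p]

theorem exists_map_frobenius_eq (h : W[X]) : ∃ h₁ : W[X], h₁.map (frobenius W p) = h := by
  refine ⟨h.map (frobeniusEquiv W p).symm, ?_⟩
  rw [Polynomial.map_map]
  convert Polynomial.map_id
  ext x
  exact frobenius_apply_frobeniusEquiv_symm W p x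

theorem exists_pow_eq_of_aeval_eq_pow {F : Type*} [Field F] [CharP F p] [Algebra W F] {h : W[X]}
    {G R : F} (hG : aeval G h = R ^ p) (hder : aeval G (derivative h) ≠ 0) : ∃ G₁, G₁ ^ p = G := by
  by_contra! hpow
  have hirr : Irreducible (X ^ p - C G : F[X]) := X_pow_sub_C_irreducible_of_prime Fact.out hpow
  obtain ⟨h, rfl⟩ := exists_map_frobenius_eq (p := p) h
  rw [derivative_map] at hder
  rw [aeval_map_frobenius] at hG hder
  have hroot : (X ^ p - C G : F[X]).eval₂ (frobenius F p) G = 0 := by simp [frobenius_def]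
  have hdvd : X ^ p - C G ∣ h.map (algebraMap W F) - C R := by
    rw [hirr.dvd_iff_not_isCoprime]
    rintro ⟨u, v, huv⟩
    have h1 := congrArg (eval₂ (frobenius F p) G) huv
    rw [eval₂_add, eval₂_mul, eval₂_mul, hroot, eval₂_sub, hG, eval₂_C] at h1
    simp [frobenius_def] at h1
  obtain ⟨q, hq⟩ := hdvd
  have hderq := congrArg (fun P => (derivative P).eval₂ (frobenius F p) G) hq
  simp only [derivative_sub, derivative_C, sub_zero, derivative_map, derivative_mul,
    derivative_X_pow, CharP.cast_eq_zero, C_0, zero_mul, zero_add, eval₂_mul, hroot] at hderq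
  exact hder hderq

theorem aeval_ne_C_mul_X_pow_add {h : W[X]} (hdeg : h.natDegree = p) (hder : derivative h ≠ 0)
    {B : ℕ} (hB : B ≠ 0) (G : RatFunc W) {α : W} (hα : α ≠ 0) (β : W) :
    aeval G h ≠ RatFunc.C α * RatFunc.X ^ B + RatFunc.C β * (RatFunc.X ^ B)⁻¹ := by
  induction B using Nat.strong_induction_on generalizing h G α β with
  | _ B ih =>
  intro hG
  have : CharP (RatFunc W) p := charP_of_injective_algebraMap (algebraMap W (RatFunc W)).injective p
  obtain ⟨B, rfl⟩ := hdeg ▸ natDegree_dvd_of_aeval_eq hα hG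
  obtain ⟨α, rfl⟩ := surjective_frobenius W p α
  obtain ⟨β, rfl⟩ := surjective_frobenius W p β
  have hpow : aeval G h = (RatFunc.C α * RatFunc.X ^ B + RatFunc.C β * (RatFunc.X ^ B)⁻¹) ^ p := by
    rw [hG, add_pow_char, mul_pow, mul_pow, frobenius_def, frobenius_def, map_pow, map_pow, inv_pow,
      ← pow_mul, mul_comm p B]
  have hderG : aeval G (derivative h) ≠ 0 := fun h0 =>
    hder (transcendental_iff.1 (transcendental_of_aeval_eq hα hB hG) _ h0)
  obtain ⟨G, rfl⟩ := exists_pow_eq_of_aeval_eq_pow hpow hderG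
  obtain ⟨h, rfl⟩ := exists_map_frobenius_eq (p := p) h
  rw [aeval_map_frobenius, ← frobenius_def, ← frobenius_def, eval₂_at_apply,
    (frobenius_inj (RatFunc W) p).eq_iff, eval_map_algebraMap] at hpow
  rw [derivative_map] at hder
  have hB' : B ≠ 0 := right_ne_zero_of_mul hB
  refine ih B ?_ (by simpa using hdeg) ?_ hB' G (fun h0 => hα (by simp [h0])) β hpow
  · exact lt_mul_of_one_lt_left (Nat.pos_of_ne_zero hB') (Fact.out : p.Prime).one_lt
  · rintro h0
    simp [h0] at hder

end Decomposition

section GenericIrreducibility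

section

variable {W : Type*} [Field W]

theorem transcendental_X_add_inv_X : Transcendental W (RatFunc.X + RatFunc.X⁻¹ : RatFunc W) :=
  transcendental_of_aeval_eq (h := X) (α := 1) (β := 1) (B := 1) one_ne_zero one_ne_zero (by simp)

theorem exists_algHom_X_eq_inv_X : ∃ σ : RatFunc W →ₐ[W] RatFunc W, σ RatFunc.X = RatFunc.X⁻¹ := by
  have h : Transcendental W (RatFunc.X⁻¹ : RatFunc W) :=
    fun h => RatFunc.transcendental_X (IsAlgebraic.inv_iff.1 h)
  exact ⟨(IntermediateField.val _).comp (RatFunc.algEquivOfTranscendental _ h).toAlgHom, by simp⟩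

theorem aeval_mul_ne_aeval_X_add_inv_X {α : W} (hα : α ≠ α⁻¹) {ℓ : W[X]} (hℓ : ℓ ≠ 0) (P : W[X]) :
    aeval (RatFunc.X + RatFunc.X⁻¹) ℓ * (RatFunc.C α * RatFunc.X + (RatFunc.C α * RatFunc.X)⁻¹) ≠
      aeval (RatFunc.X + RatFunc.X⁻¹) P := by
  intro h
  obtain ⟨σ, hσ⟩ := exists_algHom_X_eq_inv_X (W := W)
  have hσT (Q : W[X]) : σ (aeval (RatFunc.X + RatFunc.X⁻¹) Q) =
      aeval (RatFunc.X + RatFunc.X⁻¹) Q := by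
    rw [← aeval_algHom_apply, map_add, map_inv₀, hσ, inv_inv, add_comm]
  have hσC : σ (RatFunc.C α) = RatFunc.C α := σ.commutes α
  have hℓT : aeval (RatFunc.X + RatFunc.X⁻¹ : RatFunc W) ℓ ≠ 0 :=
    mt (transcendental_iff.1 transcendental_X_add_inv_X ℓ) hℓ
  have hsymm := congrArg σ h
  rw [_root_.map_mul, hσT, hσT, ← h, mul_right_inj' hℓT, map_add, map_inv₀, _root_.map_mul, hσ, hσC,
    mul_inv, mul_inv, inv_inv] at hsymm
  have hprod : RatFunc.C (α - α⁻¹) * (RatFunc.X - RatFunc.X⁻¹) = 0 := by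
    rw [_root_.map_sub, map_inv₀]
    linear_combination -hsymm
  rcases mul_eq_zero.1 hprod with h0 | h0
  · rw [_root_.map_eq_zero, sub_eq_zero] at h0
    exact hα h0
  · refine RatFunc.transcendental_X (K := W) ⟨X ^ 2 - C 1, X_pow_sub_C_ne_zero two_pos 1, ?_⟩
    rw [_root_.map_sub, aeval_X_pow, aeval_C, map_one, pow_two]
    nth_rw 2 [sub_eq_zero.1 h0]
    rw [mul_inv_cancel₀ RatFunc.X_ne_zero, sub_self]

theorem aeval_eq_eval₂_of_integralNormalization_comp_eq {A F : Type*} [CommRing A] [Field F]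
    [Algebra W F] {f : A[X]} (hf : 0 < f.natDegree) {φ : A →+* W[X]} {ρ η h : W[X]}
    (hc : (f.integralNormalization.map φ).comp (C ρ + C η * X) =
      C (φ (f.leadingCoeff ^ (f.natDegree - 1))) * h.map C)
    {T : F} (hℓ : aeval T (φ f.leadingCoeff) ≠ 0) (hη : aeval T η ≠ 0) (U : F) :
    aeval ((aeval T (φ f.leadingCoeff) * U - aeval T ρ) / aeval T η) h =
      f.eval₂ (((aeval T : W[X] →ₐ[W] F) : W[X] →+* F).comp φ) U := by
  set ev : W[X] →+* F := ((aeval T : W[X] →ₐ[W] F) : W[X] →+* F)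
  replace hℓ : ev (φ f.leadingCoeff) ≠ 0 := hℓ
  replace hη : ev η ≠ 0 := hη
  set z : F := (ev (φ f.leadingCoeff) * U - ev ρ) / ev η with hz
  have harg : ev ρ + ev η * z = ev.comp φ f.leadingCoeff * U := by
    rw [hz, mul_comm, div_mul_cancel₀ _ hη, RingHom.comp_apply, add_sub_cancel]
  have hC : ev.comp C = algebraMap W F := by
    ext x
    simp [ev]
  have heval := congrArg (eval₂ ev z) hc
  rw [eval₂_comp, eval₂_map, eval₂_mul, eval₂_C, eval₂_add, eval₂_mul, eval₂_C, eval₂_C, eval₂_X,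
    harg, eval₂_map, hC, integralNormalization_eval₂_leadingCoeff_mul hf, _root_.map_pow,
    _root_.map_pow] at heval
  exact (mul_left_cancel₀ (pow_ne_zero _ hℓ) heval).symm

theorem natDegree_eq_and_derivative_ne_zero_of_comp_eq {G : W[X][X]} {ρ η m h : W[X]} (hη : η ≠ 0)
    (hm : m ≠ 0) (hder : derivative G ≠ 0) (hc : G.comp (C ρ + C η * X) = C m * h.map C) :
    h.natDegree = G.natDegree ∧ derivative h ≠ 0 := by
  have hlin : (C ρ + C η * X : W[X][X]).natDegree = 1 := by
    rw [add_comm]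
    exact natDegree_linear hη
  constructor
  · have h := congrArg natDegree hc
    rw [natDegree_comp, hlin, natDegree_C_mul hm, natDegree_map_eq_of_injective C_injective] at h
    omega
  · intro h0
    have h := congrArg derivative hc
    rw [derivative_comp, derivative_C_mul, derivative_map, h0, Polynomial.map_zero, mul_zero] at h
    rcases mul_eq_zero.1 h with h | h
    · exact hη (by simpa using h)
    · rcases comp_eq_zero_iff.1 h with h | ⟨-, h⟩
      · exact hder h
      · rw [h, natDegree_C] at hlin
        omega

theorem exists_eq_C_of_aeval_eq_C {h : W[X]} (hdeg : 0 < h.natDegree) {z : RatFunc W} {c : W}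
    (hz : aeval z h = RatFunc.C c) : ∃ w, z = RatFunc.C w := by
  by_contra hne
  have h0 := transcendental_iff.1 (z.transcendental_of_ne_C hne) (h - C c)
    (by rw [_root_.map_sub, hz, aeval_C, RatFunc.algebraMap_eq_C, sub_self])
  rw [sub_eq_zero.1 h0, natDegree_C] at hdeg
  exact hdeg.false

theorem aeval_ne_C_mul_X_zpow_add {p : ℕ} [Fact p.Prime] [CharP W p] [PerfectRing W p] {h : W[X]}
    (hdeg : h.natDegree = p) (hder : derivative h ≠ 0) (G : RatFunc W) {γ : W} (hγ : γ ≠ 0) {n : ℤ}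
    (hn : n ≠ 0) :
    aeval G h ≠ RatFunc.C γ * RatFunc.X ^ n + RatFunc.C γ⁻¹ * (RatFunc.X ^ n)⁻¹ := by
  obtain ⟨n, rfl | rfl⟩ := n.eq_nat_or_neg
  · rw [zpow_natCast]
    exact aeval_ne_C_mul_X_pow_add hdeg hder (by omega) G hγ γ⁻¹
  · rw [_root_.zpow_neg, zpow_natCast, inv_inv, add_comm]
    exact aeval_ne_C_mul_X_pow_add hdeg hder (by omega) G (inv_ne_zero hγ) γ

end

section

variable {R W : Type} [CommRing R] [IsDomain R] [Field W] [IsAlgClosed W] [Algebra R W]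
  [Algebra R[X] W] [IsScalarTower R R[X] W] [FaithfulSMul R[X] W] {r : ℕ} {a b : Fin r → ℤ}
  {f : R[X][X][X]}

variable (R W) in
theorem exists_algebraMap_X_eq_add_inv :
    ∃ α : Wˣ, algebraMap R[X] W X = α + (α : W)⁻¹ ∧ (α : W) ≠ (α : W)⁻¹ := by
  obtain ⟨α, hα⟩ := exists_eq_unit_add_inv (algebraMap R[X] W X)
  have : FaithfulSMul R W := FaithfulSMul.trans R R[X] W
  have htr : Transcendental R ((α : W) + (α : W)⁻¹) := by
    rw [← hα, transcendental_algebraMap_iff (FaithfulSMul.algebraMap_injective R[X] W)]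
    exact Polynomial.transcendental_X R
  refine ⟨α, hα, fun h => not_isOfFinOrder_of_transcendental htr ?_⟩
  refine isOfFinOrder_iff_pow_eq_one.2 ⟨2, two_pos, Units.ext ?_⟩
  rw [Units.val_pow_eq_pow_val, pow_two]
  nth_rw 2 [h]
  exact mul_inv_cancel₀ α.ne_zero

omit [IsDomain R] [IsAlgClosed W] [FaithfulSMul R[X] W] in
theorem IsNestedTracePolynomial.eval₂_X_add_inv_X (hf : IsNestedTracePolynomial (wordOf a b) f)
    {α : Wˣ} (hα : algebraMap R[X] W X = α + (α : W)⁻¹) :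
    f.eval₂ (((aeval (RatFunc.X + RatFunc.X⁻¹) : W[X] →ₐ[W] RatFunc W) : W[X] →+* RatFunc W).comp
        (mapRingHom (algebraMap R[X] W)))
        (RatFunc.C (α : W) * RatFunc.X + (RatFunc.C (α : W) * RatFunc.X)⁻¹) =
      RatFunc.C ((α : W) ^ (∑ i, a i)) * RatFunc.X ^ (∑ i, b i) +
        RatFunc.C ((α : W) ^ (∑ i, a i))⁻¹ * (RatFunc.X ^ (∑ i, b i))⁻¹ := by
  let _ : Algebra R (RatFunc W) := ((algebraMap W (RatFunc W)).comp (algebraMap R W)).toAlgebra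
  have h := hf.eval₃_add_inv (F := RatFunc W) (α := RatFunc.C (α : W)) (μ := RatFunc.X)
    (by simp) RatFunc.X_ne_zero
  rw [mul_inv (_ ^ _), ← map_zpow₀, ← map_inv₀, ← map_inv₀] at h
  rw [← h, eval₃, coe_eval₂RingHom]
  congr 1
  ext x
  · have hx := congrArg RatFunc.C (IsScalarTower.algebraMap_apply R R[X] W x).symm
    simpa [RingHom.algebraMap_toAlgebra] using hx
  · simp [hα]
  · simp

theorem IsNestedTracePolynomial.integralNormalization_comp_ne
    (hf : IsNestedTracePolynomial (wordOf a b) f) (hr : r.Prime) (ha : ∀ i, a i ≠ 0)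
    (hb : ∀ i, b i ≠ 0) (hB : ∑ i, b i = 0 ∨ CharP R r)
    (hder : derivative f.integralNormalization ≠ 0) {η : W[X]} (hη : η ≠ 0) (ρ h : W[X]) :
    (f.integralNormalization.map (mapRingHom (algebraMap R[X] W))).comp (C ρ + C η * X) ≠
      C ((f.leadingCoeff ^ (f.natDegree - 1)).map (algebraMap R[X] W)) * h.map C := by
  intro hc
  have hdeg := hf.natDegree_eq hr.ne_zero ha hb
  have hinj := FaithfulSMul.algebraMap_injective R[X] W
  have hf0 : f ≠ 0 := ne_zero_of_natDegree_gt (hdeg ▸ hr.pos)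
  have hℓ : f.leadingCoeff.map (algebraMap R[X] W) ≠ 0 :=
    (Polynomial.map_ne_zero_iff hinj).2 (leadingCoeff_ne_zero.2 hf0)
  obtain ⟨hdeg_h, hder_h⟩ := natDegree_eq_and_derivative_ne_zero_of_comp_eq hη
    (by rw [Polynomial.map_pow]; exact pow_ne_zero _ hℓ)
    (by rwa [derivative_map, Polynomial.map_ne_zero_iff (map_injective _ hinj)]) hc
  rw [natDegree_map_eq_of_injective (map_injective _ hinj), natDegree_integralNormalization, hdeg]
    at hdeg_h
  obtain ⟨α, hα, hα'⟩ := exists_algebraMap_X_eq_add_inv R W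
  have hT {P : W[X]} (hP : P ≠ 0) : aeval (RatFunc.X + RatFunc.X⁻¹ : RatFunc W) P ≠ 0 :=
    mt (transcendental_iff.1 transcendental_X_add_inv_X P) hP
  have hz := aeval_eq_eval₂_of_integralNormalization_comp_eq (hdeg ▸ hr.pos) hc (hT hℓ) (hT hη)
    (RatFunc.C (α : W) * RatFunc.X + (RatFunc.C (α : W) * RatFunc.X)⁻¹)
  rw [coe_mapRingHom, hf.eval₂_X_add_inv_X hα] at hz
  by_cases hB0 : ∑ i, b i = 0
  · rw [hB0, zpow_zero, mul_one, inv_one, mul_one, ← _root_.map_add] at hz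
    obtain ⟨w, hw⟩ := exists_eq_C_of_aeval_eq_C (hdeg_h ▸ hr.pos) hz
    refine aeval_mul_ne_aeval_X_add_inv_X hα' hℓ (ρ + C w * η) ?_
    rw [div_eq_iff (hT hη)] at hw
    rw [map_add, _root_.map_mul, aeval_C, RatFunc.algebraMap_eq_C, ← hw]
    ring
  · have := hB.resolve_left hB0
    have : Fact r.Prime := ⟨hr⟩
    have : CharP W r :=
      charP_of_injective_algebraMap (FaithfulSMul.trans R R[X] W).algebraMap_injective r
    exact aeval_ne_C_mul_X_zpow_add hdeg_h hder_h _ (zpow_ne_zero _ α.ne_zero) hB0 hz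

end

variable {R : Type} [CommRing R] [IsDomain R] {r : ℕ} {a b : Fin r → ℤ} {f : R[X][X][X]}

/-- The family of plane curves `f(s, ·, ·) = c` over `R[s][c]`, made monic in the outer variable. -/
noncomputable def traceCurve {R : Type*} [CommRing R] (f : R[X][X][X]) : R[X][X][X][X] :=
  levelCurve (f.integralNormalization.map (mapRingHom C))
    ((f.leadingCoeff ^ (f.natDegree - 1)).map C) X

theorem IsNestedTracePolynomial.irreducible_map_traceCurve
    (hf : IsNestedTracePolynomial (wordOf a b) f) (hr : r.Prime) (ha : ∀ i, a i ≠ 0)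
    (hb : ∀ i, b i ≠ 0) (hB : ∑ i, b i = 0 ∨ CharP R r)
    (hder : derivative f.integralNormalization ≠ 0) :
    Irreducible ((traceCurve f).map (mapRingHom
      ((algebraMap (FractionRing R[X])[X] (LevelClosure (FractionRing R[X]))).comp
        (mapRingHom (algebraMap R[X] (FractionRing R[X])))))) := by
  let L := FractionRing R[X]
  have hinj : Function.Injective (algebraMap R[X] L) := IsFractionRing.injective _ _
  have hmap := map_injective _ hinj
  have : Infinite L := Infinite.of_injective _ hinj
  have hdeg := hf.natDegree_eq hr.ne_zero ha hb
  have hf0 : f ≠ 0 := ne_zero_of_natDegree_gt (hdeg ▸ hr.pos)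
  set m := f.leadingCoeff ^ (f.natDegree - 1)
  have hm0 : m.map (algebraMap R[X] L) ≠ 0 :=
    (Polynomial.map_ne_zero_iff hinj).2 (pow_ne_zero _ (leadingCoeff_ne_zero.2 hf0))
  have hcomp : ((algebraMap L[X] (LevelClosure L)).comp
      (mapRingHom (algebraMap R[X] L))).comp C =
        (algebraMap L (LevelClosure L)).comp (algebraMap R[X] L) := by
    ext <;> simp [IsScalarTower.algebraMap_apply L L[X] (LevelClosure L)]
  have hcurve : (traceCurve f).map (mapRingHom ((algebraMap L[X] (LevelClosure L)).comp
      (mapRingHom (algebraMap R[X] L)))) =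
        levelCurve ((f.integralNormalization.map (mapRingHom (algebraMap R[X] L))).map
          (mapRingHom (algebraMap L (LevelClosure L))))
          ((m.map (algebraMap R[X] L)).map (algebraMap L (LevelClosure L))) (genericLevel L) := by
    rw [traceCurve, map_levelCurve, Polynomial.map_map, mapRingHom_comp, hcomp, Polynomial.map_map,
      hcomp, Polynomial.map_map, mapRingHom_comp, Polynomial.map_map, genericLevel,
      RingHom.comp_apply, coe_mapRingHom, map_X]
  rw [hcurve]
  have hirr := irreducible_or_exists_isRoot_levelCurve
    (G := f.integralNormalization.map (mapRingHom (algebraMap R[X] L)))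
    ((monic_integralNormalization hf0).map _)
    (by rwa [natDegree_map_eq_of_injective hmap, natDegree_integralNormalization, hdeg])
    (by rwa [derivative_map, Polynomial.map_ne_zero_iff hmap]) hm0
  have : FaithfulSMul R[X] (LevelClosure L) := by
    rw [faithfulSMul_iff_algebraMap_injective, IsScalarTower.algebraMap_eq R[X] L]
    exact (algebraMap L _).injective.comp hinj
  refine hirr.resolve_right fun ⟨ρ, hρ⟩ => ?_
  obtain ⟨η, h, hη, hc⟩ := exists_comp_eq_of_isRoot_levelCurve _ hm0 hρ
  rw [Polynomial.map_map, mapRingHom_comp, Polynomial.map_map] at hc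
  exact hf.integralNormalization_comp_ne hr ha hb hB hder hη ρ h hc

end GenericIrreducibility

section Nullstellensatz

variable {ι : Type*} [Finite ι]

theorem exists_forall_mem_aeval_eq_zero {k W : Type*} [Field k] [Field W] [IsAlgClosed W]
    [Algebra k W] {I : Ideal (MvPolynomial ι k)} (hI : I ≠ ⊤) :
    ∃ x : ι → W, ∀ e ∈ I, MvPolynomial.aeval x e = 0 := by
  suffices h : MvPolynomial.zeroLocus W I ≠ ∅ from Set.nonempty_iff_ne_empty.2 h
  intro h
  apply hI
  rw [← Ideal.radical_eq_top, ← MvPolynomial.vanishingIdeal_zeroLocus_eq_radical (K := W), h,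
    MvPolynomial.vanishingIdeal_empty]

attribute [local instance] MvPolynomial.algebraMvPolynomial FractionRing.liftAlgebra in
theorem exists_C_mem_of_forall_exists_aeval_ne_zero {R W : Type*} [CommRing R] [IsDomain R]
    [Field W] [IsAlgClosed W] [Algebra R W] [FaithfulSMul R W] {I : Ideal (MvPolynomial ι R)}
    (hI : ∀ x : ι → W, ∃ e ∈ I, MvPolynomial.aeval x e ≠ 0) :
    ∃ D : R, D ≠ 0 ∧ MvPolynomial.C D ∈ I := by
  by_contra! hcon
  have hdisj : Disjoint
      (((nonZeroDivisors R).map (MvPolynomial.C (σ := ι)) : Submonoid _) : Set (MvPolynomial ι R))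
      (I : Set (MvPolynomial ι R)) := by
    rw [Set.disjoint_left]
    rintro _ ⟨D, hD, rfl⟩ h
    exact hcon D (nonZeroDivisors.ne_zero hD) h
  have hne := (IsLocalization.map_algebraMap_ne_top_iff_disjoint
    ((nonZeroDivisors R).map (MvPolynomial.C (σ := ι))) (MvPolynomial ι (FractionRing R)) _).2 hdisj
  obtain ⟨x, hx⟩ := exists_forall_mem_aeval_eq_zero (W := W) hne
  obtain ⟨e, he, hxe⟩ := hI x
  refine hxe ?_
  have h := hx _ (Ideal.mem_map_of_mem _ he)
  rwa [MvPolynomial.algebraMap_def, MvPolynomial.aeval_map_algebraMap] at h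

end Nullstellensatz

section IrreducibleSpecialization

section

variable {R S : Type*} [CommRing R] [CommRing S]

theorem coeff_coeff_swap (P : R[X][X]) (i j : ℕ) :
    ((Bivariate.swap P).coeff i).coeff j = (P.coeff j).coeff i := by
  induction P using Polynomial.induction_on' with
  | add P Q hP hQ => simp [hP, hQ]
  | monomial n f =>
    induction f using Polynomial.induction_on' with
    | add P Q hP hQ => simp [hP, hQ]
    | monomial m r =>
      rw [Bivariate.swap_monomial_monomial]
      simp only [coeff_monomial]
      split_ifs <;> simp_all [coeff_monomial]

theorem natDegree_swap_le_iff {P : R[X][X]} {N : ℕ} :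
    (Bivariate.swap P).natDegree ≤ N ↔ ∀ i, (P.coeff i).natDegree ≤ N := by
  simp only [natDegree_le_iff_coeff_eq_zero]
  refine ⟨fun h i n hn => ?_, fun h n hn => Polynomial.ext fun i => ?_⟩
  · rw [← coeff_coeff_swap, h n hn, coeff_zero]
  · rw [coeff_coeff_swap, h i n hn, coeff_zero]

theorem natDegree_swap_le_of_dvd [IsDomain R] {P Q : R[X][X]} (hQ : Q ≠ 0) (h : P ∣ Q) :
    (Bivariate.swap P).natDegree ≤ (Bivariate.swap Q).natDegree :=
  natDegree_le_of_dvd (_root_.map_dvd Bivariate.swap h) (by simpa using hQ)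

/-- The bivariate polynomial with coefficients `x`, of degree less than `r` in the outer variable
and at most `N` in the inner one. -/
noncomputable def boxPolynomial {r N : ℕ} (x : Fin r × Fin (N + 1) → R) : R[X][X] :=
  ∑ i : Fin r, C (∑ j : Fin (N + 1), C (x (i, j)) * X ^ (j : ℕ)) * X ^ (i : ℕ)

variable {r N : ℕ}

theorem map_boxPolynomial (φ : R →+* S) (x : Fin r × Fin (N + 1) → R) :
    (boxPolynomial x).map (mapRingHom φ) = boxPolynomial (φ ∘ x) := by
  simp [boxPolynomial, Polynomial.map_sum]

theorem natDegree_boxPolynomial_lt (hr : 0 < r) (x : Fin r × Fin (N + 1) → R) :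
    (boxPolynomial x).natDegree < r :=
  Nat.lt_of_le_pred hr <| natDegree_sum_le_of_forall_le _ _ fun i _ =>
    (natDegree_C_mul_X_pow_le _ _).trans (Nat.le_pred_of_lt i.2)

theorem exists_boxPolynomial_eq {P : R[X][X]} (hP : P.natDegree < r)
    (hN : (Bivariate.swap P).natDegree ≤ N) :
    ∃ x : Fin r × Fin (N + 1) → R, boxPolynomial x = P := by
  refine ⟨fun i => (P.coeff i.1).coeff i.2, ?_⟩
  conv_rhs => rw [P.as_sum_range_C_mul_X_pow' hP, Finset.sum_range]
  refine Finset.sum_congr rfl fun i _ => ?_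
  have hi := natDegree_swap_le_iff.1 hN i
  conv_rhs => rw [(P.coeff i).as_sum_range_C_mul_X_pow' (Nat.lt_succ_of_le hi), Finset.sum_range]

variable (r N) in
/-- The ideal of equations on the coefficients of two polynomials, of degree less than `r` in the
outer variable and at most `N` in the inner one, saying that their product is `g`. -/
noncomputable def factorizationIdeal (g : R[X][X]) :
    Ideal (MvPolynomial (Fin r × Fin (N + 1) ⊕ Fin r × Fin (N + 1)) R) :=
  Ideal.span <| Set.range fun i : ℕ × ℕ =>
    ((boxPolynomial (MvPolynomial.X ∘ Sum.inl) * boxPolynomial (MvPolynomial.X ∘ Sum.inr) -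
      g.map (mapRingHom MvPolynomial.C)).coeff i.1).coeff i.2

theorem factorizationIdeal_le_ker_iff {g : R[X][X]} {φ : R →+* S}
    {x : Fin r × Fin (N + 1) ⊕ Fin r × Fin (N + 1) → S} :
    factorizationIdeal r N g ≤ RingHom.ker (MvPolynomial.eval₂Hom φ x) ↔
      boxPolynomial (x ∘ Sum.inl) * boxPolynomial (x ∘ Sum.inr) = g.map (mapRingHom φ) := by
  set Δ : (MvPolynomial (Fin r × Fin (N + 1) ⊕ Fin r × Fin (N + 1)) R)[X][X] :=
    boxPolynomial (MvPolynomial.X ∘ Sum.inl) * boxPolynomial (MvPolynomial.X ∘ Sum.inr) -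
      g.map (mapRingHom MvPolynomial.C) with hΔ
  have hC : (MvPolynomial.eval₂Hom φ x).comp MvPolynomial.C = φ := by
    ext
    simp
  have hX : MvPolynomial.eval₂Hom φ x ∘ MvPolynomial.X = x := by
    ext
    simp
  have hmap : Δ.map (mapRingHom (MvPolynomial.eval₂Hom φ x)) =
      boxPolynomial (x ∘ Sum.inl) * boxPolynomial (x ∘ Sum.inr) - g.map (mapRingHom φ) := by
    rw [hΔ, Polynomial.map_sub, Polynomial.map_mul, map_boxPolynomial, map_boxPolynomial,
      Polynomial.map_map, mapRingHom_comp, hC, ← Function.comp_assoc, ← Function.comp_assoc, hX]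
  rw [← sub_eq_zero, ← hmap, factorizationIdeal, Ideal.span_le, Set.range_subset_iff]
  simp only [SetLike.mem_coe, RingHom.mem_ker, Prod.forall, Polynomial.ext_iff, coeff_map,
    coe_mapRingHom, coeff_zero, hΔ]

end

theorem exists_boxPolynomial_mul_eq_of_not_irreducible {k : Type*} [Field k] {g : k[X][X]}
    {r N : ℕ} (hg : g.Monic) (hr : 0 < r) (hdeg : g.natDegree = r)
    (hN : (Bivariate.swap g).natDegree ≤ N) (hred : ¬ Irreducible g) :
    ∃ x y : Fin r × Fin (N + 1) → k, boxPolynomial x * boxPolynomial y = g := by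
  have hne : g ≠ 1 := by
    rintro rfl
    exact hr.ne' (hdeg.symm.trans natDegree_one)
  rw [hg.irreducible_iff_natDegree'] at hred
  push Not at hred
  obtain ⟨P, Q, hP, hQ, hPQ, hQdeg⟩ := hred hne
  rw [Finset.mem_Ioc, hdeg] at hQdeg
  have hsum : P.natDegree + Q.natDegree = r := by rw [← hP.natDegree_mul hQ, hPQ, hdeg]
  obtain ⟨x, rfl⟩ := exists_boxPolynomial_eq (r := r) (N := N) (P := P) (by omega)
    ((natDegree_swap_le_of_dvd hg.ne_zero (Dvd.intro _ hPQ)).trans hN)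
  obtain ⟨y, rfl⟩ := exists_boxPolynomial_eq (r := r) (N := N) (P := Q) (by omega)
    ((natDegree_swap_le_of_dvd hg.ne_zero (Dvd.intro_left _ hPQ)).trans hN)
  exact ⟨x, y, hPQ⟩

theorem exists_forall_irreducible_map {R W : Type*} [CommRing R] [IsDomain R] [Field W]
    [IsAlgClosed W] {j : R →+* W} (hj : Function.Injective j) {g : R[X][X]} (hg : g.Monic)
    (hr : 0 < g.natDegree) (hirr : Irreducible (g.map (mapRingHom j))) :
    ∃ D : R, D ≠ 0 ∧ ∀ (k : Type u) [Field k] (φ : R →+* k), φ D ≠ 0 →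
      Irreducible (g.map (mapRingHom φ)) := by
  set r := g.natDegree
  let N := (Bivariate.swap g).natDegree
  let _ : Algebra R W := j.toAlgebra
  have : FaithfulSMul R W := (faithfulSMul_iff_algebraMap_injective R W).2 hj
  obtain ⟨D, hD, hDI⟩ : ∃ D : R, D ≠ 0 ∧ MvPolynomial.C D ∈ factorizationIdeal r N g := by
    refine exists_C_mem_of_forall_exists_aeval_ne_zero (W := W) fun x => ?_
    by_contra! hx
    have hmul := (factorizationIdeal_le_ker_iff (φ := j) (x := x)).1 hx
    have hdeg : (g.map (mapRingHom j)).natDegree = r := hg.natDegree_map _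
    rw [← hmul] at hirr hdeg
    have h₁ := natDegree_boxPolynomial_lt hr (x ∘ Sum.inl)
    have h₂ := natDegree_boxPolynomial_lt hr (x ∘ Sum.inr)
    rw [natDegree_mul (left_ne_zero_of_mul hirr.ne_zero) (right_ne_zero_of_mul hirr.ne_zero)]
      at hdeg
    rcases hirr.isUnit_or_isUnit rfl with hu | hu <;>
    · have := natDegree_eq_zero_of_isUnit hu
      omega
  refine ⟨D, hD, fun k _ φ hφ => ?_⟩
  by_contra hred
  have hN : (Bivariate.swap (g.map (mapRingHom φ))).natDegree ≤ N :=
    natDegree_swap_le_iff.2 fun i => by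
      rw [coeff_map]
      exact natDegree_map_le.trans (natDegree_swap_le_iff.1 le_rfl i)
  obtain ⟨x, y, hxy⟩ := exists_boxPolynomial_mul_eq_of_not_irreducible (hg.map _) hr
    (hg.natDegree_map _) hN hred
  have hker := (factorizationIdeal_le_ker_iff (φ := φ) (x := Sum.elim x y)).2 hxy hDI
  exact hφ (by simpa using hker)

end IrreducibleSpecialization

section TraceCurve

variable {R : Type*} [CommRing R]

theorem eval₃_integralNormalization {S : Type*} [CommRing S] [Algebra R S] {f : R[X][X][X]}
    (hf : 0 < f.natDegree) (s t u : S) :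
    eval₃ s t (aevalAeval s t f.leadingCoeff * u) f.integralNormalization =
      aevalAeval s t f.leadingCoeff ^ (f.natDegree - 1) * eval₃ s t u f :=
  integralNormalization_eval₂_leadingCoeff_mul hf
    ((aevalAeval s t : R[X][X] →ₐ[R] S) : R[X][X] →+* S) u

theorem evalEval_map_traceCurve {k : Type*} [CommRing k] [Algebra R k] {f : R[X][X][X]}
    (hf : 0 < f.natDegree) (s c t u : k) :
    evalEval t (aevalAeval s t f.leadingCoeff * u)
        ((traceCurve f).map (mapRingHom (aevalAeval s c : R[X][X] →ₐ[R] k))) =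
      aevalAeval s t f.leadingCoeff ^ (f.natDegree - 1) * (eval₃ s t u f - c) := by
  let ev : R[X] →+* k := (aeval s : R[X] →ₐ[R] k)
  have hcomp : ((aevalAeval s c : R[X][X] →ₐ[R] k) : R[X][X] →+* k).comp C = ev := by
    ext <;> simp [ev]
  have heval₂ (P : R[X][X]) : (P.map ev).eval t = aevalAeval s t P := by
    have h : (evalRingHom t).comp (mapRingHom ev) = (aevalAeval s t : R[X][X] →ₐ[R] k) := by
      ext <;> simp [ev]
    exact RingHom.congr_fun h P
  have heval₃ (P : R[X][X][X]) (v : k) :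
      evalEval t v (P.map (mapRingHom ev)) = eval₃ s t v P := by
    have h : (evalEvalRingHom t v).comp (mapRingHom (mapRingHom ev)) = eval₃ s t v := by
      ext <;> simp [eval₃, ev]
    exact RingHom.congr_fun h P
  have hX : ((aevalAeval s c : R[X][X] →ₐ[R] k) : R[X][X] →+* k) X = c := by simp
  rw [traceCurve, map_levelCurve, Polynomial.map_map, mapRingHom_comp, Polynomial.map_map, hcomp,
    levelCurve, evalEval_sub, heval₃, evalEval_C, eval_mul, eval_C, heval₂, hX]
  rw [eval₃_integralNormalization hf, map_pow]
  ring

theorem natDegree_traceCurve (f : R[X][X][X]) : (traceCurve f).natDegree = f.natDegree := by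
  rw [traceCurve, natDegree_levelCurve,
    natDegree_map_eq_of_injective (map_injective _ C_injective), natDegree_integralNormalization]

theorem monic_traceCurve {f : R[X][X][X]} (hf : 0 < f.natDegree) : (traceCurve f).Monic := by
  refine monic_levelCurve ?_ ?_ _ _
  · exact (monic_integralNormalization (ne_zero_of_natDegree_gt hf)).map _
  · rwa [← natDegree_levelCurve _ _ X, ← traceCurve, natDegree_traceCurve]

theorem derivative_traceCurve_ne_zero {f : R[X][X][X]}
    (hder : derivative f.integralNormalization ≠ 0) : derivative (traceCurve f) ≠ 0 := by
  rw [traceCurve, levelCurve, derivative_sub, derivative_C, sub_zero, derivative_map]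
  exact (Polynomial.map_ne_zero_iff (f := mapRingHom C) (map_injective C C_injective)).2 hder

theorem mem_weightLE_of_monic {g : R[X][X]} (hg : g.Monic) {N : ℕ}
    (hN : (Bivariate.swap g).natDegree ≤ N) : g ∈ weightLE R N (N * g.natDegree) := by
  rw [mem_weightLE]
  intro i j hij
  rcases lt_trichotomy j g.natDegree with hj | rfl | hj
  · have hi : i ≤ N := (le_natDegree_of_ne_zero hij).trans (natDegree_swap_le_iff.1 hN j)
    calc i + N * j ≤ N + N * j := Nat.add_le_add_right hi _
      _ = N * (j + 1) := by ring
      _ ≤ N * g.natDegree := Nat.mul_le_mul_left _ hj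
  · rw [hg.coeff_natDegree, coeff_one, ne_eq, ite_eq_right_iff, not_forall] at hij
    rw [hij.1, zero_add]
  · rw [coeff_eq_zero_of_natDegree_lt hj, coeff_zero] at hij
    exact absurd rfl hij

/-- The pairs `(t, u)` with `f(s, t, u) = c` at which the leading coefficient of `f` in `u` does not
vanish. -/
def traceLevel {K : Type*} [Field K] [Algebra R K] (f : R[X][X][X]) (s c : K) : Set (K × K) :=
  {x | aevalAeval s x.1 f.leadingCoeff ≠ 0 ∧ eval₃ s x.1 x.2 f = c}

/-- Outside the zeros of `D`, the level sets `f(s, ·, ·) = c` over the field with `p ^ (a + b)`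
elements have at most `p ^ (a + b) + M * p ^ b` points, as soon as `a`, and `b - a`, are not too
small. -/
def HasTraceLevelBound {R : Type} [CommRing R] (p : ℕ) (f : R[X][X][X]) (D : R[X][X]) (M : ℕ) :
    Prop :=
  ∀ ⦃a b : ℕ⦄, M ≤ p ^ a → M * p ^ a ≤ p ^ b → ∀ (K : Type) [Field K] [Finite K] [Algebra R K],
    Nat.card K = p ^ (a + b) → ∀ s c : K, aevalAeval s c D ≠ 0 →
      (traceLevel f s c).ncard ≤ p ^ (a + b) + M * p ^ b

end TraceCurve

section SeparableCase

variable {R : Type*} [CommRing R] {K : Type*} [Field K] [Finite K] [Algebra R K]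
  {k : Type*} [Field k] [IsAlgClosed k] [Algebra K k]
  {p : ℕ} [Fact p.Prime] [CharP k p]

theorem ncard_traceLevel_le {f : R[X][X][X]} (hf : 0 < f.natDegree) {s c : K} {N : ℕ}
    (hg : IsWeightedCurve N ((traceCurve f).map (mapRingHom ((algebraMap K k).comp
      ((aevalAeval s c : R[X][X] →ₐ[R] K) : R[X][X] →+* K)))))
    (hder : (derivative (traceCurve f)).map (mapRingHom ((algebraMap K k).comp
      ((aevalAeval s c : R[X][X] →ₐ[R] K) : R[X][X] →+* K))) ≠ 0)
    {a b : ℕ} (hK : Nat.card K = p ^ (a + b)) (hP : N * f.natDegree + N + 4 ≤ p ^ a)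
    (hQ : (f.natDegree + 1) * (p ^ a + N * f.natDegree) < p ^ b) :
    (traceLevel f s c).ncard ≤
      p ^ (a + b) + (f.natDegree + f.natDegree * (N + 3 + N * f.natDegree)) * p ^ b := by
  classical
  let ψ : R[X][X] →+* K := (aevalAeval s c : R[X][X] →ₐ[R] K)
  let ι := algebraMap K k
  set g := (traceCurve f).map (mapRingHom (ι.comp ψ)) with hg_def
  have hdeg : g.natDegree = f.natDegree := by
    rw [hg_def, (monic_traceCurve hf).natDegree_map, natDegree_traceCurve]
  let F : K × K → k × k := fun x => (ι x.1, ι (aevalAeval s x.1 f.leadingCoeff * x.2))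
  have hF : Set.InjOn F (traceLevel f s c) := by
    rintro ⟨t, u⟩ hx ⟨t', u'⟩ - h
    obtain ⟨ht, hu⟩ := Prod.mk.inj h
    obtain rfl : t = t' := ι.injective ht
    exact Prod.ext rfl (mul_left_cancel₀ hx.1 (ι.injective hu))
  have hpow (x : K) : ι x ^ p ^ (a + b) = ι x := by
    cases nonempty_fintype K
    rw [← hK, Nat.card_eq_fintype_card, ← map_pow, FiniteField.pow_card]
  have hfin : (traceLevel f s c).Finite := Set.toFinite _
  have hcurve : ∀ x ∈ hfin.toFinset.image F, evalEval x.1 x.2 g = 0 := by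
    intro x hx
    obtain ⟨⟨t, u⟩, hy, rfl⟩ := Finset.mem_image.1 hx
    have h := evalEval_map_traceCurve hf s c t u
    rw [((hfin.mem_toFinset).1 hy).2, sub_self, mul_zero] at h
    rw [hg_def, ← mapRingHom_comp, ← Polynomial.map_map, map_mapRingHom_evalEval]
    exact (congrArg ι h).trans (map_zero ι)
  have hbound := hg.card_fixedPoints_le (by rwa [derivative_map]) (by rwa [hdeg])
    (by rwa [hdeg]) hcurve fun x hx => by
      obtain ⟨y, -, rfl⟩ := Finset.mem_image.1 hx
      exact ⟨hpow _, hpow _⟩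
  rwa [hdeg, Finset.card_image_of_injOn (by simpa using hF), ← Set.ncard_eq_toFinset_card]
    at hbound

/-- A constant that is simultaneously admissible in the two lower bounds on `p ^ a` and `p ^ b`
that `ncard_traceLevel_le` requires, and in the error term that it provides. -/
def levelBoundConstant (n N : ℕ) : ℕ :=
  (N * n + N + 4) + ((n + 1) * (1 + N * n) + 1) + (n + n * (N + 3 + N * n))

theorem add_mul_lt_of_levelBoundConstant_mul_le {n N P Q : ℕ} (hP : levelBoundConstant n N ≤ P)
    (hQ : levelBoundConstant n N * P ≤ Q) : (n + 1) * (P + N * n) < Q := by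
  rw [levelBoundConstant] at hP hQ
  have hpos : 1 ≤ P := by omega
  calc (n + 1) * (P + N * n) ≤ (n + 1) * (P + N * n * P) := by
        gcongr (n + 1) * (P + ?_)
        exact Nat.le_mul_of_pos_right _ hpos
    _ = (n + 1) * (1 + N * n) * P := by ring
    _ < _ := by
        gcongr
        omega
    _ ≤ Q := hQ

end SeparableCase

section LevelBound

variable {R : Type} [CommRing R] [IsDomain R] {p : ℕ} [Fact p.Prime] {r : ℕ} {a b : Fin r → ℤ}
  {f : R[X][X][X]}

theorem IsNestedTracePolynomial.exists_forall_irreducible_map_traceCurve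
    (hf : IsNestedTracePolynomial (wordOf a b) f) (hr : r.Prime) (ha : ∀ i, a i ≠ 0)
    (hb : ∀ i, b i ≠ 0) (hB : ∑ i, b i = 0 ∨ CharP R r)
    (hder : derivative f.integralNormalization ≠ 0) :
    ∃ D : R[X][X], D ≠ 0 ∧ ∀ (k : Type) [Field k] (φ : R[X][X] →+* k), φ D ≠ 0 →
      Irreducible ((traceCurve f).map (mapRingHom φ)) := by
  have hpos : 0 < f.natDegree := hf.natDegree_eq hr.ne_zero ha hb ▸ hr.pos
  let L := FractionRing R[X]
  let j : R[X][X] →+* LevelClosure L :=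
    (algebraMap L[X] (LevelClosure L)).comp (mapRingHom (algebraMap R[X] L))
  have hj : Function.Injective j :=
    (algebraMap_levelClosure_injective L).comp
      (map_injective _ (IsFractionRing.injective R[X] L))
  exact exists_forall_irreducible_map hj (monic_traceCurve hpos) (by rwa [natDegree_traceCurve])
    (hf.irreducible_map_traceCurve hr ha hb hB hder)

theorem IsNestedTracePolynomial.exists_hasTraceLevelBound_of_derivative_ne_zero
    (hf : IsNestedTracePolynomial (wordOf a b) f) (hr : r.Prime) (ha : ∀ i, a i ≠ 0)
    (hb : ∀ i, b i ≠ 0) (hB : ∑ i, b i = 0 ∨ CharP R r)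
    (hder : derivative f.integralNormalization ≠ 0) :
    ∃ D : R[X][X], D ≠ 0 ∧ ∃ M, HasTraceLevelBound p f D M := by
  have hdeg : f.natDegree = r := hf.natDegree_eq hr.ne_zero ha hb
  have hpos : 0 < f.natDegree := hdeg ▸ hr.pos
  obtain ⟨D₁, hD₁, hirr⟩ := hf.exists_forall_irreducible_map_traceCurve hr ha hb hB hder
  obtain ⟨j, i, hD₂⟩ : ∃ j i, ((derivative (traceCurve f)).coeff j).coeff i ≠ 0 := by
    by_contra! h
    refine derivative_traceCurve_ne_zero hder ?_
    ext j i : 2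
    exact h j i
  set N := (Bivariate.swap (traceCurve f)).natDegree
  refine ⟨D₁ * _, mul_ne_zero hD₁ hD₂, levelBoundConstant f.natDegree N,
    fun m n hm hn K _ _ _ hK s c hD => ?_⟩
  cases nonempty_fintype K
  rw [_root_.map_mul, mul_ne_zero_iff] at hD
  have : CharP K p := charP_of_card_eq_prime_pow (Nat.card_eq_fintype_card (α := K) ▸ hK)
  have : CharP (AlgebraicClosure K) p :=
    charP_of_injective_algebraMap (algebraMap K (AlgebraicClosure K)).injective p
  set φ := (algebraMap K (AlgebraicClosure K)).comp
    ((aevalAeval s c : R[X][X] →ₐ[R] K) : R[X][X] →+* K)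
  have hφ {P : R[X][X]} (hP : aevalAeval s c P ≠ 0) : φ P ≠ 0 :=
    (map_ne_zero_iff _ (algebraMap K (AlgebraicClosure K)).injective).2 hP
  refine (ncard_traceLevel_le (k := AlgebraicClosure K) (N := N) hpos ?_ ?_ hK
    (le_trans (by rw [levelBoundConstant]; omega) hm)
    (add_mul_lt_of_levelBoundConstant_mul_le hm hn)).trans ?_
  · have hmonic := (monic_traceCurve hpos).map (mapRingHom φ)
    refine ⟨hmonic, mem_weightLE_of_monic hmonic ?_, hirr _ φ (hφ hD.1)⟩
    exact natDegree_swap_le_iff.2 fun i => by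
      rw [coeff_map]
      exact natDegree_map_le.trans (natDegree_swap_le_iff.1 le_rfl i)
  · intro h
    refine hφ hD.2 ?_
    simpa only [coeff_map, coe_mapRingHom, coeff_zero] using
      congrArg (fun g => (g.coeff j).coeff i) h
  · exact Nat.add_le_add_left (Nat.mul_le_mul_right _ (Nat.le_add_left ..)) _

end LevelBound

section InseparableCase

theorem exists_eq_X_pow_add_C_of_derivative_eq_zero {A : Type*} [CommRing A] [NoZeroDivisors A]
    {r : ℕ} [CharP A r] (hr : r.Prime) {G : A[X]} (hG : G.Monic) (hdeg : G.natDegree = r)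
    (hder : derivative G = 0) : ∃ c : A, G = X ^ r + C c := by
  have hexp := expand_contract r hder hr.ne_zero
  have hmonic : (contract r G).Monic := by rwa [← monic_expand_iff hr.pos, hexp]
  have hcontract : (contract r G).natDegree = 1 := by
    rw [← hexp, natDegree_expand] at hdeg
    exact Nat.eq_of_mul_eq_mul_right hr.pos (hdeg.trans (one_mul r).symm)
  refine ⟨(contract r G).coeff 0, ?_⟩
  conv_lhs => rw [← hexp, hmonic.eq_X_add_C hcontract, map_add, expand_X, expand_C]

theorem charP_of_monic_of_derivative_eq_zero {A : Type*} [CommRing A] [Nontrivial A] {G : A[X]}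
    (hG : G.Monic) (hprime : G.natDegree.Prime) (hder : derivative G = 0) :
    CharP A G.natDegree := by
  rw [CharP.charP_iff_prime_eq_zero hprime]
  have h := congrArg (coeff · (G.natDegree - 1)) hder
  have hcast : ((G.natDegree - 1 : ℕ) + 1 : A) = G.natDegree := by
    rw [← Nat.cast_add_one, Nat.sub_add_cancel hprime.pos]
  simpa only [coeff_derivative, Nat.sub_add_cancel hprime.pos, hG.coeff_natDegree, one_mul, hcast,
    coeff_zero] using h

variable {R : Type*} [CommRing R] [IsDomain R] {K : Type*} [Field K] [Finite K] [Algebra R K]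

theorem ncard_traceLevel_le_card {f : R[X][X][X]} (hprime : f.natDegree.Prime)
    (hder : derivative f.integralNormalization = 0) (s c : K) :
    (traceLevel f s c).ncard ≤ Nat.card K := by
  have hmonic := monic_integralNormalization (ne_zero_of_natDegree_gt hprime.pos)
  have hdeg := natDegree_integralNormalization (p := f)
  have hchar : CharP R[X][X] f.natDegree :=
    hdeg ▸ charP_of_monic_of_derivative_eq_zero hmonic (hdeg ▸ hprime) hder
  obtain ⟨d, hd⟩ := exists_eq_X_pow_add_C_of_derivative_eq_zero hprime hmonic hdeg hder
  have hcharK : CharP K f.natDegree := by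
    rw [CharP.charP_iff_prime_eq_zero hprime, ← map_natCast
      (aevalAeval s c : R[X][X] →ₐ[R] K), CharP.cast_eq_zero, map_zero]
  have : ExpChar K f.natDegree := .prime hprime
  have hlevel (t u : K) := eval₃_integralNormalization (f := f) hprime.pos s t u
  simp only [hd, map_add, map_pow, eval₃_X, eval₃_C] at hlevel
  rw [← Set.ncard_univ]
  refine Set.ncard_le_ncard_of_injOn Prod.fst (fun x _ => Set.mem_univ _) ?_ (Set.toFinite _)
  rintro ⟨t, u⟩ ⟨hL, hu⟩ ⟨t', u'⟩ ⟨-, hu'⟩ (rfl : t = t')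
  refine Prod.ext rfl (mul_left_cancel₀ hL (frobenius_inj K f.natDegree ?_))
  have h := (hlevel t u).trans ((hu.trans hu'.symm) ▸ (hlevel t u').symm)
  exact add_right_cancel h

end InseparableCase

section LevelBound

variable {R : Type} [CommRing R] [IsDomain R] {r : ℕ} {a b : Fin r → ℤ} {f : R[X][X][X]}

theorem IsNestedTracePolynomial.exists_hasTraceLevelBound
    (hf : IsNestedTracePolynomial (wordOf a b) f) (hr : r.Prime) (ha : ∀ i, a i ≠ 0)
    (hb : ∀ i, b i ≠ 0) (hB : ∑ i, b i = 0 ∨ CharP R r) (p : ℕ) [Fact p.Prime] :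
    ∃ D : R[X][X], D ≠ 0 ∧ ∃ M, HasTraceLevelBound p f D M := by
  by_cases hder : derivative f.integralNormalization = 0
  · refine ⟨1, one_ne_zero, 0, fun m n _ _ K _ _ _ hK s c _ => ?_⟩
    rw [zero_mul, add_zero, ← hK]
    exact ncard_traceLevel_le_card (hf.natDegree_eq hr.ne_zero ha hb ▸ hr) hder s c
  · exact hf.exists_hasTraceLevelBound_of_derivative_ne_zero hr ha hb hB hder

end LevelBound

section FibreSums

lemma sum_abs_eq_two_mul_sum_posPart {ι : Type*} (s : Finset ι) (v : ι → ℝ)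
    (hv : ∑ i ∈ s, v i = 0) : ∑ i ∈ s, |v i| = 2 * ∑ i ∈ s, (v i)⁺ := by
  have habs (i : ι) : |v i| = 2 * (v i)⁺ - v i := by
    linear_combination -posPart_add_negPart (v i) - posPart_sub_negPart (v i)
  rw [Finset.sum_congr rfl fun i _ => habs i, Finset.sum_sub_distrib, hv, sub_zero,
    Finset.mul_sum]

lemma sum_posPart_eq_posPart_sum_of_const {ι : Type*} (s : Finset ι) (v : ι → ℝ)
    (hv : ∀ i ∈ s, ∀ j ∈ s, v i = v j) : ∑ i ∈ s, (v i)⁺ = (∑ i ∈ s, v i)⁺ := by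
  rcases s.eq_empty_or_nonempty with rfl | ⟨j, hj⟩
  · simp
  rw [Finset.sum_congr rfl fun i hi => hv i hi j hj,
    Finset.sum_congr rfl fun i hi => congrArg (·⁺) (hv i hi j hj)]
  rcases le_total 0 (v j) with h | h
  · simp [mul_nonneg, h]
  · simp [mul_nonpos_of_nonneg_of_nonpos, h]

variable {A Y : Type*} [Finite A]

lemma sum_ncard_inter_fiber_eq (F : A → Y) (B : Set A) (T : Finset Y) :
    ∑ y ∈ T, (B ∩ F ⁻¹' {y}).ncard = (B ∩ F ⁻¹' T).ncard := by
  classical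
  have := Fintype.ofFinite A
  simp only [Set.ncard_eq_toFinset_card']
  rw [Finset.card_eq_sum_card_fiberwise (f := F) (t := T)
    (fun x hx => by simp at hx; simpa using hx.2)]
  refine Finset.sum_congr rfl fun y hy => congrArg Finset.card ?_
  ext x
  simp only [Set.mem_toFinset, Set.mem_inter_iff, Set.mem_preimage, Set.mem_singleton_iff,
    Finset.mem_filter, Finset.mem_coe, and_assoc]
  exact and_congr_right fun _ => ⟨fun h => ⟨h ▸ hy, h⟩, fun h => h.2⟩

lemma sum_ncard_fiber_sub_eq (F : A → Y) (T : Finset Y) (g : ℝ) :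
    ∑ y ∈ T, ((F ⁻¹' {y}).ncard - g) = (F ⁻¹' T).ncard - T.card * g := by
  have h := sum_ncard_inter_fiber_eq F Set.univ T
  simp only [Set.univ_inter] at h
  rw [Finset.sum_sub_distrib, ← Nat.cast_sum, h, Finset.sum_const, nsmul_eq_mul]

lemma ncard_le_add_ncard_inter {U B : Set A} {H : ℕ} (hH : (U \ B).ncard ≤ H) :
    U.ncard ≤ H + (B ∩ U).ncard := by
  rw [← Set.ncard_inter_add_ncard_sdiff_eq_ncard U B, Set.inter_comm, add_comm]
  gcongr

lemma posPart_ncard_fiber_sub_le {C : Type*} (F : A → Y) (τ : Y → C) (B : Set A) (g H : ℕ) (y : Y)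
    (hH : (F ⁻¹' (τ ⁻¹' {τ y}) \ B).ncard ≤ H) :
    ((F ⁻¹' {y}).ncard - g : ℝ)⁺ ≤ H + B.ncard := by
  have hy : (F ⁻¹' {y}).ncard ≤ H + B.ncard := calc
    _ ≤ (F ⁻¹' (τ ⁻¹' {τ y})).ncard := Set.ncard_le_ncard (by rintro x rfl; rfl)
    _ ≤ H + (B ∩ F ⁻¹' (τ ⁻¹' {τ y})).ncard := ncard_le_add_ncard_inter hH
    _ ≤ H + B.ncard := by gcongr; exacts [B.toFinite, Set.inter_subset_left]
  have hy' : ((F ⁻¹' {y}).ncard : ℝ) ≤ H + B.ncard := by exact_mod_cast hy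
  exact max_le (by linarith [g.cast_nonneg (α := ℝ)]) (by positivity)

lemma sum_posPart_ncard_fiber_sub_le (F : A → Y) (T : Finset Y) (U B : Set A) (g H N : ℕ) (Δ : ℝ)
    (hΔ : 0 ≤ Δ) (hconst : ∀ y ∈ T, ∀ z ∈ T, (F ⁻¹' {y}).ncard = (F ⁻¹' {z}).ncard)
    (hT : F ⁻¹' T ⊆ U) (hH : (U \ B).ncard ≤ H) (hN : N ≤ T.card) (hHN : (H : ℝ) ≤ N * g + Δ) :
    ∑ y ∈ T, ((F ⁻¹' {y}).ncard - g : ℝ)⁺ ≤ Δ + (B ∩ U).ncard := by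
  rw [sum_posPart_eq_posPart_sum_of_const _ _ fun y hy z hz => by rw [hconst y hy z hz],
    sum_ncard_fiber_sub_eq]
  refine max_le ?_ (by positivity)
  have hfib : ((F ⁻¹' T).ncard : ℝ) ≤ H + (B ∩ U).ncard := by
    exact_mod_cast (Set.ncard_le_ncard hT).trans (ncard_le_add_ncard_inter hH)
  have hmul : (N : ℝ) * g ≤ T.card * g := by gcongr
  linarith

/-- The mean of the fibre sizes being `g`, the total deviation is twice the total excess, so upper
bounds for the fibres suffice. -/
lemma sum_abs_ncard_fiber_sub_le {C : Type*} [Fintype Y] [Finite C] (F : A → Y) (τ : Y → C)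
    (E : Finset Y) (B : Set A) (g H N : ℕ) (Δ : ℝ) (hΔ : 0 ≤ Δ)
    (hconst : ∀ y ∉ E, ∀ z ∉ E, τ y = τ z → (F ⁻¹' {y}).ncard = (F ⁻¹' {z}).ncard)
    (hA : Nat.card A = g * Nat.card Y)
    (hH : ∀ c, (F ⁻¹' (τ ⁻¹' {c}) \ B).ncard ≤ H)
    (hN : ∀ c, N ≤ {y | y ∉ E ∧ τ y = c}.ncard) (hHN : (H : ℝ) ≤ N * g + Δ) :
    ∑ y, |((F ⁻¹' {y}).ncard : ℝ) - g| ≤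
      2 * (E.card * (H + B.ncard) + Nat.card C * Δ + B.ncard) := by
  classical
  have := Fintype.ofFinite C
  have hlevel (c : C) : ∑ y ∈ Eᶜ with τ y = c, ((F ⁻¹' {y}).ncard - g : ℝ)⁺ ≤
      Δ + (B ∩ (τ ∘ F) ⁻¹' {c}).ncard := by
    refine sum_posPart_ncard_fiber_sub_le F _ _ B g H N Δ hΔ ?_ (fun x hx => by simp_all) (hH c)
      ((hN c).trans_eq ?_) hHN
    · simp only [Finset.mem_filter, Finset.mem_compl]
      exact fun y hy z hz => hconst y hy.1 z hz.1 (hy.2.trans hz.2.symm)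
    · rw [← Set.ncard_coe_finset]
      simp
  have hB : ∑ c, ((B ∩ (τ ∘ F) ⁻¹' {c}).ncard : ℝ) = B.ncard := by
    rw [← Nat.cast_sum, sum_ncard_inter_fiber_eq, Finset.coe_univ, Set.preimage_univ,
      Set.inter_univ]
  rw [sum_abs_eq_two_mul_sum_posPart, ← Finset.sum_add_sum_compl E,
    ← Finset.sum_fiberwise Eᶜ τ, add_assoc]
  · gcongr
    · exact (Finset.sum_le_card_nsmul _ _ _ fun y _ =>
        posPart_ncard_fiber_sub_le F τ B g H y (hH (τ y))).trans_eq (nsmul_eq_mul _ _)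
    · refine (Finset.sum_le_sum fun c _ => hlevel c).trans_eq ?_
      rw [Finset.sum_add_distrib, hB]
      simp
  · rw [sum_ncard_fiber_sub_eq]
    simp [Set.ncard_univ, hA, mul_comm]

lemma ncard_le_mul_ncard_of_mapsTo {F : A → Y} {S : Set A} {T : Set Y} {n : ℕ}
    (hT : T.Finite) (hF : Set.MapsTo F S T) (hn : ∀ y ∈ T, (S ∩ F ⁻¹' {y}).ncard ≤ n) :
    S.ncard ≤ n * T.ncard := by
  have hS : S ∩ F ⁻¹' hT.toFinset = S := by simpa using hF.subset_preimage
  rw [← hS, ← sum_ncard_inter_fiber_eq, Set.ncard_eq_toFinset_card T hT, mul_comm, ← smul_eq_mul]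
  exact Finset.sum_le_card_nsmul _ _ _ fun y hy => hn y (hT.mem_toFinset.1 hy)

lemma ncard_le_mul_ncard_of_forall_section {B : Type*} [Finite B] {S : Set (A × B)} {T : Set A}
    {n : ℕ} (hS : ∀ v ∈ S, v.1 ∈ T) (hn : ∀ a ∈ T, {b | (a, b) ∈ S}.ncard ≤ n) :
    S.ncard ≤ n * T.ncard := by
  refine ncard_le_mul_ncard_of_mapsTo T.toFinite hS fun a ha => le_trans ?_ (hn a ha)
  refine Set.ncard_le_ncard_of_injOn Prod.snd ?_ ?_
  · rintro ⟨a, b⟩ ⟨h, rfl⟩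
    exact h
  · rintro ⟨a, b⟩ ⟨-, rfl⟩ ⟨a', b'⟩ ⟨-, h⟩ rfl
    exact Prod.ext h.symm rfl

end FibreSums

lemma ncard_eval₂_eq_zero_le {R K : Type*} [CommRing R] [Field K] (φ : R →+* K) {P : R[X]}
    (hP : P.map φ ≠ 0) : {z | P.eval₂ φ z = 0}.ncard ≤ P.natDegree := by
  classical
  have hroots : {z | P.eval₂ φ z = 0} = ((P.map φ).roots.toFinset : Set K) := by
    ext z
    simp [hP, eval_map]
  rw [hroots, Set.ncard_coe_finset]
  exact (Multiset.toFinset_card_le _).trans ((card_roots' _).trans natDegree_map_le)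

/-- Markov's inequality. -/
lemma isEquidistributed_of_sum_abs_lt {A Y : Type*} [Fintype Y] [Nonempty Y] (F : A → Y) {g : ℕ}
    (hg : 0 < g) (hA : Nat.card A = g * Nat.card Y) {ε : ℝ} (hε : 0 < ε)
    (h : ∑ y, |((F ⁻¹' {y}).ncard : ℝ) - g| < ε ^ 2 * g * Nat.card Y) :
    IsEquidistributed F ε := by
  classical
  set good : Finset Y := {y | |((F ⁻¹' {y}).ncard : ℝ) - g| < ε * g} with hgood
  have hmean : (Nat.card A : ℝ) / Nat.card Y = g := by
    rw [hA, Nat.cast_mul, mul_div_cancel_right₀ _ (by simp)]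
  refine ⟨good, ?_, fun y hy => ?_⟩
  · have hbad : (goodᶜ.card : ℝ) * (ε * g) < ε * Nat.card Y * (ε * g) := calc
      _ = goodᶜ.card • (ε * g) := (nsmul_eq_mul _ _).symm
      _ ≤ ∑ y ∈ goodᶜ, |((F ⁻¹' {y}).ncard : ℝ) - g| :=
        Finset.card_nsmul_le_sum _ _ _ fun y hy => by simpa [hgood] using hy
      _ ≤ ∑ y, |((F ⁻¹' {y}).ncard : ℝ) - g| :=
        Finset.sum_le_univ_sum_of_nonneg fun y => abs_nonneg _
      _ < ε ^ 2 * g * Nat.card Y := h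
      _ = ε * Nat.card Y * (ε * g) := by ring
    have hcompl := lt_of_mul_lt_mul_right hbad (by positivity)
    rw [Finset.card_compl, Nat.cast_sub (Finset.card_le_univ _), ← Nat.card_eq_fintype_card]
      at hcompl
    rw [Nat.card_coe_set_eq, Set.ncard_coe_finset]
    linarith
  · rw [mul_div_assoc, hmean]
    exact (Finset.mem_filter.1 hy).2

section Conjugation

variable {K : Type} [Field K]

/-- Conjugation of `SL(2)` by an element of `GL(2)`. -/
def SL2.conj {K : Type} [CommRing K] (P : (Matrix (Fin 2) (Fin 2) K)ˣ) : SL2 K →* SL2 K where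
  toFun x := ⟨P.1 * x.1 * P⁻¹.1, by rw [det_units_conj, x.2]⟩
  map_one' := Subtype.ext (by simp)
  map_mul' x y := Subtype.ext <| by
    change P.1 * (x.1 * y.1) * P⁻¹.1 = P.1 * x.1 * P⁻¹.1 * (P.1 * y.1 * P⁻¹.1)
    simp [mul_assoc]

lemma SL2.conj_eq_iff_semiconjBy {K : Type} [CommRing K] {P : (Matrix (Fin 2) (Fin 2) K)ˣ}
    {x y : SL2 K} : SL2.conj P x = y ↔ SemiconjBy P.1 x.1 y.1 :=
  Subtype.ext_iff.trans (Units.mul_inv_eq_iff_eq_mul P)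

lemma SL2.conj_injective {K : Type} [CommRing K] (P : (Matrix (Fin 2) (Fin 2) K)ˣ) :
    Function.Injective (SL2.conj P) := fun _ _ h =>
  Subtype.ext (P.mul_right_inj.1 (P⁻¹.mul_left_inj.1 (congrArg Subtype.val h)))

lemma SL2.exists_semiconjBy_companion {z : SL2 K} (hz : z ∉ Subgroup.center (SL2 K)) :
    ∃ P : (Matrix (Fin 2) (Fin 2) K)ˣ, SemiconjBy P.1 z.1 !![0, 1; -1, trace z.1] := by
  suffices ∃ P : Matrix (Fin 2) (Fin 2) K, P.det ≠ 0 ∧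
      P * z.1 = !![0, 1; -1, trace z.1] * P by
    obtain ⟨P, hP, h⟩ := this
    exact ⟨P.nonsingInvUnit hP.isUnit, h⟩
  induction z using Matrix.SpecialLinearGroup.fin_two_induction with | h a b c d hdet
  simp only [trace_fin_two_of]
  by_cases hb : b = 0
  · by_cases hc : c = 0
    · subst hb hc
      refine ⟨!![1, 1; a, d], fun h => hz ?_, ?_⟩
      · obtain rfl : d = a := by simpa [det_fin_two_of, sub_eq_zero] using h
        refine Matrix.SpecialLinearGroup.mem_center_iff.2 ⟨d, by
          rw [Fintype.card_fin]; linear_combination hdet, ?_⟩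
        ext i j
        fin_cases i <;> fin_cases j <;> simp
      · simpa using ⟨by linear_combination -hdet, by linear_combination -hdet⟩
    · refine ⟨!![0, 1; c, d], by simpa [det_fin_two_of] using hc, ?_⟩
      simpa using ⟨by ring1, by linear_combination -hdet⟩
  · refine ⟨!![1, 0; a, b], by simpa [det_fin_two_of] using hb, ?_⟩
    simpa using ⟨by linear_combination -hdet, by ring1⟩

lemma SL2.exists_conj_eq {y z : SL2 K} (hy : y ∉ Subgroup.center (SL2 K))
    (hz : z ∉ Subgroup.center (SL2 K)) (h : trace y.1 = trace z.1) :
    ∃ P : (Matrix (Fin 2) (Fin 2) K)ˣ, SL2.conj P y = z := by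
  obtain ⟨P, hP⟩ := SL2.exists_semiconjBy_companion hy
  obtain ⟨Q, hQ⟩ := SL2.exists_semiconjBy_companion hz
  rw [h] at hP
  exact ⟨Q⁻¹ * P, SL2.conj_eq_iff_semiconjBy.2 (hQ.units_inv_symm_left.mul_left hP)⟩

lemma ncard_wordMap_fiber_eq [Finite K] (w : FreeGroup (Fin 2)) {y z : SL2 K}
    (hy : y ∉ Subgroup.center (SL2 K)) (hz : z ∉ Subgroup.center (SL2 K))
    (h : trace y.1 = trace z.1) :
    (wordMap w K ⁻¹' {y}).ncard = (wordMap w K ⁻¹' {z}).ncard := by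
  have hle {y z : SL2 K} (hy : y ∉ Subgroup.center (SL2 K)) (hz : z ∉ Subgroup.center (SL2 K))
      (h : trace y.1 = trace z.1) :
      (wordMap w K ⁻¹' {y}).ncard ≤ (wordMap w K ⁻¹' {z}).ncard := by
    obtain ⟨P, rfl⟩ := SL2.exists_conj_eq hy hz h
    have hP := SL2.conj_injective P
    refine Set.ncard_le_ncard_of_injOn (Prod.map (SL2.conj P) (SL2.conj P)) ?_
      (hP.prodMap hP).injOn
    rintro x rfl
    exact (map_wordEval (SL2.conj P) w x.1 x.2).symm
  exact (hle hy hz h).antisymm (hle hz hy h.symm)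

end Conjugation

section Conics

variable {K : Type*} [Field K]

/-- The affine conic `A y² + B x y + C x² + D y + E x + F = 0`. -/
def affineConic (A B C D E F : K) : Set (K × K) :=
  {v | A * v.2 ^ 2 + B * v.1 * v.2 + C * v.1 ^ 2 + D * v.2 + E * v.1 + F = 0}

variable {A B C D E F : K}

lemma ncard_affineConic_le_two_mul [Finite K] (hA : A ≠ 0) :
    (affineConic A B C D E F).ncard ≤ 2 * Nat.card K := by
  rw [← Set.ncard_univ]
  refine ncard_le_mul_ncard_of_forall_section (fun _ _ => trivial) fun x _ => ?_
  set P : K[X] := Polynomial.C A * X ^ 2 + Polynomial.C (B * x + D) * X +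
    Polynomial.C (C * x ^ 2 + E * x + F)
  have hP : P.natDegree = 2 := natDegree_quadratic hA
  have hP0 : P.map (RingHom.id K) ≠ 0 := by
    rw [Polynomial.map_id]
    exact ne_zero_of_natDegree_gt (hP ▸ two_pos)
  refine (Set.ncard_le_ncard (fun y hy => ?_)).trans
    (hP ▸ ncard_eval₂_eq_zero_le (RingHom.id K) hP0)
  have hy' : A * y ^ 2 + B * x * y + C * x ^ 2 + D * y + E * x + F = 0 := hy
  simp only [P, Set.mem_ofPred_eq, eval₂_add, eval₂_mul, eval₂_C, eval₂_pow, eval₂_X,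
    RingHom.id_apply]
  linear_combination hy'

lemma eq_of_mem_affineConic_of_fst_eq (hA : A ≠ 0) {x y y₁ y₂ : K}
    (h : (x, y) ∈ affineConic A B C D E F) (h₁ : (x, y₁) ∈ affineConic A B C D E F)
    (h₂ : (x, y₂) ∈ affineConic A B C D E F) (hne₁ : y₁ ≠ y) (hne₂ : y₂ ≠ y) : y₁ = y₂ := by
  simp only [affineConic, Set.mem_ofPred_eq] at h h₁ h₂
  have hsum₁ : A * (y₁ + y) + (B * x + D) = 0 :=
    mul_left_cancel₀ (sub_ne_zero.2 hne₁) (by linear_combination h₁ - h)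
  have hsum₂ : A * (y₂ + y) + (B * x + D) = 0 :=
    mul_left_cancel₀ (sub_ne_zero.2 hne₂) (by linear_combination h₂ - h)
  exact mul_left_cancel₀ hA (by linear_combination hsum₁ - hsum₂)

/-- The three equations say that the line `y = m x + n` lies on the conic. -/
lemma eq_of_mem_affineConic_of_slope_eq
    (hline : ∀ m n, A * m ^ 2 + B * m + C = 0 → 2 * A * m * n + B * n + D * m + E = 0 →
      A * n ^ 2 + D * n + F ≠ 0) {x y x₁ x₂ m : K}
    (h : (x, y) ∈ affineConic A B C D E F)
    (h₁ : (x₁, y + m * (x₁ - x)) ∈ affineConic A B C D E F)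
    (h₂ : (x₂, y + m * (x₂ - x)) ∈ affineConic A B C D E F) (hne₁ : x₁ ≠ x) (hne₂ : x₂ ≠ x) :
    x₁ = x₂ := by
  simp only [affineConic, Set.mem_ofPred_eq] at h h₁ h₂
  set N := B * y + 2 * C * x + E + m * (2 * A * y + B * x + D) with hN
  have hlin₁ : (A * m ^ 2 + B * m + C) * (x₁ - x) + N = 0 :=
    mul_left_cancel₀ (sub_ne_zero.2 hne₁) (by rw [hN]; linear_combination h₁ - h)
  have hlin₂ : (A * m ^ 2 + B * m + C) * (x₂ - x) + N = 0 :=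
    mul_left_cancel₀ (sub_ne_zero.2 hne₂) (by rw [hN]; linear_combination h₂ - h)
  refine mul_left_cancel₀ (a := A * m ^ 2 + B * m + C) (fun hm => ?_)
    (by linear_combination hlin₁ - hlin₂)
  have hlin : 2 * A * m * (y - m * x) + B * (y - m * x) + D * m + E = 0 := by
    linear_combination hlin₁ - (x₁ + x) * hm
  exact hline m (y - m * x) hm hlin (by linear_combination h - x * hlin - x ^ 2 * hm)

/-- Projecting from a point of the conic, each slope determines at most one further point. -/
lemma ncard_affineConic_le_add_two [Finite K] (hA : A ≠ 0)
    (hline : ∀ m n, A * m ^ 2 + B * m + C = 0 → 2 * A * m * n + B * n + D * m + E = 0 →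
      A * n ^ 2 + D * n + F ≠ 0) :
    (affineConic A B C D E F).ncard ≤ Nat.card K + 2 := by
  classical
  rcases (affineConic A B C D E F).eq_empty_or_nonempty with hempty | ⟨⟨x, y⟩, h⟩
  · simp [hempty]
  rw [← Set.ncard_sdiff_singleton_add_one h]
  refine Nat.add_le_add_right (m := Nat.card K + 1) ?_ 1
  rw [← Finite.card_option, ← Set.ncard_univ]
  refine Set.ncard_le_ncard_of_injOn
    (fun v => if v.1 = x then none else some ((v.2 - y) / (v.1 - x))) (fun _ _ => trivial) ?_
  rintro ⟨x₁, y₁⟩ ⟨h₁, hne₁⟩ ⟨x₂, y₂⟩ ⟨h₂, hne₂⟩ heq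
  simp only at heq
  split_ifs at heq with hx₁ hx₂ hx₂
  · subst hx₁ hx₂
    rw [Set.mem_singleton_iff, Prod.ext_iff, not_and] at hne₁ hne₂
    rw [eq_of_mem_affineConic_of_fst_eq hA h h₁ h₂ (hne₁ rfl) (hne₂ rfl)]
  · rw [Option.some.injEq] at heq
    have hy₁ : y₁ = y + (y₁ - y) / (x₁ - x) * (x₁ - x) := by
      rw [div_mul_cancel₀ _ (sub_ne_zero.2 hx₁)]; ring
    have hy₂ : y₂ = y + (y₁ - y) / (x₁ - x) * (x₂ - x) := by
      rw [heq, div_mul_cancel₀ _ (sub_ne_zero.2 hx₂)]; ring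
    rw [hy₁] at h₁
    rw [hy₂] at h₂
    obtain rfl := eq_of_mem_affineConic_of_slope_eq hline h h₁ h₂ hx₁ hx₂
    rw [hy₁, hy₂]

end Conics

section TraceFibres

variable {K : Type} [Field K]

/-- The elements `y` with `tr y = t` and `tr (x y) = u`. -/
def SL2.traceFibre (x : SL2 K) (t u : K) : Set (SL2 K) :=
  {y | trace y.1 = t ∧ trace (x.1 * y.1) = u}

/-- An element `y` of the fibre is determined by its lower row `(γ, δ)`, in terms of which the
condition `det y = 1` is the equation of a conic. -/
lemma SL2.ncard_traceFibre_le_ncard_affineConic [Finite K] (x : SL2 K) (hx : x.1 1 0 ≠ 0)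
    (t u : K) : (SL2.traceFibre x t u).ncard ≤
      (affineConic (-x.1 1 0) (x.1 1 1 - x.1 0 0) (x.1 0 1) (x.1 1 0 * t) (x.1 0 0 * t - u)
        (-x.1 1 0)).ncard := by
  refine Set.ncard_le_ncard_of_injOn (fun y => (y.1 1 0, y.1 1 1)) ?_ ?_
  · rintro y ⟨rfl, rfl⟩
    have hdet := y.2
    rw [det_fin_two] at hdet
    simp only [affineConic, Set.mem_ofPred_eq, trace_fin_two, Matrix.mul_apply, Fin.sum_univ_two]
    linear_combination x.1 1 0 * hdet
  · rintro y ⟨hty, huy⟩ z ⟨rfl, rfl⟩ heq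
    obtain ⟨h10, h11⟩ := Prod.ext_iff.1 heq
    simp only [trace_fin_two, Matrix.mul_apply, Fin.sum_univ_two] at hty huy h10 h11
    have h00 : y.1 0 0 = z.1 0 0 := by linear_combination hty - h11
    have h01 : y.1 0 1 = z.1 0 1 := mul_left_cancel₀ hx <| by
      linear_combination huy - x.1 0 0 * h00 - x.1 0 1 * h10 - x.1 1 1 * h11
    ext i j
    fin_cases i <;> fin_cases j
    exacts [h00, h01, h10, h11]

lemma SL2.ncard_traceFibre_le_two_mul [Finite K] {x : SL2 K} (hx : x.1 1 0 ≠ 0) (t u : K) :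
    (SL2.traceFibre x t u).ncard ≤ 2 * Nat.card K :=
  (SL2.ncard_traceFibre_le_ncard_affineConic x hx t u).trans
    (ncard_affineConic_le_two_mul (neg_ne_zero.2 hx))

/-- If the conic of `SL2.ncard_traceFibre_le_ncard_affineConic` contains a line, then `x` and `y`
have a common eigenvector; the left side is `tr [x, y] - 2`. -/
lemma trace_commutator_sub_two_eq_zero {a b c d t u m n : K} (hc : c ≠ 0)
    (hdet : a * d - b * c = 1) (hm : -c * m ^ 2 + (d - a) * m + b = 0)
    (hmn : 2 * -c * m * n + (d - a) * n + c * t * m + (a * t - u) = 0)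
    (hn : -c * n ^ 2 + c * t * n + -c = 0) :
    (a + d) ^ 2 + t ^ 2 + u ^ 2 - (a + d) * t * u - 4 = 0 := by
  obtain rfl : b = c * m ^ 2 - (d - a) * m := by linear_combination hm
  obtain rfl : u = (d - c * m) * n + (a + c * m) * (t - n) := by linear_combination -hmn
  have hntn : n * (t - n) = 1 := mul_left_cancel₀ hc (by linear_combination hn)
  linear_combination (2 - (n ^ 2 + (t - n) ^ 2)) * hdet +
    (2 - ((a + c * m) ^ 2 + (d - c * m) ^ 2)) * hntn

lemma SL2.ncard_traceFibre_le_add_two [Finite K] {x : SL2 K} (hx : x.1 1 0 ≠ 0) {t u : K}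
    (h : trace x.1 ^ 2 + t ^ 2 + u ^ 2 - trace x.1 * t * u - 4 ≠ 0) :
    (SL2.traceFibre x t u).ncard ≤ Nat.card K + 2 := by
  have hdet := x.2
  rw [det_fin_two] at hdet
  rw [trace_fin_two] at h
  exact (SL2.ncard_traceFibre_le_ncard_affineConic x hx t u).trans
    (ncard_affineConic_le_add_two (neg_ne_zero.2 hx) fun m n hm hmn hn =>
      h (trace_commutator_sub_two_eq_zero hx hdet hm hmn hn))

end TraceFibres

section CountingSL2

variable {K : Type} [Field K]

lemma SL2.eq_of_lower_left_ne_zero {y z : SL2 K} (hy : y.1 1 0 ≠ 0) (h00 : y.1 0 0 = z.1 0 0)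
    (h10 : y.1 1 0 = z.1 1 0) (h11 : y.1 1 1 = z.1 1 1) : y = z := by
  have hdety := y.2
  have hdetz := z.2
  rw [det_fin_two] at hdety hdetz
  rw [← h00, ← h10, ← h11] at hdetz
  have h01 : y.1 0 1 = z.1 0 1 := mul_right_cancel₀ hy (by linear_combination hdetz - hdety)
  ext i j
  fin_cases i <;> fin_cases j
  exacts [h00, h01, h10, h11]

lemma SL2.notMem_center_of_lower_left_ne_zero {y : SL2 K} (hy : y.1 1 0 ≠ 0) :
    y ∉ Subgroup.center (SL2 K) := by
  rw [Matrix.SpecialLinearGroup.mem_center_iff]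
  rintro ⟨c, -, hc⟩
  exact hy (by simp [← hc])

lemma SL2.natCard_center_le_two : Nat.card (Subgroup.center (SL2 K)) ≤ 2 :=
  (Nat.card_congr (Matrix.SpecialLinearGroup.center_equiv_rootsOfUnity' 0).toEquiv).trans_le
    (card_rootsOfUnity K 2)

variable [Finite K]

lemma SL2.ncard_lower_left_eq_zero_le :
    {y : SL2 K | y.1 1 0 = 0}.ncard ≤ Nat.card K ^ 2 := by
  rw [sq, ← Nat.card_prod, ← Set.ncard_univ]
  refine Set.ncard_le_ncard_of_injOn (fun y => (y.1 0 0, y.1 0 1)) (fun _ _ => trivial) ?_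
  intro y (hy : y.1 1 0 = 0) z (hz : z.1 1 0 = 0) heq
  obtain ⟨h00, h01⟩ := Prod.ext_iff.1 heq
  have hdety := y.2
  have hdetz := z.2
  simp only at h00 h01
  rw [det_fin_two, hy, mul_zero, sub_zero] at hdety
  rw [det_fin_two, hz, mul_zero, sub_zero, ← h00] at hdetz
  have h11 : y.1 1 1 = z.1 1 1 :=
    mul_left_cancel₀ (left_ne_zero_of_mul_eq_one hdety) (hdety.trans hdetz.symm)
  ext i j
  fin_cases i <;> fin_cases j
  exacts [h00, h01, hy.trans hz.symm, h11]

lemma SL2.ncard_lower_left_ne_zero_le :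
    {y : SL2 K | y.1 1 0 ≠ 0}.ncard ≤ Nat.card K ^ 3 := by
  rw [pow_succ, sq, ← Nat.card_prod, ← Nat.card_prod, ← Set.ncard_univ]
  refine Set.ncard_le_ncard_of_injOn (fun y => ((y.1 0 0, y.1 1 0), y.1 1 1))
    (fun _ _ => trivial) fun y hy z _ heq => ?_
  obtain ⟨⟨h00, h10⟩, h11⟩ := by simpa only [Prod.ext_iff] using heq
  exact SL2.eq_of_lower_left_ne_zero hy h00 h10 h11

lemma SL2.ncard_lower_left_ne_zero_and_trace_eq_le (s : K) :
    {y : SL2 K | y.1 1 0 ≠ 0 ∧ trace y.1 = s}.ncard ≤ Nat.card K ^ 2 := by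
  rw [sq, ← Nat.card_prod, ← Set.ncard_univ]
  refine Set.ncard_le_ncard_of_injOn (fun y => (y.1 0 0, y.1 1 0)) (fun _ _ => trivial) ?_
  rintro y ⟨hy, hys⟩ z ⟨-, hzs⟩ heq
  obtain ⟨h00, h10⟩ := Prod.ext_iff.1 heq
  rw [trace_fin_two] at hys hzs
  simp only at h00
  exact SL2.eq_of_lower_left_ne_zero hy h00 h10 (by linear_combination hys - hzs - h00)

lemma SL2.natCard_le : Nat.card (SL2 K) ≤ 2 * Nat.card K ^ 3 := calc
  Nat.card (SL2 K) = {y : SL2 K | y.1 1 0 = 0}.ncard + {y : SL2 K | y.1 1 0 = 0}ᶜ.ncard :=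
    (Set.ncard_add_ncard_compl _).symm
  _ ≤ Nat.card K ^ 2 + Nat.card K ^ 3 :=
    add_le_add SL2.ncard_lower_left_eq_zero_le SL2.ncard_lower_left_ne_zero_le
  _ ≤ 2 * Nat.card K ^ 3 := by
    rw [two_mul]
    exact Nat.add_le_add_right (Nat.pow_le_pow_right Nat.card_pos (by norm_num)) _

lemma SL2.le_ncard_notMem_center_and_trace_eq (c : K) :
    Nat.card K * (Nat.card K - 1) ≤
      {z : SL2 K | z ∉ Subgroup.center (SL2 K) ∧ trace z.1 = c}.ncard := by
  rw [← Nat.card_units, ← Nat.card_prod, ← Set.ncard_univ]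
  refine Set.ncard_le_ncard_of_injOn (fun v : K × Kˣ =>
    (⟨!![v.1, (v.1 * (c - v.1) - 1) * (v.2 : K)⁻¹; (v.2 : K), c - v.1], by
      simp [det_fin_two]⟩ : SL2 K)) ?_ ?_
  · intro v _
    refine ⟨SL2.notMem_center_of_lower_left_ne_zero ?_, ?_⟩
    · simp
    · simp [trace_fin_two]
  · rintro ⟨x, y⟩ - ⟨x', y'⟩ - heq
    have hentry (i j : Fin 2) := congrFun₂ (congrArg Subtype.val heq) i j
    exact Prod.ext (by simpa using hentry 0 0) (Units.ext (by simpa using hentry 1 0))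

lemma SL2.le_natCard :
    Nat.card K * (Nat.card K * (Nat.card K - 1)) ≤ Nat.card (SL2 K) := by
  have := Fintype.ofFinite K
  calc
    _ = ∑ _c : K, Nat.card K * (Nat.card K - 1) := by simp
    _ ≤ ∑ c : K, (Set.univ ∩ (fun z : SL2 K => trace z.1) ⁻¹' {c}).ncard :=
      Finset.sum_le_sum fun c _ => (SL2.le_ncard_notMem_center_and_trace_eq c).trans <|
        Set.ncard_le_ncard fun z hz => ⟨trivial, hz.2⟩
    _ = Nat.card (SL2 K) := by
      rw [sum_ncard_inter_fiber_eq]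
      simp [Set.ncard_univ]

end CountingSL2

section CountingZeros

lemma ncard_eval₂_family_eq_zero_le {A K T : Type*} [CommRing A] [Field K] [Finite K] [Finite T]
    (φ : T → A →+* K) (P : A[X]) : {x : T × K | P.eval₂ (φ x.1) x.2 = 0}.ncard ≤
      {τ | φ τ P.leadingCoeff = 0}.ncard * Nat.card K + P.natDegree * Nat.card T := by
  have hsub : {x : T × K | P.eval₂ (φ x.1) x.2 = 0} ⊆
      {τ | φ τ P.leadingCoeff = 0} ×ˢ Set.univ ∪
        {x | φ x.1 P.leadingCoeff ≠ 0 ∧ P.eval₂ (φ x.1) x.2 = 0} := fun x hx => by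
    by_cases h : φ x.1 P.leadingCoeff = 0
    exacts [Or.inl ⟨h, trivial⟩, Or.inr ⟨h, hx⟩]
  refine (Set.ncard_le_ncard hsub).trans ((Set.ncard_union_le _ _).trans (add_le_add ?_ ?_))
  · rw [Set.ncard_prod, Set.ncard_univ]
  · rw [← Set.ncard_univ]
    refine ncard_le_mul_ncard_of_forall_section (fun _ _ => trivial) fun τ _ => ?_
    by_cases h : φ τ P.leadingCoeff = 0
    · simp [h]
    · have hmap : P.map (φ τ) ≠ 0 := fun h0 => h (by
        rw [leadingCoeff, ← coeff_map, h0, coeff_zero])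
      simpa [h] using ncard_eval₂_eq_zero_le (φ τ) hmap

variable {R K : Type*} [CommRing R] [Field K] [Finite K] [Algebra R K]

lemma eval₂_aeval_eq_aevalAeval {S : Type*} [CommRing S] [Algebra R S] (s t : S) (P : R[X][X]) :
    P.eval₂ ((aeval s : R[X] →ₐ[R] S) : R[X] →+* S) t = aevalAeval s t P := by
  have h : eval₂RingHom ((aeval s : R[X] →ₐ[R] S) : R[X] →+* S) t =
      (aevalAeval s t : R[X][X] →ₐ[R] S) := by
    ext <;> simp
  exact RingHom.congr_fun h P

lemma ncard_eval₃_eq_zero_le [FaithfulSMul R K] {Q : R[X][X][X]} (hQ : Q ≠ 0) :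
    {x : (K × K) × K | eval₃ x.1.1 x.1.2 x.2 Q = 0}.ncard ≤
      (Q.natDegree + Q.leadingCoeff.natDegree + Q.leadingCoeff.leadingCoeff.natDegree) *
        Nat.card K ^ 2 := by
  have hinj := FaithfulSMul.algebraMap_injective R K
  have houter := ncard_eval₂_family_eq_zero_le (K := K)
    (fun v : K × K => ((aevalAeval v.1 v.2 : R[X][X] →ₐ[R] K) : R[X][X] →+* K)) Q
  have hmiddle := ncard_eval₂_family_eq_zero_le (K := K)
    (fun s : K => ((aeval s : R[X] →ₐ[R] K) : R[X] →+* K)) Q.leadingCoeff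
  have hinner : {s : K | aeval s Q.leadingCoeff.leadingCoeff = 0}.ncard ≤
      Q.leadingCoeff.leadingCoeff.natDegree :=
    ncard_eval₂_eq_zero_le (algebraMap R K) <| by
      rw [Ne, Polynomial.map_eq_zero_iff hinj]
      simpa
  simp only [RingHom.coe_coe, eval₂_aeval_eq_aevalAeval] at hmiddle houter
  calc
    _ ≤ {v : K × K | aevalAeval v.1 v.2 Q.leadingCoeff = 0}.ncard * Nat.card K +
        Q.natDegree * Nat.card (K × K) := houter
    _ ≤ (Q.leadingCoeff.leadingCoeff.natDegree * Nat.card K +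
          Q.leadingCoeff.natDegree * Nat.card K) * Nat.card K +
        Q.natDegree * Nat.card (K × K) := by
      gcongr
      exact hmiddle.trans (by gcongr)
    _ = _ := by
      rw [Nat.card_prod]
      ring

end CountingZeros

section GenericPairs

variable {R K : Type} [CommRing R] [Field K] [Algebra R K]

/-- The conditions on a trace triple `(s, t, u)` that the count of pairs with that triple relies on:
such pairs `x`, `y` have `tr [x, y] ≠ 2`, the leading coefficient of `f` survives at `(s, t)`, and
`D` survives at `(s, f(s, t, u))`. -/
structure IsGenericTriple (f : R[X][X][X]) (D : R[X][X]) (s t u : K) : Prop where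
  commutator_ne : s ^ 2 + t ^ 2 + u ^ 2 - s * t * u - 4 ≠ 0
  leadingCoeff_ne : aevalAeval s t f.leadingCoeff ≠ 0
  level_ne : aevalAeval s (eval₃ s t u f) D ≠ 0

/-- The pairs in `SL₂(K)²` whose first entry is upper triangular or whose trace triple
`(tr x, tr y, tr xy)` is a zero of `Q`. -/
def exceptionalPairs (K : Type) [Field K] [Algebra R K] (Q : R[X][X][X]) : Set (SL2 K × SL2 K) :=
  {v | v.1.1 1 0 = 0 ∨ eval₃ (trace v.1.1) (trace v.2.1) (trace (v.1.1 * v.2.1)) Q = 0}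

lemma eval₃_map_C_comp (s t u : K) (f : R[X][X][X]) (D : R[X][X]) :
    eval₃ s t u ((D.map C).comp f) = aevalAeval s (eval₃ s t u f) D := by
  have h : ((eval₃ s t u).comp (compRingHom f)).comp (mapRingHom C) =
      (aevalAeval s (eval₃ s t u f) : R[X][X] →ₐ[R] K) := by
    ext <;> simp [eval₃]
  exact RingHom.congr_fun h D

lemma exists_forall_isGenericTriple [IsDomain R] {f : R[X][X][X]} (hf : f.natDegree ≠ 0)
    {D : R[X][X]} (hD : D ≠ 0) :
    ∃ Q : R[X][X][X], Q ≠ 0 ∧ ∀ (K : Type) [Field K] [Algebra R K] (s t u : K),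
      eval₃ s t u Q ≠ 0 → IsGenericTriple f D s t u := by
  let E : R[X][X][X] :=
    C (1 : R[X][X]) * X ^ 2 + C (-(C X * X) : R[X][X]) * X + C (C X ^ 2 + X ^ 2 - 4 : R[X][X])
  have hE0 : E ≠ 0 := ne_zero_of_natDegree_gt (n := 1) <| by
    rw [natDegree_quadratic one_ne_zero]
    exact one_lt_two
  have hL0 : C f.leadingCoeff ≠ 0 :=
    C_ne_zero.2 (leadingCoeff_ne_zero.2 (ne_zero_of_natDegree_gt (Nat.pos_of_ne_zero hf)))
  have hD0 : (D.map C).comp f ≠ 0 := by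
    rw [Ne, comp_eq_zero_iff, Polynomial.map_eq_zero_iff C_injective]
    rintro (h | ⟨-, h⟩)
    · exact hD h
    · exact hf (h ▸ natDegree_C _)
  refine ⟨E * C f.leadingCoeff * (D.map C).comp f, mul_ne_zero (mul_ne_zero hE0 hL0) hD0, ?_⟩
  intro K _ _ s t u h
  have hE : eval₃ s t u E = s ^ 2 + t ^ 2 + u ^ 2 - s * t * u - 4 := by
    simp only [E, map_add, _root_.map_mul, _root_.map_neg, _root_.map_sub, map_pow, map_one,
      map_ofNat, eval₃_X, eval₃_C_X, eval₃_C_C_X]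
    ring
  rw [_root_.map_mul, _root_.map_mul, hE, eval₃_map_C_comp, eval₃_C] at h
  exact ⟨left_ne_zero_of_mul (left_ne_zero_of_mul h), right_ne_zero_of_mul (left_ne_zero_of_mul h),
    right_ne_zero_of_mul h⟩

variable [Finite K]

lemma ncard_traces_eq_le (s t u : K) :
    {v : SL2 K × SL2 K | (v.1.1 1 0 ≠ 0 ∧ trace v.1.1 = s) ∧ v.2 ∈ SL2.traceFibre v.1 t u}.ncard ≤
      2 * Nat.card K * Nat.card K ^ 2 :=
  (ncard_le_mul_ncard_of_forall_section (T := {x : SL2 K | x.1 1 0 ≠ 0 ∧ trace x.1 = s})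
    (fun _ hv => hv.1) fun x hx => (Set.ncard_le_ncard fun _ hy => hy.2).trans
      (SL2.ncard_traceFibre_le_two_mul hx.1 t u)).trans
    (Nat.mul_le_mul_left _ (SL2.ncard_lower_left_ne_zero_and_trace_eq_le s))

lemma ncard_exceptionalPairs_le [FaithfulSMul R K] {Q : R[X][X][X]} (hQ : Q ≠ 0) :
    (exceptionalPairs K Q).ncard ≤
      (2 + 2 * (Q.natDegree + Q.leadingCoeff.natDegree + Q.leadingCoeff.leadingCoeff.natDegree)) *
        Nat.card K ^ 5 := by
  set N := Q.natDegree + Q.leadingCoeff.natDegree + Q.leadingCoeff.leadingCoeff.natDegree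
  let Z : Set (SL2 K × SL2 K) := {v | v.1.1 1 0 ≠ 0 ∧
    eval₃ (trace v.1.1) (trace v.2.1) (trace (v.1.1 * v.2.1)) Q = 0}
  have hsub : exceptionalPairs K Q ⊆ {x : SL2 K | x.1 1 0 = 0} ×ˢ Set.univ ∪ Z := fun v hv => by
    by_cases h : v.1.1 1 0 = 0
    exacts [Or.inl ⟨h, trivial⟩, Or.inr ⟨h, hv.resolve_left h⟩]
  have hZ : Z.ncard ≤ 2 * Nat.card K * Nat.card K ^ 2 * (N * Nat.card K ^ 2) :=
    (ncard_le_mul_ncard_of_mapsTo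
      (F := fun v => ((trace v.1.1, trace v.2.1), trace (v.1.1 * v.2.1))) (Set.toFinite _)
      (fun _ hv => hv.2) fun τ _ => (Set.ncard_le_ncard fun v hv => by
        obtain ⟨hv, rfl⟩ := hv
        exact ⟨⟨hv.1, rfl⟩, rfl, rfl⟩).trans (ncard_traces_eq_le τ.1.1 τ.1.2 τ.2)).trans
      (Nat.mul_le_mul_left _ (ncard_eval₃_eq_zero_le hQ))
  calc
    _ ≤ ({x : SL2 K | x.1 1 0 = 0} ×ˢ (Set.univ : Set (SL2 K))).ncard + Z.ncard :=
      (Set.ncard_le_ncard hsub).trans (Set.ncard_union_le _ _)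
    _ ≤ Nat.card K ^ 2 * (2 * Nat.card K ^ 3) +
        2 * Nat.card K * Nat.card K ^ 2 * (N * Nat.card K ^ 2) := by
      rw [Set.ncard_prod, Set.ncard_univ]
      gcongr
      exacts [SL2.ncard_lower_left_eq_zero_le, SL2.natCard_le]
    _ = _ := by ring

lemma ncard_trace_wordMap_fiber_sdiff_le {w : FreeGroup (Fin 2)} {f Q : R[X][X][X]}
    (hf : IsNestedTracePolynomial w f) {D : R[X][X]}
    (hQ : ∀ s t u : K, eval₃ s t u Q ≠ 0 → IsGenericTriple f D s t u) {N : ℕ}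
    (hN : ∀ s c : K, aevalAeval s c D ≠ 0 → (traceLevel f s c).ncard ≤ N) (c : K) :
    (wordMap w K ⁻¹' ((fun z => trace z.1) ⁻¹' {c}) \ exceptionalPairs K Q).ncard ≤
      ((Nat.card K + 2) * N) * Nat.card K ^ 3 := by
  refine (ncard_le_mul_ncard_of_forall_section (T := {x : SL2 K | x.1 1 0 ≠ 0})
    (fun v hv h => hv.2 (Or.inl h)) fun x hx => ?_).trans
    (Nat.mul_le_mul_left _ SL2.ncard_lower_left_ne_zero_le)
  set Y : Set (SL2 K) :=
    {y | (x, y) ∈ wordMap w K ⁻¹' ((fun z => trace z.1) ⁻¹' {c}) \ exceptionalPairs K Q}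
  have hY : ∀ y ∈ Y, IsGenericTriple f D (trace x.1) (trace y.1) (trace (x.1 * y.1)) ∧
      eval₃ (trace x.1) (trace y.1) (trace (x.1 * y.1)) f = c := fun y hy =>
    ⟨hQ _ _ _ fun h => hy.2 (Or.inr h), (hf K x y).symm.trans hy.1⟩
  rcases Y.eq_empty_or_nonempty with hempty | ⟨y₀, hy₀⟩
  · simp [hempty]
  have hlevel : (traceLevel f (trace x.1) c).ncard ≤ N :=
    hN _ _ ((hY y₀ hy₀).2 ▸ (hY y₀ hy₀).1.level_ne)
  let F : SL2 K → K × K := fun y => (trace y.1, trace (x.1 * y.1))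
  have himage : F '' Y ⊆ traceLevel f (trace x.1) c := by
    rintro _ ⟨y, hy, rfl⟩
    exact ⟨(hY y hy).1.leadingCoeff_ne, (hY y hy).2⟩
  refine (ncard_le_mul_ncard_of_mapsTo (Set.toFinite (F '' Y)) (Set.mapsTo_image F Y) ?_).trans
    (Nat.mul_le_mul_left _ ((Set.ncard_le_ncard himage).trans hlevel))
  rintro _ ⟨y, hy, rfl⟩
  refine le_trans (Set.ncard_le_ncard fun z hz => ?_)
    (SL2.ncard_traceFibre_le_add_two hx (hY y hy).1.commutator_ne)
  exact Prod.ext_iff.1 hz.2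

end GenericPairs

section ErrorEstimates

lemma level_bound_le_add {q e M g : ℝ} (hq : 2 ≤ q) (he : 1 ≤ e) (hM : 0 ≤ M)
    (hg : q * (q * (q - 1)) ≤ g) :
    (q + 2) * (q + M * e) * q ^ 3 ≤ q * (q - 1) * g + (4 + 3 * M) * e * q ^ 4 := by
  have he' : q ≤ e * q := le_mul_of_one_le_left (by linarith) he
  have hMe : M * e ≤ M * e * q := le_mul_of_one_le_right (by positivity) (by linarith)
  have hq1 : 0 ≤ q - 1 := by linarith
  calc (q + 2) * (q + M * e) * q ^ 3
      ≤ ((q - 1) ^ 2 + (4 + 3 * M) * e * q) * q ^ 3 := by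
        gcongr
        linarith
    _ = q * (q - 1) * (q * (q * (q - 1))) + (4 + 3 * M) * e * q ^ 4 := by ring
    _ ≤ q * (q - 1) * g + (4 + 3 * M) * e * q ^ 4 := by gcongr

lemma total_error_le {q e M N B S : ℝ} (hq : 1 ≤ q) (he : 1 ≤ e) (heq : e ≤ q) (hM : 0 ≤ M)
    (hN : 0 ≤ N) (hB : 0 ≤ B) (hBq : B ≤ (2 + 2 * N) * q ^ 5) (hS : S ≤ 2) :
    2 * (S * ((q + 2) * (q + M * e) * q ^ 3 + B) + q * ((4 + 3 * M) * e * q ^ 4) + B) ≤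
      2 * (16 + 9 * M + 6 * N) * (e * q ^ 5) := by
  have hlevel : (q + 2) * (q + M * e) * q ^ 3 ≤ 3 * (1 + M) * q ^ 5 := calc
    _ ≤ (q + 2 * q) * (q + M * q) * q ^ 3 := by gcongr; linarith
    _ = 3 * (1 + M) * q ^ 5 := by ring
  have hq5 : q ^ 5 ≤ e * q ^ 5 := le_mul_of_one_le_left (by positivity) he
  calc
    _ ≤ 2 * (2 * (3 * (1 + M) * q ^ 5 + (2 + 2 * N) * q ^ 5) + q * ((4 + 3 * M) * e * q ^ 4) +
        (2 + 2 * N) * q ^ 5) := by gcongr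
    _ = 2 * ((12 + 6 * M + 6 * N) * q ^ 5 + (4 + 3 * M) * (e * q ^ 5)) := by ring
    _ ≤ 2 * ((12 + 6 * M + 6 * N) * (e * q ^ 5) + (4 + 3 * M) * (e * q ^ 5)) := by gcongr
    _ = 2 * (16 + 9 * M + 6 * N) * (e * q ^ 5) := by ring

lemma mul_pow_five_lt {q d e g ε C : ℝ} (hq : 2 ≤ q) (he : 0 < e) (hqde : q = d * e)
    (hg : q * (q * (q - 1)) ≤ g) (hε : 8 * C < ε ^ 2 * d) :
    2 * C * (e * q ^ 5) < ε ^ 2 * g * g := by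
  have hq3 : q ^ 3 / 2 ≤ g := by
    refine le_trans ?_ hg
    nlinarith [mul_nonneg (sq_nonneg q) (sub_nonneg.2 hq)]
  have hg0 : 0 ≤ g := le_trans (by positivity) hq3
  calc 2 * C * (e * q ^ 5) = 8 * C * (e * q ^ 5 / 4) := by ring
    _ < ε ^ 2 * d * (e * q ^ 5 / 4) := by gcongr
    _ = ε ^ 2 * (d * e) * q ^ 5 / 4 := by ring
    _ = ε ^ 2 * (q ^ 3 / 2) * (q ^ 3 / 2) := by rw [← hqde]; ring
    _ ≤ ε ^ 2 * g * g := by gcongr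

end ErrorEstimates

section Equidistribution

theorem IsNestedTracePolynomial.isEquidistributed_wordMap {R K : Type} [CommRing R] [Field K]
    [Finite K] [Algebra R K] {w : FreeGroup (Fin 2)} {f Q : R[X][X][X]} {D : R[X][X]}
    (hf : IsNestedTracePolynomial w f)
    (hQ : ∀ s t u : K, eval₃ s t u Q ≠ 0 → IsGenericTriple f D s t u) {d e M N : ℕ}
    (hexc : (exceptionalPairs K Q).ncard ≤ (2 + 2 * N) * Nat.card K ^ 5)
    (hcard : Nat.card K = d * e)
    (hlevel : ∀ s c : K, aevalAeval s c D ≠ 0 → (traceLevel f s c).ncard ≤ Nat.card K + M * e)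
    {ε : ℝ} (hε : 0 < ε) (hε' : 8 * (16 + 9 * M + 6 * N) < ε ^ 2 * d) :
    IsEquidistributed (wordMap w K) ε := by
  classical
  have := Fintype.ofFinite K
  have := Fintype.ofFinite (SL2 K)
  set q := Nat.card K
  set g := Nat.card (SL2 K)
  have hq1 : 1 < q := Finite.one_lt_card
  have hde : 0 < d * e := hcard ▸ Nat.card_pos
  have he : 1 ≤ e := Nat.pos_of_mul_pos_left hde
  have heq : e ≤ q := hcard ▸ Nat.le_mul_of_pos_left e (Nat.pos_of_mul_pos_right hde)
  have hqR : (2 : ℝ) ≤ q := mod_cast hq1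
  have heR : (1 : ℝ) ≤ e := mod_cast he
  have hsub : ((q - 1 : ℕ) : ℝ) = q - 1 := by push_cast [hq1.le]; rfl
  have hgR : (q : ℝ) * (q * (q - 1)) ≤ g := by
    rw [← hsub]
    exact_mod_cast SL2.le_natCard (K := K)
  have hL1 := sum_abs_ncard_fiber_sub_le (wordMap w K) (fun z => trace z.1)
    (Subgroup.center (SL2 K) : Set (SL2 K)).toFinset (exceptionalPairs K Q) g
    ((q + 2) * (q + M * e) * q ^ 3) (q * (q - 1)) ((4 + 3 * M) * e * q ^ 4) (by positivity)
    (fun y hy z hz => ncard_wordMap_fiber_eq w (by simpa using hy) (by simpa using hz))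
    (Nat.card_prod _ _) (ncard_trace_wordMap_fiber_sdiff_le hf hQ hlevel)
    (fun c => by
      simpa only [Set.mem_toFinset, SetLike.mem_coe] using
        SL2.le_ncard_notMem_center_and_trace_eq c)
    (by push_cast [hsub]; exact level_bound_le_add hqR heR M.cast_nonneg hgR)
  refine isEquidistributed_of_sum_abs_lt (wordMap w K) Nat.card_pos (Nat.card_prod _ _) hε
    (hL1.trans_lt ?_)
  push_cast
  refine (total_error_le (N := N) (by linarith) heR (mod_cast heq) M.cast_nonneg N.cast_nonneg
    (Nat.cast_nonneg _) (mod_cast hexc) ?_).trans_lt (mul_pow_five_lt hqR (by linarith)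
      (mod_cast hcard) hgR hε')
  rw [← Set.ncard_eq_toFinset_card', ← Nat.card_coe_set_eq]
  exact_mod_cast SL2.natCard_center_le_two (K := K)

lemma isPEquidistributed_of_forall_lt {w : FreeGroup (Fin 2)} {p : ℕ} [hp : Fact p.Prime] (C : ℝ)
    (h : ∀ᶠ n in Filter.atTop, ∀ ε : ℝ, 0 < ε → C < ε ^ 2 * (p ^ (n / 3) : ℕ) →
      IsEquidistributed (wordMap w (GaloisField p n)) ε) :
    IsPEquidistributed w p hp.out := by
  have hp1 : (1 : ℝ) < p := mod_cast hp.out.one_lt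
  refine ⟨fun m => √((|C| + 1) / p ^ (Nat.log p m / 3)), ?_, ?_⟩
  · simp only [Nat.log_pow hp.out.one_lt]
    rw [← Real.sqrt_zero]
    exact (Filter.Tendsto.const_div_atTop ((tendsto_pow_atTop_atTop_of_one_lt hp1).comp
      (Nat.tendsto_div_const_atTop three_ne_zero)) _).sqrt
  · filter_upwards [h] with n hn
    rw [Nat.log_pow hp.out.one_lt]
    have hpn : (0 : ℝ) < p ^ (n / 3) := by positivity
    refine hn _ (by positivity) ?_
    rw [Real.sq_sqrt (by positivity), Nat.cast_pow, div_mul_cancel₀ _ hpn.ne']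
    linarith [le_abs_self C]

theorem isPEquidistributed_wordOf {r : ℕ} (hr : r.Prime) {a b : Fin r → ℤ} (ha : ∀ i, a i ≠ 0)
    (hb : ∀ i, b i ≠ 0) {p : ℕ} [hp : Fact p.Prime] (h : ∑ i, b i = 0 ∨ r = p) :
    IsPEquidistributed (wordOf a b) p hp.out := by
  obtain ⟨f, hf⟩ := exists_isNestedTracePolynomial (ZMod p) (wordOf a b)
  have hdeg : f.natDegree ≠ 0 := (hf.natDegree_eq hr.ne_zero ha hb).trans_ne hr.ne_zero
  obtain ⟨D, hD, M, hM⟩ := hf.exists_hasTraceLevelBound hr ha hb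
    (h.imp_right fun hrp => by rw [hrp]; infer_instance) p
  obtain ⟨Q, hQ, hgeneric⟩ := exists_forall_isGenericTriple hdeg hD
  have htop : Filter.Tendsto (fun n => p ^ (n / 3)) Filter.atTop Filter.atTop :=
    (tendsto_pow_atTop_atTop_of_one_lt hp.out.one_lt).comp
      (Nat.tendsto_div_const_atTop three_ne_zero)
  refine isPEquidistributed_of_forall_lt (8 * (16 + 9 * M + 6 * (Q.natDegree +
    Q.leadingCoeff.natDegree + Q.leadingCoeff.leadingCoeff.natDegree : ℕ))) ?_
  filter_upwards [htop.eventually_ge_atTop M, Filter.eventually_ne_atTop 0] with n hn hn0 ε hε hε'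
  have hsplit : n / 3 + (n - n / 3) = n := by lia
  have hcard : Nat.card (GaloisField p n) = p ^ (n / 3 + (n - n / 3)) := by
    rw [hsplit, GaloisField.card p n hn0]
  have hMp : M * p ^ (n / 3) ≤ p ^ (n - n / 3) := calc
    _ ≤ p ^ (n / 3) * p ^ (n / 3) := by gcongr
    _ = p ^ (n / 3 + n / 3) := (pow_add _ _ _).symm
    _ ≤ p ^ (n - n / 3) := Nat.pow_le_pow_right hp.out.pos (by lia)
  refine hf.isEquidistributed_wordMap (hgeneric _) (ncard_exceptionalPairs_le hQ)
    (hcard.trans (pow_add _ _ _)) (fun s c hs => ?_) hε hε'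
  rw [hcard]
  exact hM hn hMp _ hcard s c hs

end Equidistribution

section Symmetry

lemma wordEval_wordOf_neg_rev {G : Type*} [Group G] {r : ℕ} (a b : Fin r → ℤ) (x y : G) :
    wordEval (wordOf (fun i => -b i.rev) (fun i => -a i.rev)) x y =
      (wordEval (wordOf a b) y x)⁻¹ := by
  rw [wordEval_wordOf, wordEval_wordOf, List.prod_inv_reverse]
  congr 1
  refine List.ext_getElem (by simp) fun i hi hi' => ?_
  simp only [List.getElem_ofFn, List.getElem_reverse, List.getElem_map, List.length_map,
    List.length_ofFn, Fin.rev, _root_.mul_inv_rev, _root_.zpow_neg, Nat.sub_sub, add_comm 1]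

lemma IsEquidistributed.comp_equiv {X X' Y Y' : Type*} {F : X → Y} {ε : ℝ}
    (hF : IsEquidistributed F ε) (e : X' ≃ X) (e' : Y ≃ Y') :
    IsEquidistributed (e' ∘ F ∘ e) ε := by
  obtain ⟨T, hT, hfib⟩ := hF
  refine ⟨e' '' T, ?_, ?_⟩
  · rwa [← Nat.card_congr e', Nat.card_image_of_injective e'.injective]
  · rintro _ ⟨y, hy, rfl⟩
    have hcard : Nat.card {x // (e' ∘ F ∘ e) x = e' y} = Nat.card {x // F x = y} :=
      Nat.card_congr (e.subtypeEquiv fun x => by simp)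
    rw [hcard, Nat.card_congr e, ← Nat.card_congr e']
    exact hfib y hy

lemma IsPEquidistributed.wordOf_of_neg_rev {r p : ℕ} {a b : Fin r → ℤ} {hp : p.Prime}
    (h : IsPEquidistributed (wordOf (fun i => -b i.rev) (fun i => -a i.rev)) p hp) :
    IsPEquidistributed (wordOf a b) p hp := by
  obtain ⟨ε, hε, hev⟩ := h
  refine ⟨ε, hε, hev.mono fun n hn => ?_⟩
  convert hn.comp_equiv (Equiv.prodComm _ _) (Equiv.inv _) using 1
  ext1 v
  simp [wordMap, wordEval_wordOf_neg_rev]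

end Symmetry

theorem not_p_equidistributed_prime_complexity_general {r : ℕ} (hr : r.Prime)
    (a b : Fin r → ℤ) (hab : ∀ i, a i ≠ 0 ∧ b i ≠ 0) (p : ℕ) (hp : p.Prime)
    (hne : ¬ IsPEquidistributed (wordOf a b) p hp) :
    r ≠ p ∧ (∑ i, a i) ≠ 0 ∧ (∑ i, b i) ≠ 0 := by
  have : Fact p.Prime := ⟨hp⟩
  have ha i := (hab i).1
  have hb i := (hab i).2
  refine ⟨fun hrp => ?_, fun hA => ?_, fun hB => ?_⟩
  · exact hne (isPEquidistributed_wordOf hr ha hb (.inr hrp))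
  · refine hne (IsPEquidistributed.wordOf_of_neg_rev (isPEquidistributed_wordOf hr
      (fun i => neg_ne_zero.2 (hb _)) (fun i => neg_ne_zero.2 (ha _)) (.inl ?_)))
    rw [Finset.sum_neg_distrib, neg_eq_zero]
    exact (Equiv.sum_comp Fin.revPerm a).trans hA
  · exact hne (isPEquidistributed_wordOf hr ha hb (.inl hB))

theorem not_p_equidistributed_prime_complexity {r : ℕ} (hr : r.Prime)
    (a b : Fin r → ℤ) (hab : ∀ i, a i ≠ 0 ∧ b i ≠ 0)
    (p : ℕ) (hp : p.Prime)
    (hne : ¬ IsPEquidistributed (wordOf a b) p hp) :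
    r ≠ p ∧ ((∑ i, a i) ≠ 0 ∨ (∑ i, b i) ≠ 0) := by
  obtain ⟨hrp, hA, -⟩ := not_p_equidistributed_prime_complexity_general hr a b hab p hp hne
  exact ⟨hrp, .inl hA⟩
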